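/- arXiv:2005.01875 — 3 statements merged into one kernel-verified Lean document; each statement's English description precedes it below -/
import Mathlib

section
/- Let l ≥ 1 and let P = {P_0,…,P_{l−1}} be a partition of ω into infinite sets with min P_i < min P_j whenever i < j. Then a subset 𝓧 ⊆ 𝓔^{P'}_∞ has the property of Baire with respect to the Ellentuck topology if and only if 𝓧 is Ramsey; moreover, 𝓧 is Ellentuck-meagre if and only if 𝓧 is Ramsey null. (That is, (𝓔^{P'}_∞, ≤, r) is a topological Ramsey space.) -/
open Set

namespace DualRamsey

/-- `F` is a coarsening of `E` (written `F ≤ E` in the paper): every class of `F`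
is a union of classes of `E`. -/
def Coarsens {X : Type*} (F E : Setoid X) : Prop := ∀ a b, E.r a b → F.r a b

/-- The set of equivalence classes of a setoid. -/
def classes {X : Type*} (E : Setoid X) : Set (Set X) := {C | ∃ x, C = {y | E.r x y}}

/-- The set of minimal representatives of the classes of an equivalence relation on ℕ. -/
def minReps (E : Setoid ℕ) : Set ℕ := {n | ∀ m, E.r n m → n ≤ m}

/-- `pRep E k` is `p_k(E)`, the k-th minimal representative in increasing order. -/
noncomputable def pRep (E : Setoid ℕ) (k : ℕ) : ℕ := Nat.nth (· ∈ minReps E) k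

/-- `approx n E` is the n-th approximation `r_n(E)`: `E` restricted to `{0,…,p_n(E)-1}`,
identified with its graph. -/
noncomputable def approx (n : ℕ) (E : Setoid ℕ) : Set (ℕ × ℕ) :=
  {q | q.1 < pRep E n ∧ q.2 < pRep E n ∧ E.r q.1 q.2}

/-- Basic set `[a, E]` relative to a space `S` of equivalence relations. -/
noncomputable def basicSet (S : Set (Setoid ℕ)) (a : Set (ℕ × ℕ)) (E : ↥S) : Set ↥S :=
  {F | Coarsens F.1 E.1 ∧ ∃ n, approx n F.1 = a}

/-- The Ellentuck topology on a space `S` of equivalence relations. -/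
noncomputable def ellentuckTop (S : Set (Setoid ℕ)) : TopologicalSpace ↥S :=
  TopologicalSpace.generateFrom {U | ∃ a E, U = basicSet S a E}

def IsRamsey (S : Set (Setoid ℕ)) (X : Set ↥S) : Prop :=
  ∀ (a : Set (ℕ × ℕ)) (B : ↥S), (basicSet S a B).Nonempty →
    ∃ A ∈ basicSet S a B, basicSet S a A ⊆ X ∨ basicSet S a A ∩ X = ∅

def IsRamseyNull (S : Set (Setoid ℕ)) (X : Set ↥S) : Prop :=
  ∀ (a : Set (ℕ × ℕ)) (B : ↥S), (basicSet S a B).Nonempty →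
    ∃ A ∈ basicSet S a B, basicSet S a A ∩ X = ∅

/-- The property of Baire with respect to the Ellentuck topology. -/
noncomputable def HasBP (S : Set (Setoid ℕ)) (X : Set ↥S) : Prop :=
  ∃ O M : Set ↥S, (ellentuckTop S).IsOpen O ∧ @IsMeagre _ (ellentuckTop S) M ∧
    X = (O \ M) ∪ (M \ O)

/-- The Souslin operation applied to a scheme indexed by finite sequences of naturals. -/
def souslinOp {X : Type*} (A : List ℕ → Set X) : Set X :=
  ⋃ x : ℕ → ℕ, ⋂ n : ℕ, A ((List.range n).map x)

/-- `Y` belongs to the smallest field of sets containing all `t`-open sets and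
closed under the Souslin operation. -/
def SouslinMeasurable {X : Type*} (t : TopologicalSpace X) (Y : Set X) : Prop :=
  ∀ 𝒜 : Set (Set X),
    (∀ U, t.IsOpen U → U ∈ 𝒜) →
    (∀ A ∈ 𝒜, Aᶜ ∈ 𝒜) →
    (∀ A ∈ 𝒜, ∀ B ∈ 𝒜, A ∪ B ∈ 𝒜) →
    (∀ f : List ℕ → Set X, (∀ s, f s ∈ 𝒜) → souslinOp f ∈ 𝒜) →
    Y ∈ 𝒜

/-- The graph of an equivalence relation as a boolean-valued function. -/
noncomputable def graphMap {X : Type*} (E : Setoid X) : X × X → Bool :=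
  fun q => @decide (E.r q.1 q.2) (Classical.dec _)

/-- The metrizable topology on a space of equivalence relations, as a subspace of
`2^(X × X)` via graphs. -/
noncomputable def graphTop {X : Type*} (S : Set (Setoid X)) : TopologicalSpace ↥S :=
  TopologicalSpace.induced (fun E => graphMap E.1) inferInstance



/-- `𝓔^P_∞` for a partition `P` of ℕ into `l` infinite pieces: the `P`-alternating
equivalence relations, i.e. those with infinitely many classes whose k-th minimal
representative lies in `P (k mod l)`. -/
noncomputable def EPalt (l : ℕ) (hl : 0 < l) (P : Fin l → Set ℕ) : Set (Setoid ℕ) :=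
  {E | (classes E).Infinite ∧ ∀ k : ℕ, pRep E k ∈ P ⟨k % l, Nat.mod_lt k hl⟩}

/-- `𝓔^{P'}_∞`: the `P`-alternating equivalence relations such that moreover every
class whose minimum lies in `P i` is contained in `⋃_{j ≥ i} P j`. -/
noncomputable def EPalt' (l : ℕ) (hl : 0 < l) (P : Fin l → Set ℕ) : Set (Setoid ℕ) :=
  {E | E ∈ EPalt l hl P ∧
    ∀ x ∈ minReps E, ∀ i : Fin l, x ∈ P i → ∀ y, E.r x y → ∃ j : Fin l, i ≤ j ∧ y ∈ P j}


/-- Abstract axioms of a topological Ramsey space. -/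
structure RS (R AR : Type) where
  le : R → R → Prop
  r : ℕ → R → AR
  T : R → ℕ → Set AR
  le_refl : ∀ A, le A A
  le_trans : ∀ A B C, le A B → le B C → le A C
  r_inj : ∀ n m F G, r n F = r m G → n = m
  r_mono : ∀ n k F G, r n F = r n G → k ≤ n → r k F = r k G
  T_fin : ∀ B d, (T B d).Finite
  T_ex0 : ∀ F B n, le F B → ∃ d, r n F ∈ T B d
  T_ex : ∀ F B n d k, le F B → r n F ∈ T B d → n ≤ k → ∃ e, d ≤ e ∧ r k F ∈ T B e
  T_congr : ∀ A B d, r d A = r d B → T A d ⊆ T B d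
  T_ne : ∀ B d b, b ∈ T B d → ∃ F, le F B ∧ ∃ n, r n F = b
  A3 : ∀ B d b A n, b ∈ T B d → le A B → r n A = b →
    ∃ A', le A' B ∧ r d A' = r d B ∧ ∀ F, le F A' → (∃ k, r k F = b) → le F A
  fusion : ∀ (A : ℕ → R) (d : ℕ), (∀ i, le (A (i+1)) (A i) ∧ r (d+i) (A (i+1)) = r (d+i) (A i)) →
    ∃ C, ∀ i, le C (A i) ∧ r (d+i) C = r (d+i) (A i)
  A4 : ∀ B n G (O : Set AR), le G B → ∃ A, le A B ∧ r n A = r n G ∧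
    ((∀ F, le F A → r n F = r n G → r (n+1) F ∈ O) ∨
     (∀ F, le F A → r n F = r n G → r (n+1) F ∉ O))

namespace RS
variable {R AR : Type} (S : RS R AR)

def bs (a : AR) (E : R) : Set R := {F | S.le F E ∧ ∃ n, S.r n F = a}

lemma bs_mono {a : AR} {A B : R} (h : S.le A B) : S.bs a A ⊆ S.bs a B :=
  fun _ hF => ⟨S.le_trans _ _ _ hF.1 h, hF.2⟩

lemma finite_step (Φ : AR → Set R → Prop) (anti : ∀ b U V, U ⊆ V → Φ b V → Φ b U)
    (dense : ∀ b A, (S.bs b A).Nonempty → ∃ A' ∈ S.bs b A, Φ b (S.bs b A'))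
    (B : R) (d : ℕ) : ∃ A, S.le A B ∧ S.r d A = S.r d B ∧ ∀ b ∈ S.T B d, Φ b (S.bs b A) := by
  have key : ∀ s : Set AR, s.Finite → s ⊆ S.T B d →
      ∃ A, S.le A B ∧ S.r d A = S.r d B ∧ ∀ b ∈ s, Φ b (S.bs b A) := by
    intro s hs
    induction s, hs using Set.Finite.induction_on with
    | empty => exact fun _ => ⟨B, S.le_refl B, rfl, fun b hb => absurd hb (Set.notMem_empty b)⟩
    | @insert b s _ _ ih =>
      intro hsub
      obtain ⟨A, hAB, hr, hA⟩ := ih (fun x hx => hsub (mem_insert_of_mem _ hx))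
      have hbB : b ∈ S.T B d := hsub (mem_insert _ _)
      have hbA : b ∈ S.T A d := S.T_congr B A d hr.symm hbB
      have hne : (S.bs b A).Nonempty := S.T_ne _ _ _ hbA
      obtain ⟨A1, ⟨h1, n, hn⟩, hΦ⟩ := dense b A hne
      obtain ⟨A2, h2, hr2, h3⟩ := S.A3 A d b A1 n hbA h1 hn
      refine ⟨A2, S.le_trans _ _ _ h2 hAB, hr2.trans hr, ?_⟩
      intro c hc
      rcases hc with rfl | hc
      · exact anti _ _ _ (show S.bs c A2 ⊆ S.bs c A1 from fun F hF => ⟨h3 F hF.1 hF.2, hF.2⟩) hΦ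
      · exact anti _ _ _ (S.bs_mono h2) (hA c hc)
  exact key _ (S.T_fin B d) (subset_refl _)

lemma diag (Φ : AR → Set R → Prop) (anti : ∀ b U V, U ⊆ V → Φ b V → Φ b U)
    (dense : ∀ b A, (S.bs b A).Nonempty → ∃ A' ∈ S.bs b A, Φ b (S.bs b A'))
    (B : R) (d : ℕ) : ∃ A, S.le A B ∧ S.r d A = S.r d B ∧
      ∀ e, d ≤ e → ∀ b ∈ S.T A e, Φ b (S.bs b A) := by
  choose g hg1 hg2 hg3 using S.finite_step Φ anti dense
  let A : ℕ → R := fun i => Nat.rec B (fun i C => g C (d+i)) i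
  have hA : ∀ i, A (i+1) = g (A i) (d+i) := fun i => rfl
  obtain ⟨C, hC⟩ := S.fusion A d (fun i => by rw [hA]; exact ⟨hg1 _ _, hg2 _ _⟩)
  refine ⟨C, (hC 0).1, (hC 0).2, ?_⟩
  intro e he b hb
  obtain ⟨i, rfl⟩ := Nat.exists_eq_add_of_le he
  have := hg3 (A i) (d+i) b (S.T_congr _ _ _ (hC i).2 hb)
  rw [← hA] at this
  exact anti _ _ _ (S.bs_mono (hC (i+1)).1) this

def Ramsey (X : Set R) : Prop := ∀ a B, (S.bs a B).Nonempty →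
  ∃ A ∈ S.bs a B, S.bs a A ⊆ X ∨ S.bs a A ∩ X = ∅
def Null (X : Set R) : Prop := ∀ a B, (S.bs a B).Nonempty →
  ∃ A ∈ S.bs a B, S.bs a A ∩ X = ∅

lemma open_ramsey (O : Set R) (hO : ∀ F ∈ O, ∃ k, ∀ j, k ≤ j → S.bs (S.r j F) F ⊆ O) :
    S.Ramsey O := by
  rintro a B ⟨F0, hF0, n, rfl⟩
  obtain ⟨d, hd⟩ := S.T_ex0 F0 B n hF0
  obtain ⟨A1, hA1B, hA1r, hA1⟩ := S.diag
    (fun b U => U ⊆ O ∨ ∀ A' ∈ U, ¬ S.bs b A' ⊆ O)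
    (by
      rintro b U V hUV (h | h)
      · exact Or.inl (hUV.trans h)
      · exact Or.inr fun A' hA' => h A' (hUV hA'))
    (by
      rintro b A ⟨F, hF⟩
      by_cases h : ∃ A' ∈ S.bs b A, S.bs b A' ⊆ O
      · obtain ⟨A', h1, h2⟩ := h
        exact ⟨A', h1, Or.inl h2⟩
      · push Not at h
        exact ⟨F, hF, Or.inr fun A' hA' => h A' (S.bs_mono hF.1 hA')⟩) B d
  have haA1 : S.r n F0 ∈ S.T A1 d := S.T_congr _ _ _ hA1r.symm hd
  by_cases hacc : S.bs (S.r n F0) A1 ⊆ O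
  · obtain ⟨C, hC, hC'⟩ := S.T_ne _ _ _ haA1
    exact ⟨C, ⟨S.le_trans _ _ _ hC hA1B, hC'⟩, Or.inl ((S.bs_mono hC).trans hacc)⟩
  obtain ⟨A2, hA21, hA2r, hA2⟩ := S.diag
    (fun b U => ∀ n, (∃ G, S.r n G = b) → (∀ F ∈ U, S.bs (S.r (n+1) F) A1 ⊆ O) ∨
      (∀ F ∈ U, ¬ S.bs (S.r (n+1) F) A1 ⊆ O))
    (by
      intro b U V hUV h n hn
      rcases h n hn with h | h
      · exact Or.inl fun F hF => h F (hUV hF)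
      · exact Or.inr fun F hF => h F (hUV hF))
    (by
      rintro b A ⟨G, hG, m, rfl⟩
      obtain ⟨A', h1, h2, h3⟩ := S.A4 A m G {c | S.bs c A1 ⊆ O} hG
      refine ⟨A', ⟨h1, m, h2⟩, ?_⟩
      rintro k ⟨G', hG'⟩
      obtain rfl := S.r_inj _ _ _ _ hG'
      have aux : ∀ F ∈ S.bs (S.r k G) A', S.r k F = S.r k G := by
        rintro F ⟨_, j, hj⟩
        obtain rfl := S.r_inj _ _ _ _ hj
        exact hj
      rcases h3 with h3 | h3
      · exact Or.inl fun F hF => h3 F hF.1 (aux F hF)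
      · exact Or.inr fun F hF => h3 F hF.1 (aux F hF)) A1 d
  have haA2 : S.r n F0 ∈ S.T A2 d := S.T_congr _ _ _ hA2r.symm haA1
  have rej : ∀ F, S.le F A2 → S.r n F = S.r n F0 → ∀ k, n ≤ k → ¬ S.bs (S.r k F) A1 ⊆ O := by
    intro F hF hFn k hk
    induction k, hk using Nat.le_induction with
    | base => rw [hFn]; exact hacc
    | succ k hk ih =>
      obtain ⟨e, he, hbe⟩ := S.T_ex F A2 n d k hF (hFn ▸ haA2) hk
      have hFA1 := S.le_trans _ _ _ hF hA21
      obtain ⟨e1, he1, hbe1⟩ := S.T_ex F A1 n d k hFA1 (hFn ▸ haA1) hk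
      rcases hA2 e he _ hbe k ⟨F, rfl⟩ with h | h
      · exfalso
        rcases hA1 e1 he1 _ hbe1 with h' | h'
        · exact ih h'
        · refine h' F ⟨hFA1, k, rfl⟩ ?_
          intro F' hF'
          exact h F' (S.bs_mono hF hF') ⟨S.le_trans _ _ _ hF'.1 hFA1, k+1, rfl⟩
      · exact h F ⟨hF, k, rfl⟩
  obtain ⟨C, hC, j, hj⟩ := S.T_ne _ _ _ haA2
  refine ⟨C, ⟨S.le_trans _ _ _ hC (S.le_trans _ _ _ hA21 hA1B), j, hj⟩, Or.inr ?_⟩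
  rw [Set.eq_empty_iff_forall_notMem]
  rintro F ⟨⟨hFC, i, hi⟩, hFO⟩
  obtain rfl := S.r_inj _ _ _ _ hi
  obtain ⟨k, hk⟩ := hO F hFO
  have hF2 := S.le_trans _ _ _ hFC hC
  have hFA1 := S.le_trans _ _ _ hF2 hA21
  obtain ⟨e1, he1, hbe1⟩ := S.T_ex F A1 i d (max i k) hFA1 (hi ▸ haA1) (le_max_left _ _)
  rcases hA1 e1 he1 _ hbe1 with h' | h'
  · exact rej F hF2 hi _ (le_max_left _ _) h'
  · exact h' F ⟨hFA1, _, rfl⟩ (hk _ (le_max_right _ _))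

lemma null_union {X Y : Set R} (hX : S.Null X) (hY : S.Null Y) : S.Null (X ∪ Y) := by
  intro a B h
  obtain ⟨A, hA, h1⟩ := hX a B h
  obtain ⟨C, hC, h2⟩ := hY a A ⟨A, S.le_refl _, hA.2⟩
  refine ⟨C, S.bs_mono hA.1 hC, ?_⟩
  rw [inter_union_distrib_left, h2, union_empty]
  exact subset_eq_empty (inter_subset_inter_left _ (S.bs_mono hC.1)) h1

lemma null_iUnion (X : ℕ → Set R) (hX : ∀ i, S.Null (X i)) : S.Null (⋃ i, X i) := by
  have hY : ∀ k, S.Null (⋃ i ≤ k, X i) := by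
    intro k
    induction k with
    | zero => simpa using hX 0
    | succ k ih =>
      have : (⋃ i ≤ k+1, X i) = (⋃ i ≤ k, X i) ∪ X (k+1) := by
        rw [biUnion_le_succ]
      rw [this]; exact S.null_union ih (hX _)
  rintro a B ⟨F0, hF0, n, rfl⟩
  obtain ⟨d, hd⟩ := S.T_ex0 F0 B n hF0
  obtain ⟨A, hAB, hAr, hA⟩ := S.diag
    (fun b U => ∀ n, (∃ G, S.r n G = b) → U ∩ (⋃ i ≤ n, X i) = ∅)
    (by
      intro b U V hUV h n hn
      exact subset_eq_empty (inter_subset_inter_left _ hUV) (h n hn))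
    (by
      rintro b A ⟨G, hG, m, rfl⟩
      obtain ⟨A', h1, h2⟩ := hY m (S.r m G) A ⟨G, hG, m, rfl⟩
      refine ⟨A', h1, ?_⟩
      rintro k ⟨G', hG'⟩
      obtain rfl := S.r_inj _ _ _ _ hG'
      exact h2) B d
  have ha : S.r n F0 ∈ S.T A d := S.T_congr _ _ _ hAr.symm hd
  obtain ⟨C, hC, j, hj⟩ := S.T_ne _ _ _ ha
  refine ⟨C, ⟨S.le_trans _ _ _ hC hAB, j, hj⟩, ?_⟩
  rw [Set.eq_empty_iff_forall_notMem]
  rintro F ⟨⟨hFC, i, hi⟩, hFX⟩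
  obtain ⟨m, hm⟩ := mem_iUnion.1 hFX
  obtain rfl := S.r_inj _ _ _ _ hi
  have hFA := S.le_trans _ _ _ hFC hC
  obtain ⟨e, he, hbe⟩ := S.T_ex F A i d (max i m) hFA (hi ▸ ha) (le_max_left _ _)
  have := hA e he _ hbe _ ⟨F, rfl⟩
  rw [Set.eq_empty_iff_forall_notMem] at this
  exact this F ⟨⟨hFA, _, rfl⟩, mem_biUnion (le_max_right i m) hm⟩

@[reducible] def top : TopologicalSpace R := TopologicalSpace.generateFrom {U | ∃ a E, U = S.bs a E}

lemma bs_nhd {a : AR} {E F : R} (h : F ∈ S.bs a E) :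
    ∃ k, ∀ j, k ≤ j → S.bs (S.r j F) F ⊆ S.bs a E := by
  obtain ⟨hFE, n, rfl⟩ := h
  refine ⟨n, fun j hj G hG => ⟨S.le_trans _ _ _ hG.1 hFE, n, ?_⟩⟩
  obtain ⟨_, i, hi⟩ := hG
  obtain rfl := S.r_inj _ _ _ _ hi
  exact S.r_mono _ _ _ _ hi hj

lemma open_iff (U : Set R) :
    S.top.IsOpen U ↔ ∀ F ∈ U, ∃ k, ∀ j, k ≤ j → S.bs (S.r j F) F ⊆ U := by
  constructor
  · intro h
    change TopologicalSpace.GenerateOpen _ U at h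
    induction h with
    | basic s hs =>
      obtain ⟨a, E, rfl⟩ := hs
      exact fun F hF => S.bs_nhd hF
    | univ => exact fun F _ => ⟨0, fun _ _ => subset_univ _⟩
    | inter s t _ _ h1 h2 =>
      rintro F ⟨hs, ht⟩
      obtain ⟨k1, hk1⟩ := h1 F hs
      obtain ⟨k2, hk2⟩ := h2 F ht
      exact ⟨max k1 k2, fun j hj => subset_inter (hk1 j ((le_max_left _ _).trans hj))
        (hk2 j ((le_max_right _ _).trans hj))⟩
    | sUnion C _ ih =>
      rintro F ⟨s, hs, hF⟩
      obtain ⟨k, hk⟩ := ih s hs F hF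
      exact ⟨k, fun j hj => (hk j hj).trans (subset_sUnion_of_mem hs)⟩
  · intro h
    let _ := S.top
    change IsOpen U
    rw [isOpen_iff_forall_mem_open]
    intro F hF
    obtain ⟨k, hk⟩ := h F hF
    exact ⟨_, hk k le_rfl, TopologicalSpace.GenerateOpen.basic _ ⟨_, _, rfl⟩,
      ⟨S.le_refl _, k, rfl⟩⟩

lemma bs_open (a : AR) (E : R) : S.top.IsOpen (S.bs a E) :=
  TopologicalSpace.GenerateOpen.basic _ ⟨_, _, rfl⟩

lemma null_nwd {X : Set R} (hX : S.Null X) : @IsNowhereDense _ S.top X := by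
  let _ := S.top
  change interior (closure X) = ∅
  rw [Set.eq_empty_iff_forall_notMem]
  intro F hF
  obtain ⟨k, hk⟩ := (S.open_iff _).1 isOpen_interior F hF
  obtain ⟨A, hA, hAX⟩ := hX (S.r k F) F ⟨F, S.le_refl _, k, rfl⟩
  have : A ∈ closure X := interior_subset (hk k le_rfl hA)
  obtain ⟨y, hy⟩ := mem_closure_iff.1 this _ (S.bs_open (S.r k F) A) ⟨S.le_refl _, hA.2⟩
  rw [hAX] at hy; exact hy

lemma nwd_null {X : Set R} (hX : @IsNowhereDense _ S.top X) : S.Null X := by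
  let _ := S.top
  intro a B h
  have h1 : S.Ramsey (closure X)ᶜ :=
    S.open_ramsey _ ((S.open_iff _).1 isClosed_closure.isOpen_compl)
  obtain ⟨A, hA, h2 | h2⟩ := h1 a B h
  · refine ⟨A, hA, ?_⟩
    rw [Set.eq_empty_iff_forall_notMem]
    rintro F ⟨hF, hFX⟩
    exact h2 hF (subset_closure hFX)
  · exfalso
    have : S.bs a A ⊆ interior (closure X) := by
      refine interior_maximal ?_ (S.bs_open a A)
      intro F hF
      by_contra hc
      rw [Set.eq_empty_iff_forall_notMem] at h2
      exact h2 F ⟨hF, hc⟩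
    have hh : interior (closure X) = ∅ := hX
    rw [hh] at this
    exact this (⟨S.le_refl _, hA.2⟩ : A ∈ S.bs a A)

lemma null_of_subset {X Y : Set R} (h : X ⊆ Y) (hY : S.Null Y) : S.Null X := by
  intro a B hn
  obtain ⟨A, hA, h1⟩ := hY a B hn
  exact ⟨A, hA, subset_eq_empty (inter_subset_inter_right _ h) h1⟩

lemma meagre_iff (X : Set R) : @IsMeagre _ S.top X ↔ S.Null X := by
  let _ := S.top
  constructor
  · intro h
    obtain ⟨C, hC, hcount, hsub⟩ := isMeagre_iff_countable_union_isNowhereDense.1 h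
    rcases C.eq_empty_or_nonempty with rfl | hne
    · refine S.null_of_subset hsub ?_
      intro a B ⟨F, hF⟩
      exact ⟨F, hF, by simp⟩
    · obtain ⟨f, rfl⟩ := hcount.exists_eq_range hne
      refine S.null_of_subset hsub ?_
      rw [sUnion_range]
      exact S.null_iUnion f fun i => S.nwd_null (hC _ ⟨i, rfl⟩)
  · intro h
    exact (S.null_nwd h).isMeagre

theorem main (X : Set R) :
    ((∃ O M : Set R, S.top.IsOpen O ∧ @IsMeagre _ S.top M ∧ X = (O \ M) ∪ (M \ O)) ↔ S.Ramsey X) ∧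
    (@IsMeagre _ S.top X ↔ S.Null X) := by
  refine ⟨⟨?_, ?_⟩, S.meagre_iff X⟩
  · rintro ⟨O, M, hO, hM, rfl⟩ a B h
    obtain ⟨A, hA, h1⟩ := (S.meagre_iff M).1 hM a B h
    obtain ⟨C, hC, h2⟩ := S.open_ramsey O ((S.open_iff O).1 hO) a A ⟨A, S.le_refl _, hA.2⟩
    have h3 : ∀ F ∈ S.bs a C, F ∉ M := by
      intro F hF hFM
      rw [Set.eq_empty_iff_forall_notMem] at h1
      exact h1 F ⟨S.bs_mono hC.1 hF, hFM⟩
    refine ⟨C, S.bs_mono hA.1 hC, ?_⟩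
    rcases h2 with h2 | h2
    · exact Or.inl fun F hF => Or.inl ⟨h2 hF, h3 F hF⟩
    · right
      rw [Set.eq_empty_iff_forall_notMem] at h2 ⊢
      rintro F ⟨hF, ⟨hF1, _⟩ | ⟨hF1, _⟩⟩
      · exact h2 F ⟨hF, hF1⟩
      · exact h3 F hF hF1
  · intro h
    let _ := S.top
    refine ⟨interior X, X \ interior X, isOpen_interior, ?_, ?_⟩
    · rw [S.meagre_iff]
      intro a B hn
      obtain ⟨A, hA, h1 | h1⟩ := h a B hn
      · refine ⟨A, hA, ?_⟩
        have := interior_maximal h1 (S.bs_open a A)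
        rw [Set.eq_empty_iff_forall_notMem]
        rintro F ⟨hF, hF'⟩
        exact hF'.2 (this hF)
      · exact ⟨A, hA, subset_eq_empty (inter_subset_inter_right _ sdiff_subset) h1⟩
    · ext F
      have := fun h : F ∈ interior X => interior_subset h
      simp only [mem_union, mem_sdiff]
      tauto

end RS

section CS
open Filter
attribute [local instance] Ultrafilter.semigroup

lemma exists_min_left (M : Type) [Semigroup M] [Nonempty M] : ∃ L : Set (Ultrafilter M),
    IsClosed L ∧ L.Nonempty ∧ (∀ p, ∀ q ∈ L, p * q ∈ L) ∧
    ∀ p ∈ L, ∀ q ∈ L, ∃ s, s * p = q := by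
  let C : Set (Set (Ultrafilter M)) :=
    {N | IsClosed N ∧ N.Nonempty ∧ ∀ p, ∀ q ∈ N, p * q ∈ N}
  obtain ⟨L, hL⟩ : ∃ L, Minimal (· ∈ C) L := by
    refine zorn_superset _ fun c hcs hc => ?_
    refine ⟨⋂₀ c, ⟨isClosed_sInter fun t ht => (hcs ht).1, ?_, fun m m' hm' => ?_⟩, fun s hs =>
      Set.sInter_subset_of_mem hs⟩
    · obtain rfl | hcnemp := c.eq_empty_or_nonempty
      · rw [Set.sInter_empty]
        apply Set.univ_nonempty
      rw [Set.sInter_eq_iInter]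
      refine @IsCompact.nonempty_iInter_of_directed_nonempty_isCompact_isClosed _ _ _
          hcnemp.coe_sort ((↑) : c → Set (Ultrafilter M)) ?_ ?_ ?_ ?_
      · exact DirectedOn.directed_val (IsChain.directedOn hc.symm)
      exacts [fun i => (hcs i.prop).2.1, fun i => (hcs i.prop).1.isCompact, fun i => (hcs i.prop).1]
    · rw [Set.mem_sInter]
      exact fun t ht => (hcs ht).2.2 m m' (Set.mem_sInter.mp hm' t ht)
  obtain ⟨h1, h2, h3⟩ := hL.prop
  refine ⟨L, h1, h2, h3, ?_⟩
  intro p hp q hq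
  have : range (· * p) = L := by
    apply hL.eq_of_subset
    · refine ⟨(isCompact_range (Ultrafilter.continuous_mul_left p)).isClosed,
        range_nonempty _, ?_⟩
      rintro s _ ⟨t, rfl⟩
      exact ⟨s * t, mul_assoc _ _ _⟩
    · rintro _ ⟨t, rfl⟩
      exact h3 _ _ hp
  rw [← this] at hq
  exact hq

lemma map_mul' {M N : Type} [Semigroup M] [Semigroup N] (f : M → N)
    (hf : ∀ a b, f (a * b) = f a * f b) (p q : Ultrafilter M) :
    (p * q).map f = p.map f * q.map f := by
  refine Ultrafilter.coe_inj.mp <| Filter.ext' fun P => ?_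
  simp only [Ultrafilter.coe_map, Filter.eventually_map, Ultrafilter.eventually_mul, hf]

/-- substitution of a letter for the variable -/
def sb {α : Type} (σ : α) (x : FreeMonoid (Option α)) : FreeMonoid α :=
  FreeMonoid.map (fun o => o.getD σ) x

/-- left variable words -/
def LV (α : Type) : Set (FreeMonoid (Option α)) :=
  range fun y => FreeMonoid.of none * y

lemma exists_ultra (α : Type) [Nonempty α] : ∃ (e : Ultrafilter (FreeMonoid α))
    (z : Ultrafilter (FreeMonoid (Option α))), (∀ᶠ x in z, x ∈ LV α) ∧
    (∀ σ, e * z.map (sb σ) = e) ∧ ∀ σ τ, z.map (sb σ) * z.map (sb τ) = z.map (sb σ) := by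
  obtain ⟨L, hLc, hLn, hLi, hLm⟩ := exists_min_left (FreeMonoid α)
  obtain ⟨e, heL, hee⟩ := exists_idempotent_in_compact_subsemigroup
    Ultrafilter.continuous_mul_left L hLn hLc.isCompact (fun x _ y hy => hLi x y hy)
  have hL : ∀ p ∈ L, ∀ q ∈ L, q * q = q → p * q = p := by
    intro p hp q hq hqq
    obtain ⟨s, rfl⟩ := hLm q hq p hp
    rw [mul_assoc, hqq]
  let ι : FreeMonoid α → FreeMonoid (Option α) := FreeMonoid.map some
  let e' := e.map ι
  let K : Set (Ultrafilter (FreeMonoid (Option α))) := {z | LV α ∈ z}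
  have hKc : IsClosed K := ultrafilter_isClosed_basic _
  have hKi : ∀ p ∈ K, ∀ q, p * q ∈ K := by
    intro p hp q
    change ∀ᶠ x in ↑(p * q), x ∈ LV α
    rw [Ultrafilter.eventually_mul]
    have : ∀ᶠ x in p, x ∈ LV α := hp
    filter_upwards [this] with x hx
    obtain ⟨y, rfl⟩ := hx
    exact Eventually.of_forall fun w => ⟨y * w, by simp [mul_assoc]⟩
  obtain ⟨z, ⟨z0, hz0, hz0z⟩, hzz⟩ := exists_idempotent_in_compact_subsemigroup
    (M := Ultrafilter (FreeMonoid (Option α)))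
    Ultrafilter.continuous_mul_left ((· * e') '' K)
    ⟨_, ⟨pure (FreeMonoid.of none), by
      change LV α ∈ (pure _ : Ultrafilter _)
      rw [Ultrafilter.mem_pure]; exact ⟨1, by simp⟩, rfl⟩⟩
    (hKc.isCompact.image (Ultrafilter.continuous_mul_left e'))
    (by
      rintro _ ⟨x, hx, rfl⟩ _ ⟨y, hy, rfl⟩
      exact ⟨x * e' * y, hKi _ (hKi _ hx _) _, by simp only [mul_assoc]⟩)
  have hsbm : ∀ (σ : α) a b, sb σ (a * b) = sb σ a * sb σ b := fun σ a b => by simp [sb]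
  have hsι : ∀ σ : α, e'.map (sb σ) = e := by
    intro σ
    have : sb σ ∘ ι = id := by
      funext w
      simp only [sb, ι, Function.comp, FreeMonoid.map_map, id]
      exact List.map_id w
    rw [Ultrafilter.map_map, this, Ultrafilter.map_id]
  have hz1 : ∀ σ, z.map (sb σ) ∈ L := by
    intro σ
    rw [← hz0z, map_mul' _ (hsbm σ), hsι]
    exact hLi _ _ heL
  have hz2 : ∀ σ, z.map (sb σ) * z.map (sb σ) = z.map (sb σ) := by
    intro σ
    rw [← map_mul' _ (hsbm σ), hzz]
  refine ⟨e, z, ?_, fun σ => hL _ heL _ (hz1 σ) (hz2 σ), fun σ τ => hL _ (hz1 σ) _ (hz1 τ) (hz2 τ)⟩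
  rw [← hz0z]
  exact hKi _ hz0 _


def sl {α : Type} (σ : α) (x : FreeMonoid (Option α)) : List α := FreeMonoid.toList (sb σ x)

lemma cs_step {α : Type} [Finite α] (A : Set (List α))
    (z : Ultrafilter (FreeMonoid (Option α))) (hzL : ∀ᶠ x in z, x ∈ LV α)
    (hz : ∀ σ τ, z.map (sb σ) * z.map (sb τ) = z.map (sb σ))
    (good : List α → Prop)
    (hgood : ∀ w, good w ↔ (w ∈ A ∧ ∀ σ, ∀ᶠ x in z, w ++ sl σ x ∈ A))
    (cur : List (α ⊕ ℕ)) (hc : ∀ ρ : ℕ → α, good (cur.map (Sum.elim id ρ))) :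
    ∃ y : List (α ⊕ ℕ), (∀ v, Sum.inr v ∈ y → v = cur.length) ∧
      ∀ ρ : ℕ → α, good ((cur ++ Sum.inr cur.length :: y).map (Sum.elim id ρ)) := by
  have h1 : ∀ w, good w → ∀ σ, ∀ᶠ x in z, good (w ++ sl σ x) := by
    intro w hw σ
    have hw' := (hgood w).1 hw
    have h2 : ∀ τ, ∀ᶠ x in z, ∀ᶠ y in z, (w ++ sl σ x) ++ sl τ y ∈ A := by
      intro τ
      have h3 : ∀ᶠ m in (z.map (sb σ) : Ultrafilter _), w ++ FreeMonoid.toList m ∈ A := hw'.2 σ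
      rw [← hz σ τ, Ultrafilter.eventually_mul] at h3
      have h4 : ∀ᶠ x in z, ∀ᶠ y in z, w ++ FreeMonoid.toList (sb σ x * sb τ y) ∈ A := h3
      filter_upwards [h4] with x hx
      filter_upwards [hx] with y hy
      rw [List.append_assoc]; exact hy
    have h3 := (Filter.eventually_all).2 h2
    filter_upwards [h3, hw'.2 σ] with x hx hx2
    exact (hgood _).2 ⟨hx2, hx⟩
  have hfin : {w : List α | w.length = cur.length}.Finite := List.finite_length_eq α _
  have h5 : ∀ᶠ x in z, ∀ w ∈ {w : List α | w.length = cur.length}, good w → ∀ σ,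
      good (w ++ sl σ x) := by
    rw [Filter.eventually_all_finite hfin]
    intro w _
    by_cases hg : good w
    · filter_upwards [(Filter.eventually_all).2 (h1 w hg)] with x hx _ using hx
    · exact Eventually.of_forall fun x h => absurd h hg
  obtain ⟨x, hx, y, rfl⟩ := (h5.and hzL).exists
  let f : Option α → α ⊕ ℕ := fun o => o.elim (Sum.inr cur.length) Sum.inl
  refine ⟨(FreeMonoid.toList y).map f, ?_, ?_⟩
  · intro v hv
    obtain ⟨o, _, ho⟩ := List.mem_map.1 hv
    cases o with
    | none => simpa [f] using ho.symm
    | some a => simp [f] at ho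
  · intro ρ
    have := hx (cur.map (Sum.elim id ρ)) (by simp) (hc ρ) (ρ cur.length)
    convert this using 1
    rw [List.map_append]
    congr 1
    change _ = List.map (fun o => o.getD (ρ cur.length)) (none :: (FreeMonoid.toList y))
    simp only [List.map_cons, List.map_map, Sum.elim_inr, Option.getD_none]
    congr 1
    apply List.map_congr_left
    intro o _
    cases o <;> simp [f]

theorem carlson_simpson (α : Type) [Finite α] [Nonempty α] (c : List α → Prop) :
    ∃ W : ℕ → α ⊕ ℕ, (∀ u v, W u = Sum.inr v → v ≤ u ∧ W v = Sum.inr v) ∧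
      {v | W v = Sum.inr v}.Infinite ∧
      ((∀ v, W v = Sum.inr v → ∀ ρ : ℕ → α,
          c ((List.range v).map fun u => Sum.elim id ρ (W u))) ∨
       (∀ v, W v = Sum.inr v → ∀ ρ : ℕ → α,
          ¬ c ((List.range v).map fun u => Sum.elim id ρ (W u)))) := by
  obtain ⟨e, z, hzL, hez, hz⟩ := exists_ultra α
  have main : ∀ A : Set (List α), (∀ᶠ w in e, FreeMonoid.toList w ∈ A) →
      ∃ W : ℕ → α ⊕ ℕ, (∀ u v, W u = Sum.inr v → v ≤ u ∧ W v = Sum.inr v) ∧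
      {v | W v = Sum.inr v}.Infinite ∧
      (∀ v, W v = Sum.inr v → ∀ ρ : ℕ → α,
          ((List.range v).map fun u => Sum.elim id ρ (W u)) ∈ A) := by
    intro A hA
    let good : List α → Prop := fun w => (w ∈ A ∧ ∀ σ, ∀ᶠ x in z, w ++ sl σ x ∈ A)
    obtain ⟨w0, hw0⟩ : ∃ w, good w := by
      have h1 : ∀ᶠ w in e, FreeMonoid.toList w ∈ A := hA
      have h2 : ∀ σ, ∀ᶠ w in e, ∀ᶠ x in z, FreeMonoid.toList w ++ sl σ x ∈ A := by
        intro σ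
        have h3 := h1
        rw [← hez σ, Ultrafilter.eventually_mul] at h3
        exact h3
      obtain ⟨w, hw⟩ := (h1.and ((Filter.eventually_all).2 h2)).exists
      exact ⟨FreeMonoid.toList w, hw⟩
    have step := cs_step A z hzL hz good (fun w => Iff.rfl)
    let St := {cur : List (α ⊕ ℕ) // ∀ ρ : ℕ → α, good (cur.map (Sum.elim id ρ))}
    choose Y hY1 hY2 using step
    let s0 : St := ⟨w0.map Sum.inl, fun ρ => by simpa [Function.comp_def] using hw0⟩
    let nx : St → St := fun s => ⟨s.1 ++ Sum.inr s.1.length :: Y s.1 s.2, hY2 s.1 s.2⟩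
    let cur : ℕ → St := fun k => nx^[k] s0
    have hcur : ∀ k, cur (k+1) = nx (cur k) := fun k => Function.iterate_succ_apply' _ _ _
    have hcur' : ∀ k, (cur (k+1)).1 = (cur k).1 ++ Sum.inr (cur k).1.length ::
      Y (cur k).1 (cur k).2 := fun k => by rw [hcur]
    have hlen : ∀ k, (cur k).1.length < (cur (k+1)).1.length := by
      intro k; rw [hcur']; simp
    have hmono : StrictMono fun k => (cur k).1.length := strictMono_nat_of_lt_succ hlen
    have hpre : ∀ i k, i ≤ k → (cur i).1 <+: (cur k).1 := by
      intro i k hik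
      induction k, hik using Nat.le_induction with
      | base => exact List.prefix_refl _
      | succ k _ ih => exact ih.trans (by rw [hcur']; exact List.prefix_append _ _)
    let W : ℕ → α ⊕ ℕ := fun u => (cur (u+1)).1.getD u (Sum.inr 0)
    have hlt : ∀ u, u < (cur (u+1)).1.length := fun u =>
      lt_of_lt_of_le (Nat.lt_succ_self u) (hmono.id_le (u+1))
    have hW0 : ∀ u, (cur (u+1)).1[u]? = some (W u) := by
      intro u
      simp only [W, List.getD_eq_getElem?_getD]
      rw [List.getElem?_eq_getElem (hlt u)]; rfl
    have hW : ∀ k u, u < (cur k).1.length → (cur k).1[u]? = some (W u) := by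
      intro k u hu
      rw [← hW0]
      rcases le_total k (u+1) with h | h
      · obtain ⟨t, ht⟩ := hpre _ _ h
        rw [← ht, List.getElem?_append_left hu]
      · obtain ⟨t, ht⟩ := hpre _ _ h
        rw [← ht, List.getElem?_append_left (hlt u)]
    have hWlen : ∀ k, W (cur k).1.length = Sum.inr (cur k).1.length := by
      intro k
      have := hW (k+1) _ (hlen k)
      rw [hcur'] at this
      simpa using this.symm
    have hinv : ∀ k u v, (cur k).1[u]? = some (Sum.inr v) →
        v ≤ u ∧ ∃ i, (cur i).1.length = v := by
      intro k
      induction k with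
      | zero =>
        intro u v h
        have := List.mem_of_getElem? h
        simp [cur, s0] at this
      | succ k ih =>
        intro u v h
        rcases lt_or_ge u (cur k).1.length with hu | hu
        · refine ih u v ?_
          rw [hcur', List.getElem?_append_left hu] at h
          exact h
        · rw [hcur', List.getElem?_append_right hu] at h
          have := List.mem_of_getElem? h
          rcases List.mem_cons.1 this with h' | h'
          · have : v = _ := Sum.inr.inj h'
            exact ⟨this ▸ hu, k, this.symm⟩
          · have := hY1 _ _ _ h'
            exact ⟨this ▸ hu, k, this.symm⟩
    have hinv' : ∀ u v, W u = Sum.inr v → v ≤ u ∧ ∃ i, (cur i).1.length = v := by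
      intro u v h
      exact hinv (u+1) u v (by rw [hW0, h])
    refine ⟨W, ?_, ?_, ?_⟩
    · intro u v h
      obtain ⟨h1, i, rfl⟩ := hinv' u v h
      exact ⟨h1, hWlen i⟩
    · refine Set.infinite_of_injective_forall_mem hmono.injective hWlen
    · intro v hv ρ
      obtain ⟨_, i, rfl⟩ := hinv' v v hv
      have := ((cur i).2 ρ).1
      convert this using 1
      change _ = List.map (Sum.elim id ρ) (cur i).1
      apply List.ext_getElem?
      intro u
      rcases lt_or_ge u (cur i).1.length with hu | hu
      · rw [List.getElem?_map, List.getElem?_map, hW _ _ hu, List.getElem?_range hu]; rfl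
      · rw [List.getElem?_eq_none (by simpa using hu), List.getElem?_eq_none (by simpa using hu)]
  rcases e.mem_or_compl_mem {w : FreeMonoid α | c (FreeMonoid.toList w)} with h | h
  · obtain ⟨W, h1, h2, h3⟩ := main {w | c w} h
    exact ⟨W, h1, h2, Or.inl h3⟩
  · obtain ⟨W, h1, h2, h3⟩ := main {w | ¬ c w} h
    exact ⟨W, h1, h2, Or.inr h3⟩

end CS
section basics

noncomputable def mr (E : Setoid ℕ) (y : ℕ) : ℕ := sInf {z | E.r y z}

lemma mr_rel (E : Setoid ℕ) (y : ℕ) : E.r y (mr E y) :=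
  Nat.sInf_mem (s := {z | E.r y z}) ⟨y, E.iseqv.refl y⟩

lemma mr_le_of {E : Setoid ℕ} {y z : ℕ} (h : E.r y z) : mr E y ≤ z := Nat.sInf_le h

lemma mr_le (E : Setoid ℕ) (y : ℕ) : mr E y ≤ y := mr_le_of (E.iseqv.refl y)

lemma rel_iff (E : Setoid ℕ) (y z : ℕ) : E.r y z ↔ mr E y = mr E z := by
  constructor
  · intro h
    apply le_antisymm
    · exact mr_le_of (E.iseqv.trans h (mr_rel E z))
    · exact mr_le_of (E.iseqv.trans (E.iseqv.symm h) (mr_rel E y))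
  · intro h
    exact E.iseqv.trans (mr_rel E y) (h ▸ E.iseqv.symm (mr_rel E z))

lemma mr_idem (E : Setoid ℕ) (y : ℕ) : mr E (mr E y) = mr E y :=
  ((rel_iff E _ _).1 (mr_rel E y)).symm

lemma mem_minReps {E : Setoid ℕ} {x : ℕ} : x ∈ minReps E ↔ mr E x = x := by
  constructor
  · intro h; exact le_antisymm (mr_le E x) (h _ (mr_rel E x))
  · intro h m hm; rw [← h]; exact mr_le_of hm

lemma mr_mem (E : Setoid ℕ) (y : ℕ) : mr E y ∈ minReps E := mem_minReps.2 (mr_idem E y)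

lemma coarsens_iff {F E : Setoid ℕ} : Coarsens F E ↔ ∀ y, mr F (mr E y) = mr F y := by
  constructor
  · intro h y
    exact ((rel_iff F _ _).1 (h _ _ (mr_rel E y))).symm
  · intro h a b hab
    rw [rel_iff] at hab ⊢
    rw [← h a, ← h b, hab]

lemma coarsens_minReps {F E : Setoid ℕ} (h : Coarsens F E) : minReps F ⊆ minReps E :=
  fun _ hx m hm => hx m (h _ _ hm)

lemma mr_ker {f : ℕ → ℕ} (h1 : ∀ y, f y ≤ y) (h2 : ∀ y, f (f y) = f y) :
    mr (Setoid.ker f) = f := by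
  funext y
  apply le_antisymm
  · exact mr_le_of (show f y = f (f y) from (h2 y).symm)
  · have : f y = f (mr (Setoid.ker f) y) := mr_rel (Setoid.ker f) y
    rw [this]; exact h1 _

noncomputable def ct (E : Setoid ℕ) (x : ℕ) : ℕ :=
  @Nat.count (· ∈ minReps E) (Classical.decPred _) x

lemma pRep_mem {E : Setoid ℕ} (h : (minReps E).Infinite) (k : ℕ) : pRep E k ∈ minReps E :=
  Nat.nth_mem_of_infinite (p := (· ∈ minReps E)) h k

lemma pRep_strictMono {E : Setoid ℕ} (h : (minReps E).Infinite) : StrictMono (pRep E) :=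
  Nat.nth_strictMono (p := (· ∈ minReps E)) h

lemma ct_pRep {E : Setoid ℕ} (h : (minReps E).Infinite) (k : ℕ) : ct E (pRep E k) = k :=
  @Nat.count_nth_of_infinite (· ∈ minReps E) (Classical.decPred _) h k

lemma pRep_ct {E : Setoid ℕ} {x : ℕ} (h : x ∈ minReps E) : pRep E (ct E x) = x :=
  @Nat.nth_count (· ∈ minReps E) (Classical.decPred _) x h

lemma count_congr (p q : ℕ → Prop) [DecidablePred p] [DecidablePred q] (x : ℕ)
    (h : ∀ y < x, (p y ↔ q y)) : Nat.count p x = Nat.count q x := by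
  rw [Nat.count_eq_card_filter_range, Nat.count_eq_card_filter_range]
  congr 1
  apply Finset.filter_congr
  intro y hy
  exact h y (Finset.mem_range.1 hy)

lemma ct_congr {F G : Setoid ℕ} {x : ℕ} (h : ∀ y < x, (y ∈ minReps F ↔ y ∈ minReps G)) :
    ct F x = ct G x := by
  classical
  exact @count_congr _ _ (Classical.decPred _) (Classical.decPred _) x h

lemma ct_mono (E : Setoid ℕ) : Monotone (ct E) :=
  @Nat.count_monotone (· ∈ minReps E) (Classical.decPred _)

/-- good equivalence relations -/
def Gd (l : ℕ) (ty : ℕ → ℕ) (E : Setoid ℕ) : Prop :=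
  (minReps E).Infinite ∧ (∀ x ∈ minReps E, ty x = ct E x % l) ∧ ∀ y, ty (mr E y) ≤ ty y

lemma Gd.ty_pRep {l : ℕ} {ty : ℕ → ℕ} {E : Setoid ℕ} (h : Gd l ty E) (k : ℕ) :
    ty (pRep E k) = k % l := by
  rw [h.2.1 _ (pRep_mem h.1 k), ct_pRep h.1]

lemma classes_infinite_iff (E : Setoid ℕ) : (classes E).Infinite ↔ (minReps E).Infinite := by
  have : classes E = (fun x => {y | E.r x y}) '' minReps E := by
    ext C
    constructor
    · rintro ⟨x, rfl⟩
      refine ⟨mr E x, mr_mem E x, ?_⟩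
      ext y
      change E.r (mr E x) y ↔ E.r x y
      rw [rel_iff, rel_iff, mr_idem]
    · rintro ⟨x, _, rfl⟩
      exact ⟨x, rfl⟩
  rw [this, Set.infinite_image_iff]
  intro x hx y hy hxy
  have h1 : E.r x y := by
    have : y ∈ {z | E.r y z} := E.iseqv.refl y
    have hxy' : {z | E.r x z} = {z | E.r y z} := hxy
    rw [← hxy'] at this; exact this
  rw [rel_iff, mem_minReps.1 hx, mem_minReps.1 hy] at h1
  exact h1

lemma mem_iff {l : ℕ} {hl : 0 < l} {P : Fin l → Set ℕ} {ty : ℕ → ℕ} (hlt : ∀ y, ty y < l)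
    (hty : ∀ y i, y ∈ P i ↔ ty y = i.val) (E : Setoid ℕ) :
    E ∈ EPalt' l hl P ↔ Gd l ty E := by
  constructor
  · rintro ⟨⟨h1, h2⟩, h3⟩
    rw [classes_infinite_iff] at h1
    refine ⟨h1, ?_, ?_⟩
    · intro x hx
      have := h2 (ct E x)
      rw [pRep_ct hx] at this
      exact (hty _ _).1 this
    · intro y
      obtain ⟨j, hj, hyj⟩ := h3 (mr E y) (mr_mem E y) ⟨ty (mr E y), hlt _⟩ ((hty _ _).2 rfl) y
        (E.iseqv.symm (mr_rel E y))
      rw [(hty _ _).1 hyj]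
      exact hj
  · rintro h
    refine ⟨⟨(classes_infinite_iff E).2 h.1, ?_⟩, ?_⟩
    · intro k
      exact (hty _ _).2 (h.ty_pRep k)
    · intro x hx i hi y hxy
      refine ⟨⟨ty y, hlt y⟩, ?_, (hty _ _).2 rfl⟩
      change i.val ≤ ty y
      rw [← (hty _ _).1 hi]
      rw [rel_iff, mem_minReps.1 hx] at hxy
      rw [hxy]; exact h.2.2 y

lemma approx_eq {F G : Setoid ℕ} {n k : ℕ} (hF : (minReps F).Infinite) (hG : (minReps G).Infinite)
    (h : approx n F = approx k G) :
    n = k ∧ pRep F n = pRep G n ∧ ∀ y < pRep F n, mr F y = mr G y := by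
  have h1 : ∀ y z, (y < pRep F n ∧ z < pRep F n ∧ F.r y z) ↔
      (y < pRep G k ∧ z < pRep G k ∧ G.r y z) := by
    intro y z
    have : (y, z) ∈ approx n F ↔ (y, z) ∈ approx k G := by rw [h]
    exact this
  have h2 : ∀ y, y < pRep F n ↔ y < pRep G k := by
    intro y
    have := h1 y y
    have a := F.iseqv.refl y
    have b := G.iseqv.refl y
    tauto
  have h3 : pRep F n = pRep G k := by
    apply le_antisymm
    · by_contra hc; push Not at hc
      exact lt_irrefl _ ((h2 _).1 hc)
    · by_contra hc; push Not at hc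
      exact lt_irrefl _ ((h2 _).2 hc)
  have h4 : ∀ y < pRep F n, mr F y = mr G y := by
    intro y hy
    have hyG := (h2 y).1 hy
    apply le_antisymm
    · exact mr_le_of ((h1 y _).2 ⟨hyG, lt_of_le_of_lt (mr_le G y) hyG, mr_rel G y⟩).2.2
    · exact mr_le_of ((h1 y _).1 ⟨hy, lt_of_le_of_lt (mr_le F y) hy, mr_rel F y⟩).2.2
  have h5 : n = k := by
    rw [← ct_pRep hF n, ← ct_pRep hG k, ← h3]
    apply ct_congr
    intro y hy
    rw [mem_minReps, mem_minReps, h4 y hy]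
  subst h5
  exact ⟨rfl, h3, h4⟩

lemma approx_of {F G : Setoid ℕ} {n : ℕ} (hF : (minReps F).Infinite)
    (hx : pRep F n ∈ minReps G) (h : ∀ y < pRep F n, mr F y = mr G y) :
    pRep G n = pRep F n ∧ approx n F = approx n G := by
  have h1 : pRep G n = pRep F n := by
    have : ct F (pRep F n) = ct G (pRep F n) := by
      apply ct_congr
      intro y hy
      rw [mem_minReps, mem_minReps, h y hy]
    rw [ct_pRep hF] at this
    rw [← pRep_ct hx, ← this]
  refine ⟨h1, ?_⟩
  ext ⟨y, z⟩
  change (y < pRep F n ∧ z < pRep F n ∧ F.r y z) ↔ (y < pRep G n ∧ z < pRep G n ∧ G.r y z)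
  rw [h1, rel_iff, rel_iff]
  constructor
  · rintro ⟨a, b, c⟩
    exact ⟨a, b, by rw [← h y a, ← h z b, c]⟩
  · rintro ⟨a, b, c⟩
    exact ⟨a, b, by rw [h y a, h z b, c]⟩

lemma approx_mono {F G : Setoid ℕ} {n k : ℕ} (hF : (minReps F).Infinite)
    (hG : (minReps G).Infinite) (h : approx n F = approx n G) (hk : k ≤ n) :
    approx k F = approx k G := by
  obtain ⟨_, h1, h2⟩ := approx_eq hF hG h
  have hle : pRep F k ≤ pRep F n := (pRep_strictMono hF).monotone hk
  refine (approx_of hF ?_ fun y hy => h2 y (lt_of_lt_of_le hy hle)).2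
  rcases hk.eq_or_lt with rfl | hlt
  · rw [h1]; exact pRep_mem hG _
  · rw [mem_minReps, ← h2 _ (pRep_strictMono hF hlt)]
    exact mem_minReps.1 (pRep_mem hF k)

lemma ct_add (E : Setoid ℕ) (m t : ℕ) : ct E (m + t) = ct E m +
    @Nat.count (fun k => m + k ∈ minReps E) (Classical.decPred _) t := by
  unfold ct
  rw [@Nat.count_add _ (Classical.decPred _) m t]

lemma amalgam {l : ℕ} {ty : ℕ → ℕ} {G H E : Setoid ℕ} {m : ℕ} (hG : Gd l ty G) (hH : Gd l ty H)
    (hmG : m ∈ minReps G) (hmH : m ∈ minReps H)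
    (h1 : ∀ x < m, (x ∈ minReps E ↔ x ∈ minReps G))
    (h2 : ∀ x, m ≤ x → (x ∈ minReps E ↔ x ∈ minReps H))
    (h3 : ∀ y, ty (mr E y) ≤ ty y) : Gd l ty E := by
  refine ⟨?_, ?_, h3⟩
  · have : (minReps H \ Set.Iio m).Infinite := hH.1.sdiff (Set.finite_Iio m)
    refine this.mono ?_
    rintro x ⟨hx, hxm⟩
    exact (h2 x (not_lt.1 hxm)).2 hx
  · intro x hx
    rcases lt_or_ge x m with hxm | hxm
    · rw [hG.2.1 x ((h1 x hxm).1 hx), ct_congr (F := G) (G := E)]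
      intro y hy
      exact (h1 y (hy.trans hxm)).symm
    · rw [hH.2.1 x ((h2 x hxm).1 hx)]
      obtain ⟨t, rfl⟩ := Nat.exists_eq_add_of_le hxm
      rw [ct_add, ct_add]
      have e1 : ct E m = ct G m := ct_congr h1
      have e2 : ct G m % l = ct H m % l := by rw [← hG.2.1 m hmG, ← hH.2.1 m hmH]
      rw [e1, Nat.add_mod, ← e2, ← Nat.add_mod]
      congr 2
      refine @count_congr _ _ (Classical.decPred _) (Classical.decPred _) _ ?_
      intro y _
      exact (h2 _ (Nat.le_add_right _ _)).symm

end basics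

section amalg

/-- Amalgamation, first form: nonemptiness. -/
lemma amalg1 {l : ℕ} {ty : ℕ → ℕ} {A F : Setoid ℕ} {d n : ℕ} (hA : Gd l ty A) (hF : Gd l ty F)
    (hm : pRep F n = pRep A d)
    (hFA : ∀ x < pRep A d, x ∈ minReps F → x ∈ minReps A) :
    ∃ F', Gd l ty F' ∧ Coarsens F' A ∧ pRep F' n = pRep F n ∧
      ((∀ y < pRep A d, mr F (mr A y) = mr F y) → approx n F' = approx n F) := by
  set m := pRep A d with hmd
  let f : ℕ → ℕ := fun y => if mr A y < m then mr F (mr A y) else mr A y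
  have f1 : ∀ y, f y ≤ y := by
    intro y
    simp only [f]
    split_ifs
    · exact (mr_le F _).trans (mr_le A y)
    · exact mr_le A y
  have f2 : ∀ y, f (f y) = f y := by
    intro y
    by_cases h : mr A y < m
    · have e : f y = mr F (mr A y) := if_pos h
      have hlt : mr F (mr A y) < m := lt_of_le_of_lt (mr_le _ _) h
      have e2 : mr A (mr F (mr A y)) = mr F (mr A y) :=
        mem_minReps.1 (hFA _ hlt (mr_mem F _))
      rw [e]
      simp only [f]
      rw [e2, if_pos hlt, mr_idem]
    · have e : f y = mr A y := if_neg h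
      rw [e]
      simp only [f]
      rw [mr_idem, if_neg h]
  have hmr := mr_ker f1 f2
  have hmA : m ∈ minReps A := pRep_mem hA.1 d
  have hmF : m ∈ minReps F := hm ▸ pRep_mem hF.1 n
  have h1 : ∀ x < m, (x ∈ minReps (Setoid.ker f) ↔ x ∈ minReps F) := by
    intro x hx
    rw [mem_minReps, hmr]
    have hlt : mr A x < m := lt_of_le_of_lt (mr_le _ _) hx
    have e : f x = mr F (mr A x) := if_pos hlt
    rw [e]
    constructor
    · intro h
      rw [← h]; exact mr_mem _ _
    · intro h
      rw [mem_minReps.1 (hFA x hx h), mem_minReps.1 h]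
  have hgd : Gd l ty (Setoid.ker f) := by
    refine amalgam hF hA hmF hmA h1 ?_ ?_
    · intro x hx
      rw [mem_minReps, hmr, mem_minReps]
      simp only [f]
      split_ifs with h
      · constructor
        · intro h'
          have := mr_le F (mr A x)
          omega
        · intro h'
          omega
      · rfl
    · intro y
      rw [hmr]
      simp only [f]
      split_ifs with h
      · exact (hF.2.2 _).trans (hA.2.2 _)
      · exact hA.2.2 _
  have hmK : m ∈ minReps (Setoid.ker f) := by
    rw [mem_minReps, hmr]
    simp only [f]
    rw [mem_minReps.1 hmA, if_neg (lt_irrefl _)]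
  have hp : pRep (Setoid.ker f) n = pRep F n := by
    have : ct (Setoid.ker f) m = ct F m := ct_congr h1
    rw [← hm, ct_pRep hF.1, hm] at this
    rw [hm, ← this, pRep_ct hmK]
  refine ⟨Setoid.ker f, hgd, ?_, hp, ?_⟩
  · rw [coarsens_iff, hmr]
    intro y
    simp only [f]
    rw [mr_idem]
  · intro hag
    refine ((approx_of hF.1 (hm ▸ hmK) ?_).2).symm
    intro y hy
    rw [hm] at hy
    have e : f y = mr F (mr A y) := if_pos (lt_of_le_of_lt (mr_le _ _) hy)
    rw [hmr, e, hag y hy]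

lemma amalg2 {l : ℕ} {ty : ℕ → ℕ} {A B : Setoid ℕ} {d n : ℕ} (hA : Gd l ty A) (hB : Gd l ty B)
    (hm : pRep A n = pRep B d) (hAB : Coarsens A B) :
    ∃ A', Gd l ty A' ∧ Coarsens A' B ∧ approx d A' = approx d B ∧
      ∀ F, Coarsens F A' → (∀ y < pRep A n, mr F y = mr A y) → Coarsens F A := by
  set m := pRep B d with hmd
  let f : ℕ → ℕ := fun y => if mr B y < m then mr B y else mr A y
  have hAB' := coarsens_iff.1 hAB
  have hfix : ∀ y, mr B (mr A y) = mr A y := fun y =>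
    mem_minReps.1 (coarsens_minReps hAB (mr_mem A y))
  have f1 : ∀ y, f y ≤ y := by
    intro y
    simp only [f]
    split_ifs
    · exact mr_le B y
    · exact mr_le A y
  have f2 : ∀ y, f (f y) = f y := by
    intro y
    by_cases h : mr B y < m
    · have e : f y = mr B y := if_pos h
      rw [e]
      simp only [f]
      rw [mr_idem, if_pos h]
    · have e : f y = mr A y := if_neg h
      rw [e]
      simp only [f]
      rw [hfix, mr_idem, ite_self]
  have hmr := mr_ker f1 f2
  have hmB : m ∈ minReps B := pRep_mem hB.1 d
  have hmA : m ∈ minReps A := hm ▸ pRep_mem hA.1 n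
  have hlow : ∀ x < m, f x = mr B x := fun x hx => if_pos (lt_of_le_of_lt (mr_le _ _) hx)
  have hgd : Gd l ty (Setoid.ker f) := by
    refine amalgam hB hA hmB hmA ?_ ?_ ?_
    · intro x hx
      rw [mem_minReps, hmr, mem_minReps, hlow x hx]
    · intro x hx
      rw [mem_minReps, hmr]
      constructor
      · intro h
        simp only [f] at h
        split_ifs at h with h'
        · omega
        · exact mem_minReps.2 h
      · intro h
        have hxB := mem_minReps.1 (coarsens_minReps hAB h)
        simp only [f]
        rw [hxB, if_neg (not_lt.2 hx), mem_minReps.1 h]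
    · intro y
      rw [hmr]
      simp only [f]
      split_ifs with h
      · exact hB.2.2 _
      · exact hA.2.2 _
  have hmK : m ∈ minReps (Setoid.ker f) := by
    rw [mem_minReps, hmr]
    simp only [f]
    rw [mem_minReps.1 hmB, if_neg (lt_irrefl _), mem_minReps.1 hmA]
  refine ⟨Setoid.ker f, hgd, ?_, ?_, ?_⟩
  · rw [coarsens_iff, hmr]
    intro y
    simp only [f]
    rw [mr_idem, hAB']
  · refine ((approx_of hB.1 hmK ?_).2).symm
    intro y hy
    rw [hmr, hlow y hy]
  · intro F hF hag
    rw [hm] at hag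
    rw [coarsens_iff, hmr] at hF
    rw [coarsens_iff]
    intro y
    by_cases h : mr B y < m
    · have e : f y = mr B y := if_pos h
      have h2 := hF y
      rw [e] at h2
      rw [← h2, hag _ h, hAB', hag _ (lt_of_le_of_lt ?_ h), mr_idem]
      rw [← hAB']; exact mr_le _ _
    · have e : f y = mr A y := if_neg h
      have h2 := hF y
      rw [e] at h2
      exact h2

lemma fusion_lemma {l : ℕ} {ty : ℕ → ℕ} (A : ℕ → Setoid ℕ) (d : ℕ) (hA : ∀ i, Gd l ty (A i))
    (h : ∀ i, Coarsens (A (i+1)) (A i) ∧ approx (d+i) (A (i+1)) = approx (d+i) (A i)) :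
    ∃ C, Gd l ty C ∧ ∀ i, Coarsens C (A i) ∧ approx (d+i) C = approx (d+i) (A i) := by
  have hco : ∀ i j, i ≤ j → Coarsens (A j) (A i) := by
    intro i j hij
    induction j, hij using Nat.le_induction with
    | base => exact fun _ _ h => h
    | succ j _ ih => exact fun a b hab => (h j).1 a b (ih a b hab)
  have hap : ∀ i j, i ≤ j → approx (d+i) (A j) = approx (d+i) (A i) := by
    intro i j hij
    induction j, hij using Nat.le_induction with
    | base => rfl
    | succ j hij ih =>
      rw [← ih]
      exact approx_mono (hA _).1 (hA _).1 (h j).2 (by omega)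
  let m : ℕ → ℕ := fun i => pRep (A i) (d+i)
  have hdat : ∀ i j, i ≤ j → pRep (A j) (d+i) = m i ∧ ∀ y < m i, mr (A j) y = mr (A i) y := by
    intro i j hij
    obtain ⟨_, h1, h2⟩ := approx_eq (hA j).1 (hA i).1 (hap i j hij)
    exact ⟨h1, fun y hy => h2 y (h1 ▸ hy)⟩
  have hmlt : ∀ i, m i < m (i+1) := by
    intro i
    rw [← (hdat i (i+1) (by omega)).1]
    exact pRep_strictMono (hA _).1 (by omega)
  have hmono : StrictMono m := strictMono_nat_of_lt_succ hmlt
  let C : Setoid ℕ :=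
    { r := fun y z => ∃ i, (A i).r y z
      iseqv := ⟨fun y => ⟨0, (A 0).iseqv.refl y⟩, fun ⟨i, hi⟩ => ⟨i, (A i).iseqv.symm hi⟩,
        fun ⟨i, hi⟩ ⟨j, hj⟩ => ⟨max i j, (A _).iseqv.trans (hco i _ (le_max_left _ _) _ _ hi)
          (hco j _ (le_max_right _ _) _ _ hj)⟩⟩ }
  have hmr : ∀ i, ∀ y < m i, mr C y = mr (A i) y := by
    intro i y hy
    apply le_antisymm
    · exact mr_le_of ⟨i, mr_rel _ _⟩
    · obtain ⟨k, hk⟩ : ∃ k, (A k).r y (mr C y) := mr_rel C y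
      rw [← (hdat i (max i k) (le_max_left _ _)).2 y hy]
      exact mr_le_of (hco k _ (le_max_right _ _) _ _ hk)
  have hmC : ∀ i, m i ∈ minReps C := by
    intro i
    rw [mem_minReps, hmr (i+1) _ (hmlt i), ← (hdat i (i+1) (by omega)).1]
    exact mem_minReps.1 (pRep_mem (hA _).1 _)
  have hbig : ∀ x, x < m (x+1) := fun x => lt_of_lt_of_le (Nat.lt_succ_self x) (hmono.id_le _)
  refine ⟨C, ⟨?_, ?_, ?_⟩, ?_⟩
  · exact Set.infinite_of_injective_forall_mem hmono.injective hmC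
  · intro x hx
    have hx' : x ∈ minReps (A (x+1)) := by
      rw [mem_minReps, ← hmr _ x (hbig x)]; exact mem_minReps.1 hx
    rw [(hA (x+1)).2.1 x hx', ct_congr (F := A (x+1)) (G := C)]
    intro y hy
    rw [mem_minReps, mem_minReps, hmr _ y (hy.trans (hbig x))]
  · intro y
    rw [hmr _ y (hbig y)]
    exact (hA _).2.2 y
  · intro i
    refine ⟨fun a b hab => ⟨i, hab⟩, ?_⟩
    exact ((approx_of (hA i).1 (hmC i) fun y hy => (hmr i y hy).symm).2).symm

end amalg

section pigeon

noncomputable def cnt (p : ℕ → Prop) (x : ℕ) : ℕ := @Nat.count p (Classical.decPred _) x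

lemma cnt_add (p : ℕ → Prop) (m t : ℕ) : cnt p (m + t) = cnt p m + cnt (fun k => p (m + k)) t := by
  unfold cnt
  rw [@Nat.count_add _ (Classical.decPred _) m t]

lemma cnt_succ_pos (p : ℕ → Prop) {m : ℕ} (h : p m) : cnt p (m + 1) = cnt p m + 1 := by
  unfold cnt
  rw [@Nat.count_succ _ (Classical.decPred _), if_pos h]

lemma cnt_congr {p q : ℕ → Prop} {x : ℕ} (h : ∀ y < x, (p y ↔ q y)) : cnt p x = cnt q x :=
  @count_congr _ _ (Classical.decPred _) (Classical.decPred _) x h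

lemma cnt_all {p : ℕ → Prop} {x : ℕ} (h : ∀ y < x, p y) : cnt p x = x := by
  unfold cnt
  exact (@Nat.count_iff_forall p (Classical.decPred _) x).2 (fun {y} hy => h y hy)

lemma cnt_none {p : ℕ → Prop} {x : ℕ} (h : ∀ y < x, ¬ p y) : cnt p x = 0 := by
  unfold cnt
  exact (@Nat.count_iff_forall_not p (Classical.decPred _) x).2 (fun {y} hy => h y hy)

/-- counting representatives in a chart -/
lemma ct_chart {B F : Setoid ℕ} (hB : (minReps B).Infinite) (hF : minReps F ⊆ minReps B) (j : ℕ) :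
    ct F (pRep B j) = cnt (fun i => pRep B i ∈ minReps F) j := by
  classical
  have e1 : ct F (pRep B j) = Nat.count (· ∈ minReps F) (pRep B j) := by unfold ct; congr
  have e2 : cnt (fun i => pRep B i ∈ minReps F) j = Nat.count (fun i => pRep B i ∈ minReps F) j := by
    unfold cnt; congr
  rw [e1, e2, Nat.count_eq_card_filter_range, Nat.count_eq_card_filter_range]
  symm
  rw [← Finset.card_image_of_injective _ (pRep_strictMono hB).injective]
  congr 1
  ext x
  rw [iff_comm]
  simp only [Finset.mem_filter, Finset.mem_range, Finset.mem_image]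
  constructor
  · rintro ⟨hx, hxF⟩
    have hxB := pRep_ct (hF hxF)
    refine ⟨ct B x, ⟨?_, by rwa [hxB]⟩, hxB⟩
    rw [← hxB] at hx
    exact (pRep_strictMono hB).lt_iff_lt.1 hx
  · rintro ⟨i, ⟨hi, hiF⟩, rfl⟩
    exact ⟨pRep_strictMono hB hi, hiF⟩

lemma chart {l : ℕ} {ty : ℕ → ℕ} {B : Setoid ℕ} (hB : Gd l ty B) (h : ℕ → ℕ)
    (h1 : ∀ j, h j ≤ j) (h2 : ∀ j, h (h j) = h j) (h3 : {j | h j = j}.Infinite)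
    (h4 : ∀ j, h j = j → j % l = cnt (fun i => h i = i) j % l)
    (h5 : ∀ j, h j % l ≤ j % l) :
    ∃ A, Gd l ty A ∧ Coarsens A B ∧ ∀ y, mr A y = pRep B (h (ct B (mr B y))) := by
  let f : ℕ → ℕ := fun y => pRep B (h (ct B (mr B y)))
  have hpm := pRep_mem hB.1
  have hmono := pRep_strictMono hB.1
  have hfp : ∀ j, f (pRep B j) = pRep B (h j) := by
    intro j
    simp only [f]
    rw [mem_minReps.1 (hpm j), ct_pRep hB.1]
  have f1 : ∀ y, f y ≤ y := by
    intro y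
    refine le_trans (hmono.monotone (h1 _)) ?_
    rw [pRep_ct (mr_mem B y)]
    exact mr_le B y
  have f2 : ∀ y, f (f y) = f y := by
    intro y
    change f (pRep B (h (ct B (mr B y)))) = pRep B (h (ct B (mr B y)))
    rw [hfp, h2]
  have hmr := mr_ker f1 f2
  have hco : Coarsens (Setoid.ker f) B := by
    rw [coarsens_iff, hmr]
    intro y
    simp only [f]
    rw [mr_idem]
  have hfix : ∀ j, pRep B j ∈ minReps (Setoid.ker f) ↔ h j = j := by
    intro j
    rw [mem_minReps, hmr, hfp, hmono.injective.eq_iff]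
  refine ⟨Setoid.ker f, ⟨?_, ?_, ?_⟩, hco, fun y => by rw [hmr]⟩
  · refine (h3.image hmono.injective.injOn).mono ?_
    rintro _ ⟨j, hj, rfl⟩
    exact (hfix j).2 hj
  · intro x hx
    have hxB := coarsens_minReps hco hx
    obtain ⟨j, rfl⟩ : ∃ j, pRep B j = x := ⟨_, pRep_ct hxB⟩
    rw [hB.ty_pRep, ct_chart hB.1 (coarsens_minReps hco), h4 j ((hfix j).1 hx)]
    congr 1
    exact cnt_congr fun i _ => (hfix i).symm
  · intro y
    rw [hmr]
    simp only [f]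
    rw [hB.ty_pRep]
    refine (h5 _).trans ?_
    rw [← hB.2.1 _ (mr_mem B y)]
    exact hB.2.2 y

/-- the alphabet -/
def Alph (l n : ℕ) : Type :=
  {σ : Fin l → Fin (n+1) // ∀ s, (σ s).val % l ≤ (n + 1 + s.val) % l}

instance (l n : ℕ) : Finite (Alph l n) := by unfold Alph; infer_instance
instance (l n : ℕ) : Nonempty (Alph l n) := ⟨⟨fun _ => 0, fun s => by simp⟩⟩

lemma a4 {l : ℕ} (hl : 0 < l) {ty : ℕ → ℕ} {B G : Setoid ℕ} (hB : Gd l ty B) (hG : Gd l ty G)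
    (hGB : Coarsens G B) (n : ℕ) (O : Set (Set (ℕ × ℕ))) :
    ∃ A, Gd l ty A ∧ Coarsens A B ∧ approx n A = approx n G ∧
      ((∀ F, Gd l ty F → Coarsens F A → approx n F = approx n G → approx (n+1) F ∈ O) ∨
       (∀ F, Gd l ty F → Coarsens F A → approx n F = approx n G → approx (n+1) F ∉ O)) := by
  have hGsub := coarsens_minReps hGB
  have hGB' := coarsens_iff.1 hGB
  have pB := pRep_strictMono hB.1
  have pG := pRep_strictMono hG.1
  obtain ⟨d, hd⟩ : ∃ d, pRep B d = pRep G n := ⟨_, pRep_ct (hGsub (pRep_mem hG.1 n))⟩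
  have hdn : d % l = n % l := by rw [← hB.ty_pRep, hd, hG.ty_pRep]
  have hdiv : ∀ v s : ℕ, s < l → (v * l + s) / l = v := by
    intro v s hs
    rw [mul_comm, Nat.mul_add_div hl, Nat.div_eq_of_lt hs, add_zero]
  have hmod : ∀ v s : ℕ, s < l → (v * l + s) % l = s := by
    intro v s hs
    rw [mul_comm, Nat.mul_add_mod, Nat.mod_eq_of_lt hs]
  -- type of a position in a block
  have hty : ∀ v s : ℕ, (d + 1 + (v * l + s)) % l = (n + 1 + s) % l := by
    intro v s
    have e : d + 1 + (v * l + s) = d + (1 + s) + l * v := by ring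
    rw [e, Nat.add_mul_mod_self_left, Nat.add_mod, hdn, ← Nat.add_mod]
    congr 1
    ring
  -- the interpretation of words
  let ph : List (Alph l n) → ℕ → ℕ := fun w y =>
    if ct B (mr B y) ≤ d then mr G y else
      match w[(ct B (mr B y) - (d+1)) / l]? with
      | some σ => pRep G (σ.1 ⟨(ct B (mr B y) - (d+1)) % l, Nat.mod_lt _ hl⟩).val
      | none => 0
  let c : List (Alph l n) → Prop := fun w =>
    {q : ℕ × ℕ | q.1 < pRep B (d + 1 + w.length * l) ∧ q.2 < pRep B (d + 1 + w.length * l) ∧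
      ph w q.1 = ph w q.2} ∈ O
  obtain ⟨W, hW1, hW2, hW3⟩ := carlson_simpson (Alph l n) c
  -- the chart map
  let h : ℕ → ℕ := fun j => if j ≤ d then ct B (mr G (pRep B j)) else
    match W ((j - (d+1)) / l) with
    | Sum.inl σ => ct B (pRep G (σ.1 ⟨(j - (d+1)) % l, Nat.mod_lt _ hl⟩).val)
    | Sum.inr v => d + 1 + (v * l + (j - (d+1)) % l)
  have hlow : ∀ j ≤ d, h j = ct B (mr G (pRep B j)) := fun j hj => if_pos hj
  have hinl : ∀ u s (hs : s < l) σ, W u = Sum.inl σ →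
      h (d + 1 + (u * l + s)) = ct B (pRep G (σ.1 ⟨s, hs⟩).val) := by
    intro u s hs σ hσ
    have e1 : ¬ (d + 1 + (u * l + s) ≤ d) := by omega
    have e2 : d + 1 + (u * l + s) - (d + 1) = u * l + s := by omega
    simp only [h, if_neg e1, e2, hdiv u s hs, hσ, hmod u s hs]
  have hinr : ∀ u s, s < l → ∀ v, W u = Sum.inr v →
      h (d + 1 + (u * l + s)) = d + 1 + (v * l + s) := by
    intro u s hs v hv
    have e1 : ¬ (d + 1 + (u * l + s) ≤ d) := by omega
    have e2 : d + 1 + (u * l + s) - (d + 1) = u * l + s := by omega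
    simp only [h, if_neg e1, e2, hdiv u s hs, hv, hmod u s hs]
  have hpos : ∀ j, ¬ j ≤ d → ∃ u s, s < l ∧ j = d + 1 + (u * l + s) := by
    intro j hj
    refine ⟨(j - (d+1)) / l, (j - (d+1)) % l, Nat.mod_lt _ hl, ?_⟩
    have := Nat.div_add_mod' (j - (d+1)) l
    omega
  have hqle : ∀ i, i < n + 1 → ct B (pRep G i) ≤ d := by
    intro i hi
    rw [← ct_pRep hB.1 d, hd]
    exact ct_mono B (pG.monotone (by omega))
  have hGp : ∀ i, pRep B (ct B (pRep G i)) = pRep G i := fun i => pRep_ct (hGsub (pRep_mem hG.1 i))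
  have hGm : ∀ y, pRep B (ct B (mr G y)) = mr G y := fun y => pRep_ct (hGsub (mr_mem G y))
  have hmrp : ∀ i, mr G (pRep G i) = pRep G i := fun i => mem_minReps.1 (pRep_mem hG.1 i)
  have h_le : ∀ j, h j ≤ j := by
    intro j
    by_cases hj : j ≤ d
    · rw [hlow j hj]
      conv_rhs => rw [← ct_pRep hB.1 j]
      exact ct_mono B (mr_le _ _)
    · obtain ⟨u, s, hs, rfl⟩ := hpos j hj
      cases hu : W u with
      | inl σ =>
        rw [hinl u s hs σ hu]
        have := hqle (σ.1 ⟨s, hs⟩).val (σ.1 ⟨s, hs⟩).isLt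
        omega
      | inr v =>
        rw [hinr u s hs v hu]
        have := Nat.mul_le_mul_right l (hW1 u v hu).1
        omega
  have h_idem : ∀ j, h (h j) = h j := by
    intro j
    by_cases hj : j ≤ d
    · have := (h_le j).trans hj
      rw [hlow _ this, hlow j hj, hGm, mr_idem]
    · obtain ⟨u, s, hs, rfl⟩ := hpos j hj
      cases hu : W u with
      | inl σ =>
        rw [hinl u s hs σ hu, hlow _ (hqle _ (σ.1 ⟨s, hs⟩).isLt), hGp, hmrp]
      | inr v =>
        rw [hinr u s hs v hu, hinr v s hs v (hW1 u v hu).2]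
  have h_inf : {j | h j = j}.Infinite := by
    have inj : Function.Injective fun v : ℕ => d + 1 + (v * l + 0) := by
      intro v v' hv
      have : v * l = v' * l := by simpa using hv
      exact Nat.eq_of_mul_eq_mul_right hl this
    refine (hW2.image inj.injOn).mono ?_
    rintro _ ⟨v, hv, rfl⟩
    exact hinr v 0 hl v hv
  -- counting
  let p : ℕ → Prop := fun i => h i = i
  have hplow : ∀ i ≤ d, (p i ↔ pRep B i ∈ minReps G) := by
    intro i hi
    simp only [p]
    rw [hlow i hi, mem_minReps]
    constructor
    · intro e
      rw [← hGm, e]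
    · intro e
      rw [e, ct_pRep hB.1]
  have cntlow : ∀ j ≤ d, cnt p j = ct G (pRep B j) := by
    intro j hj
    rw [ct_chart hB.1 hGsub]
    exact cnt_congr fun i hi => hplow i (by omega)
  have hpd : p d := (hplow d le_rfl).2 (hd ▸ pRep_mem hG.1 n)
  have cntd : cnt p (d + 1) = n + 1 := by
    rw [cnt_succ_pos p hpd, cntlow d le_rfl, hd, ct_pRep hG.1]
  have hpblock : ∀ u s, s < l → (p (d + 1 + (u * l + s)) ↔ W u = Sum.inr u) := by
    intro u s hs
    simp only [p]
    cases hu : W u with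
    | inl σ =>
      rw [hinl u s hs σ hu]
      have := hqle (σ.1 ⟨s, hs⟩).val (σ.1 ⟨s, hs⟩).isLt
      constructor
      · intro e; omega
      · intro e; cases e
    | inr v =>
      rw [hinr u s hs v hu]
      constructor
      · intro e
        have : v * l = u * l := by omega
        rw [Nat.eq_of_mul_eq_mul_right hl this]
      · intro e
        rw [Sum.inr.inj e]
  have cntblock : ∀ u, cnt p (d + 1 + u * l) % l = (n + 1) % l := by
    intro u
    induction u with
    | zero => rw [zero_mul, add_zero, cntd]
    | succ u ih =>
      have e : d + 1 + (u + 1) * l = d + 1 + u * l + l := by ring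
      rw [e, cnt_add]
      by_cases hu : W u = Sum.inr u
      · have e0 : cnt (fun k => p (d + 1 + u * l + k)) l = l := cnt_all (fun s hs => by
          rw [add_assoc]; exact (hpblock u s hs).2 hu)
        rw [e0, Nat.add_mod_right, ih]
      · have e0 : cnt (fun k => p (d + 1 + u * l + k)) l = 0 := cnt_none (fun s hs => by
          rw [add_assoc]; exact fun hc => hu ((hpblock u s hs).1 hc))
        rw [e0, add_zero, ih]
  have h_type : ∀ j, h j = j → j % l = cnt p j % l := by
    intro j hj
    by_cases hjd : j ≤ d
    · have hm := (hplow j hjd).1 hj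
      rw [cntlow j hjd, ← hG.2.1 _ hm, hB.ty_pRep]
    · obtain ⟨u, s, hs, rfl⟩ := hpos j hjd
      have hu := (hpblock u s hs).1 hj
      rw [hty, ← add_assoc (d+1), cnt_add, Nat.add_mod, ← cntblock u, cnt_all (x := s)
        (fun t ht => by rw [add_assoc]; exact (hpblock u t (ht.trans hs)).2 hu)]
      simp [Nat.add_mod]
  have h_ty : ∀ j, h j % l ≤ j % l := by
    intro j
    by_cases hj : j ≤ d
    · rw [hlow j hj, ← hB.2.1 _ (hGsub (mr_mem G _)), ← hB.ty_pRep j]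
      exact hG.2.2 _
    · obtain ⟨u, s, hs, rfl⟩ := hpos j hj
      cases hu : W u with
      | inl σ =>
        rw [hinl u s hs σ hu, ← hB.2.1 _ (hGsub (pRep_mem hG.1 _)), hG.ty_pRep, hty]
        exact σ.2 ⟨s, hs⟩
      | inr v =>
        rw [hinr u s hs v hu, hty, hty]
  obtain ⟨A, hA, hAB, hmrA⟩ := chart hB h h_le h_idem h_inf h_type h_ty
  have hmrAp : ∀ j, mr A (pRep B j) = pRep B (h j) := by
    intro j
    rw [hmrA, mem_minReps.1 (pRep_mem hB.1 j), ct_pRep hB.1]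
  -- `approx n A = approx n G`
  have hidx : ∀ y, y < pRep G n → ct B (mr B y) ≤ d := by
    intro y hy
    rw [← ct_pRep hB.1 d, hd]
    exact ct_mono B ((mr_le B y).trans hy.le)
  have hAG : approx n A = approx n G := by
    refine ((approx_of hG.1 ?_ ?_).2).symm
    · rw [mem_minReps, ← hd, hmrAp, hpd]
    · intro y hy
      rw [hmrA, hlow _ (hidx y hy), hGm, pRep_ct (mr_mem B y), hGB']
  refine ⟨A, hA, hAB, hAG, ?_⟩
  -- the key computation
  have key : ∀ F, Gd l ty F → Coarsens F A → approx n F = approx n G →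
      ∃ v, W v = Sum.inr v ∧ ∃ ρ : ℕ → Alph l n,
        (approx (n+1) F ∈ O ↔ c ((List.range v).map fun u => Sum.elim id ρ (W u))) := by
    intro F hF hFA hFG
    have hFA' := coarsens_iff.1 hFA
    have hFB : Coarsens F B := fun a b hab => hFA a b (hAB a b hab)
    have hFB' := coarsens_iff.1 hFB
    have hFsub := coarsens_minReps hFB
    obtain ⟨_, hFG1, hFG2⟩ := approx_eq hF.1 hG.1 hFG
    have pF := pRep_strictMono hF.1
    have hFGp : ∀ i ≤ n, pRep F i = pRep G i := by
      intro i hi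
      exact (approx_eq hF.1 hG.1 (approx_mono hF.1 hG.1 hFG hi)).2.1
    have hFGm : ∀ y ≤ pRep G n, mr F y = mr G y := by
      intro y hy
      rcases hy.lt_or_eq with hy | hy
      · exact hFG2 y (hFG1 ▸ hy)
      · rw [hy, hmrp, ← hFG1]
        exact mem_minReps.1 (pRep_mem hF.1 n)
    -- position of the next representative
    obtain ⟨j, hj⟩ : ∃ j, pRep B j = pRep F (n+1) := ⟨_, pRep_ct (hFsub (pRep_mem hF.1 (n+1)))⟩
    have hjd : ¬ j ≤ d := by
      intro hc
      have h1 := pB.monotone hc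
      rw [hj, hd, ← hFG1] at h1
      have h2 : pRep F n < pRep F (n+1) := pF (Nat.lt_succ_self n)
      omega
    obtain ⟨v, s, hs, rfl⟩ := hpos j hjd
    have hjA : h (d + 1 + (v * l + s)) = d + 1 + (v * l + s) := by
      apply pB.injective
      rw [← hmrAp, hj]
      exact mem_minReps.1 (coarsens_minReps hFA (pRep_mem hF.1 (n+1)))
    have hWv := (hpblock v s hs).1 hjA
    have hs0 : s = 0 := by
      have h1 : (d + 1 + (v * l + s)) % l = (n + 1) % l := by
        rw [← hB.ty_pRep, hj, hF.ty_pRep]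
      rw [hty] at h1
      have h2 : (n + 1 + s) ≡ (n + 1 + 0) [MOD l] := by rw [add_zero]; exact h1
      have h3 := Nat.ModEq.add_left_cancel' (n+1) h2
      have h4 : s % l = 0 % l := h3
      rwa [Nat.mod_eq_of_lt hs, Nat.zero_mod] at h4
    subst hs0
    rw [add_zero] at hj
    refine ⟨v, hWv, ?_⟩
    -- classes of small elements
    have hsmall : ∀ y, y < pRep F (n+1) → ∃ i, i < n + 1 ∧ mr F y = pRep G i := by
      intro y hy
      have hx := pRep_ct (mr_mem F y)
      have hlt : ct F (mr F y) < n + 1 := by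
        rw [← pF.lt_iff_lt, hx]
        exact lt_of_le_of_lt (mr_le F y) hy
      exact ⟨_, hlt, by rw [← hFGp _ (by omega), hx]⟩
    have hblk : ∀ u s, u < v → s < l → pRep B (d + 1 + (u * l + s)) < pRep F (n+1) := by
      intro u s hu hs
      rw [← hj]
      apply pB
      have : (u + 1) * l ≤ v * l := Nat.mul_le_mul_right l hu
      have e : (u + 1) * l = u * l + l := by ring
      omega
    have hρ : ∀ u, ∃ σ : Alph l n, u < v → ∀ s (hs : s < l),
        mr F (pRep B (d + 1 + (u * l + s))) = pRep G (σ.1 ⟨s, hs⟩).val := by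
      intro u
      by_cases hu : u < v
      · have h1 : ∀ s : Fin l, ∃ i : Fin (n+1),
            mr F (pRep B (d + 1 + (u * l + s.val))) = pRep G i.val := by
          intro s
          obtain ⟨i, hi, hi'⟩ := hsmall _ (hblk u s.val hu s.isLt)
          exact ⟨⟨i, hi⟩, hi'⟩
        choose σ hσ using h1
        refine ⟨⟨σ, ?_⟩, fun _ s hs => hσ ⟨s, hs⟩⟩
        intro s
        rw [← hG.ty_pRep, ← hσ, ← hty u s.val, ← hB.ty_pRep]
        exact hF.2.2 _
      · exact ⟨Classical.arbitrary _, fun hc => absurd hc hu⟩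
    choose ρ hρ using hρ
    refine ⟨ρ, ?_⟩
    have hφ : ∀ y, y < pRep F (n+1) →
        ph ((List.range v).map fun u => Sum.elim id ρ (W u)) y = mr F y := by
      intro y hy
      have hyB : pRep B (ct B (mr B y)) = mr B y := pRep_ct (mr_mem B y)
      by_cases hyd : ct B (mr B y) ≤ d
      · simp only [ph, if_pos hyd]
        rw [← hGB', ← hFB', hFGm]
        rw [← hyB, ← hd]
        exact pB.monotone hyd
      · obtain ⟨u, s, hs, hus⟩ := hpos _ hyd
        have huv : u < v := by
          have h1 : pRep B (ct B (mr B y)) < pRep B (d + 1 + v * l) := by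
            rw [hyB, hj]; exact lt_of_le_of_lt (mr_le B y) hy
          rw [pB.lt_iff_lt, hus] at h1
          by_contra hc
          have := Nat.mul_le_mul_right l (not_lt.1 hc)
          omega
        have e1 : ¬ (d + 1 + (u * l + s) ≤ d) := by omega
        have e2 : d + 1 + (u * l + s) - (d + 1) = u * l + s := by omega
        have e3 : ((List.range v).map fun u => Sum.elim id ρ (W u))[u]? =
            some (Sum.elim id ρ (W u)) := by
          rw [List.getElem?_map, List.getElem?_range huv]; rfl
        have e4 : ph ((List.range v).map fun u => Sum.elim id ρ (W u)) y =
            pRep G ((Sum.elim id ρ (W u)).1 ⟨s, hs⟩).val := by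
          simp only [ph, hus, if_neg e1, e2, hdiv u s hs, hmod u s hs, e3]
        rw [e4, ← hFA', hmrA, hus]
        cases hu : W u with
        | inl σ =>
          rw [hinl u s hs σ hu, hGp]
          have hi := (σ.1 ⟨s, hs⟩).isLt
          rw [← hFGp _ (Nat.lt_succ_iff.1 hi)]
          simp only [Sum.elim_inl, id]
          rw [← hFGp _ (Nat.lt_succ_iff.1 hi)]
          exact (mem_minReps.1 (pRep_mem hF.1 _)).symm
        | inr v' =>
          rw [hinr u s hs v' hu]
          exact (hρ v' (lt_of_le_of_lt (hW1 u v' hu).1 huv) s hs).symm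
    have hset : approx (n+1) F = {q : ℕ × ℕ |
        q.1 < pRep B (d + 1 + ((List.range v).map fun u => Sum.elim id ρ (W u)).length * l) ∧
        q.2 < pRep B (d + 1 + ((List.range v).map fun u => Sum.elim id ρ (W u)).length * l) ∧
        ph ((List.range v).map fun u => Sum.elim id ρ (W u)) q.1 =
        ph ((List.range v).map fun u => Sum.elim id ρ (W u)) q.2} := by
      ext ⟨y, z⟩
      have hlen : ((List.range v).map fun u => Sum.elim id ρ (W u)).length = v := by simp
      rw [hlen, hj]
      change (y < pRep F (n+1) ∧ z < pRep F (n+1) ∧ F.r y z) ↔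
        (y < pRep F (n+1) ∧ z < pRep F (n+1) ∧ _)
      refine and_congr_right fun hy => and_congr_right fun hz => ?_
      rw [hφ y hy, hφ z hz, rel_iff]
    rw [hset]
  rcases hW3 with hW3 | hW3
  · left
    intro F hF hFA hFG
    obtain ⟨v, hv, ρ, hc⟩ := key F hF hFA hFG
    exact hc.2 (hW3 v hv ρ)
  · right
    intro F hF hFA hFG
    obtain ⟨v, hv, ρ, hc⟩ := key F hF hFA hFG
    exact fun h => hW3 v hv ρ (hc.1 h)

end pigeon

/-- The space as an abstract Ramsey space. -/
noncomputable def theRS (l : ℕ) (hl : 0 < l) (P : Fin l → Set ℕ) (ty : ℕ → ℕ)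
    (hm : ∀ E, E ∈ EPalt' l hl P ↔ Gd l ty E) : RS ↥(EPalt' l hl P) (Set (ℕ × ℕ)) where
  le F E := Coarsens F.1 E.1
  r n F := approx n F.1
  T B d := {b | ∃ F : ↥(EPalt' l hl P), Coarsens F.1 B.1 ∧
    ∃ n, approx n F.1 = b ∧ pRep F.1 n = pRep B.1 d}
  le_refl A := fun _ _ h => h
  le_trans A B C h1 h2 := fun a b h => h1 a b (h2 a b h)
  r_inj n m F G h := (approx_eq ((hm _).1 F.2).1 ((hm _).1 G.2).1 h).1
  r_mono n k F G h hk := approx_mono ((hm _).1 F.2).1 ((hm _).1 G.2).1 h hk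
  T_fin B d := by
    refine ((Set.finite_Iio (pRep B.1 d)).prod (Set.finite_Iio (pRep B.1 d))).finite_subsets.subset ?_
    rintro b ⟨F, _, n, rfl, hn⟩ q ⟨h1, h2, _⟩
    rw [hn] at h1 h2
    exact ⟨h1, h2⟩
  T_ex0 F B n h := ⟨_, F, h, n, rfl,
    (pRep_ct (coarsens_minReps h (pRep_mem ((hm _).1 F.2).1 n))).symm⟩
  T_ex F B n d k h hT hnk := by
    obtain ⟨F', _, n', hn', hp⟩ := hT
    have hF := ((hm _).1 F.2).1
    have hB := ((hm _).1 B.2).1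
    obtain ⟨rfl, e, _⟩ := approx_eq ((hm _).1 F'.2).1 hF hn'
    have h2 := pRep_ct (coarsens_minReps h (pRep_mem hF k))
    refine ⟨_, ?_, F, h, k, rfl, h2.symm⟩
    apply (pRep_strictMono hB).le_iff_le.1
    rw [h2, ← hp, e]
    exact (pRep_strictMono hF).monotone hnk
  T_congr A B d h := by
    rintro b ⟨F, hFA, n, rfl, hp⟩
    have hA := (hm _).1 A.2
    have hB := (hm _).1 B.2
    have hF := (hm _).1 F.2
    obtain ⟨_, e, e2⟩ := approx_eq hA.1 hB.1 h
    have hFA' := coarsens_iff.1 hFA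
    obtain ⟨F', g1, g2, g3, g4⟩ := amalg1 hB hF (hp.trans e) (fun x hx hxF => by
      rw [mem_minReps, ← e2 x (e ▸ hx)]
      exact mem_minReps.1 (coarsens_minReps hFA hxF))
    refine ⟨⟨F', (hm _).2 g1⟩, g2, n, g4 (fun y hy => ?_), ?_⟩
    · rw [← e2 y (e ▸ hy)]
      exact hFA' y
    · exact g3.trans (hp.trans e)
  T_ne B d b h := by
    obtain ⟨F, h1, n, h2, _⟩ := h
    exact ⟨F, h1, n, h2⟩
  A3 B d b A n hT hAB hb := by
    obtain ⟨F0, _, n', hn', hp⟩ := hT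
    have hA := (hm _).1 A.2
    have hB := (hm _).1 B.2
    obtain ⟨rfl, e, _⟩ := approx_eq ((hm _).1 F0.2).1 hA.1 (hn'.trans hb.symm)
    obtain ⟨A', g1, g2, g3, g4⟩ := amalg2 hA hB (e.symm.trans hp) hAB
    refine ⟨⟨A', (hm _).2 g1⟩, g2, g3, ?_⟩
    rintro F hF ⟨k, hk⟩
    refine g4 F.1 hF ?_
    obtain ⟨_, _, e3⟩ := approx_eq hA.1 ((hm _).1 F.2).1 (hb.trans hk.symm)
    exact fun y hy => (e3 y hy).symm
  fusion A d h := by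
    obtain ⟨C, hC, h2⟩ := fusion_lemma (fun i => (A i).1) d (fun i => (hm _).1 (A i).2) h
    exact ⟨⟨C, (hm _).2 hC⟩, h2⟩
  A4 B n G O h := by
    obtain ⟨A, hA, h1, h2, h3⟩ := a4 hl ((hm _).1 B.2) ((hm _).1 G.2) h n O
    refine ⟨⟨A, (hm _).2 hA⟩, h1, h2, ?_⟩
    rcases h3 with h3 | h3
    · exact Or.inl fun F => h3 F.1 ((hm _).1 F.2)
    · exact Or.inr fun F => h3 F.1 ((hm _).1 F.2)

/-- **Theorem 3.4:** `(𝓔^{P'}_∞, ≤, r)` is a topological Ramsey space. -/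
theorem EPalt'IsTopologicalRamseySpace
    (l : ℕ) (hl : 0 < l) (P : Fin l → Set ℕ)
    (hinf : ∀ i, (P i).Infinite)
    (hdisj : ∀ i j, i ≠ j → Disjoint (P i) (P j))
    (hcov : ⋃ i, P i = Set.univ)
    (hmin : ∀ i j : Fin l, i < j → sInf (P i) < sInf (P j))
    (X : Set ↥(EPalt' l hl P)) :
    (HasBP (EPalt' l hl P) X ↔ IsRamsey (EPalt' l hl P) X) ∧
    (@IsMeagre _ (ellentuckTop (EPalt' l hl P)) X ↔ IsRamseyNull (EPalt' l hl P) X) := by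
  have hex : ∀ y, ∃ i, y ∈ P i := fun y => by
    have : y ∈ ⋃ i, P i := by rw [hcov]; trivial
    exact Set.mem_iUnion.1 this
  choose t ht using hex
  have hty : ∀ y i, y ∈ P i ↔ (t y).val = i.val := by
    intro y i
    constructor
    · intro h
      by_contra hne
      exact Set.disjoint_left.1 (hdisj (t y) i (fun e => hne (by rw [e]))) (ht y) h
    · intro h
      rw [← Fin.ext h]
      exact ht y
  exact (theRS l hl P (fun y => (t y).val) (mem_iff (fun y => (t y).isLt) hty)).main X

end DualRamsey
end

section
/- Let l ≥ 1 and let P = {P_0,…,P_{l−1}} be a partition of ω into infinite sets with min P_i < min P_j whenever i < j. Let E ∈ 𝓔^{P'}_∞, let n < ω, set a = r_n(E), and let 𝓞 be any set of approximations of length n+1 (restrictions r_{n+1}(G) of members G of 𝓔^{P'}_∞). Then there exists F ∈ [a,E] such that either r_{n+1}(G) ∈ 𝓞 for every G ∈ [a,F], or r_{n+1}(G) ∉ 𝓞 for every G ∈ [a,F]. -/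
open Set

namespace DualRamsey

section Ultra

attribute [local instance] Ultrafilter.mul Ultrafilter.semigroup

open Filter

theorem exists_minimal_idem {M : Type*} [Nonempty M] [Semigroup M]
    [TopologicalSpace M] [CompactSpace M] [T2Space M]
    (hc : ∀ r : M, Continuous (· * r)) :
    ∃ w : M, w * w = w ∧ ∀ y z : M, (z * w) * (z * w) = z * w → (y * w) * (z * w) = y * w := by
  let S : Set (Set M) := { N | IsClosed N ∧ N.Nonempty ∧ ∀ m, ∀ x ∈ N, m * x ∈ N }
  obtain ⟨N, hN⟩ : ∃ N', Minimal (· ∈ S) N' := by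
    refine zorn_superset _ fun c hcs hc => ?_
    refine
      ⟨⋂₀ c, ⟨isClosed_sInter fun t ht => (hcs ht).1, ?_, fun m x hx => ?_⟩, fun s hs =>
        Set.sInter_subset_of_mem hs⟩
    · obtain rfl | hcnemp := c.eq_empty_or_nonempty
      · rw [Set.sInter_empty]
        apply Set.univ_nonempty
      convert!
        @IsCompact.nonempty_iInter_of_directed_nonempty_isCompact_isClosed _ _ _ hcnemp.coe_sort
          ((↑) : c → Set M) ?_ ?_ ?_ ?_
      · exact Set.sInter_eq_iInter
      · refine DirectedOn.directed_val (IsChain.directedOn hc.symm)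
      exacts [fun i => (hcs i.prop).2.1, fun i => (hcs i.prop).1.isCompact, fun i => (hcs i.prop).1]
    · rw [Set.mem_sInter]
      exact fun t ht => (hcs ht).2.2 m x (Set.mem_sInter.mp hx t ht)
  obtain ⟨Nc, Nne, Nm⟩ := hN.prop
  have key : ∀ x ∈ N, Set.range (· * x) = N := by
    intro x hx
    apply hN.eq_of_subset
    · refine ⟨(isCompact_range (hc x)).isClosed, ⟨_, x, rfl⟩, ?_⟩
      rintro m _ ⟨y, rfl⟩
      exact ⟨m * y, mul_assoc _ _ _⟩
    · rintro _ ⟨y, rfl⟩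
      exact Nm _ _ hx
  obtain ⟨w, hw, hww⟩ := exists_idempotent_in_compact_subsemigroup hc N Nne Nc.isCompact
    (fun x _ y hy => Nm x y hy)
  refine ⟨w, hww, fun y z hz => ?_⟩
  have h1 : y * w ∈ Set.range (· * (z * w)) := by
    rw [key _ (Nm z w hw)]
    exact Nm y w hw
  obtain ⟨u, hu⟩ := h1
  simp only at hu
  rw [← hu, mul_assoc, hz]

theorem ultra_map_mul {M N : Type*} [Monoid M] [Monoid N] (f : M →* N) (U V : Ultrafilter M) :
    (U * V).map f = U.map f * V.map f := by
  apply Ultrafilter.coe_inj.mp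
  apply Filter.ext'
  intro p
  rw [Ultrafilter.eventually_mul]
  simp only [Ultrafilter.coe_map, Filter.eventually_map, Ultrafilter.eventually_mul, map_mul]

/-- Substitute letter `a` for the variable `none`. -/
def substHom {A : Type*} (a : A) : FreeMonoid (Option A) →* FreeMonoid A :=
  FreeMonoid.map (fun o => o.getD a)

theorem carlson_simpson_step {A : Type*} [Finite A] (X : Set (FreeMonoid A)) :
    ∃ Y : Set (FreeMonoid A), (Y ⊆ X ∨ Y ⊆ Xᶜ) ∧ Y.Nonempty ∧
      ∀ B : Set (FreeMonoid A), B.Finite → B ⊆ Y →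
        ∃ x : FreeMonoid (Option A), ∀ s ∈ B, ∀ a, s * substHom a (FreeMonoid.of none * x) ∈ Y := by
  obtain ⟨w, hw, hmin⟩ := exists_minimal_idem (M := Ultrafilter (FreeMonoid A))
    Ultrafilter.continuous_mul_left
  let ι : FreeMonoid A →* FreeMonoid (Option A) := FreeMonoid.map some
  have hι : ∀ a x, substHom a (ι x) = x := by
    intro a x
    simp only [substHom, ι, FreeMonoid.map_map]
    exact congrArg (fun f : FreeMonoid A →* FreeMonoid A => f x) FreeMonoid.map_id
  let LV : Set (FreeMonoid (Option A)) := Set.range (fun x => FreeMonoid.of none * x)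
  have hLV : ∀ U V : Ultrafilter (FreeMonoid (Option A)), LV ∈ U → LV ∈ U * V := by
    intro U V hU
    change ∀ᶠ m in ↑(U * V), m ∈ LV
    rw [Ultrafilter.eventually_mul]
    filter_upwards [hU] with m hm
    obtain ⟨x, rfl⟩ := hm
    exact Filter.Eventually.of_forall (fun y => ⟨x * y, by simp [mul_assoc]⟩)
  let T : Set (Ultrafilter (FreeMonoid (Option A))) := {U | LV ∈ U} ∩ Set.range (· * w.map ι)
  obtain ⟨V, ⟨hV1, U, hU⟩, hVV⟩ := exists_idempotent_in_compact_subsemigroup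
    (M := Ultrafilter (FreeMonoid (Option A)))
    Ultrafilter.continuous_mul_left T
    ⟨(pure (FreeMonoid.of none) : Ultrafilter _) * w.map ι, (hLV (pure _) (w.map ι) (Ultrafilter.mem_pure.2 ⟨1, mul_one (FreeMonoid.of none)⟩) :), _, rfl⟩
    (((ultrafilter_isClosed_basic LV).inter
      (isCompact_range (Ultrafilter.continuous_mul_left _)).isClosed).isCompact)
    (by
      rintro x ⟨hx, -⟩ y ⟨-, z, rfl⟩
      exact ⟨hLV _ _ hx, x * z, mul_assoc _ _ _⟩)
  simp only at hU
  let e : A → Ultrafilter (FreeMonoid A) := fun a => V.map (substHom a)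
  have he : ∀ a, e a = U.map (substHom a) * w := by
    intro a
    simp only [e, ← hU, ultra_map_mul, Ultrafilter.map_map]
    congr 1
    have : (⇑(substHom a) ∘ ⇑ι) = id := by
      funext x; exact hι a x
    rw [this, Ultrafilter.map_id]
  have hee : ∀ a, e a * e a = e a := by
    intro a
    simp only [e]
    rw [← ultra_map_mul, hVV]
  have heb : ∀ a b, e a * e b = e a := by
    intro a b
    have := hee b
    rw [he b] at this
    rw [he a, he b]
    exact hmin _ _ this
  have hwb : ∀ b, w * e b = w := by
    intro b
    have := hee b
    rw [he b] at this
    have h2 := hmin w _ this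
    rwa [hw, ← he] at h2
  obtain ⟨Z, hZ, hZw⟩ : ∃ Z : Set (FreeMonoid A), (Z ⊆ X ∨ Z ⊆ Xᶜ) ∧ Z ∈ w := by
    rcases Ultrafilter.mem_or_compl_mem w X with h | h
    · exact ⟨X, Or.inl subset_rfl, h⟩
    · exact ⟨Xᶜ, Or.inr subset_rfl, h⟩
  have hev : ∀ (s : FreeMonoid A), (∀ a, ∀ᶠ x in V, s * substHom a x ∈ Z) →
      ∀ᶠ x in V, ∀ a, (s * substHom a x ∈ Z ∧
        ∀ b, ∀ᶠ y in V, (s * substHom a x) * substHom b y ∈ Z) := by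
    intro s hs
    rw [Filter.eventually_all]
    intro a
    refine (hs a).and ?_
    rw [Filter.eventually_all]
    intro b
    have h1 : ∀ᶠ m in ↑(e a * e b), s * m ∈ Z := by
      rw [heb]
      exact hs a
    rw [Ultrafilter.eventually_mul] at h1
    have h2 : ∀ᶠ x in V, ∀ᶠ y in V, s * (substHom a x * substHom b y) ∈ Z := h1
    simpa only [mul_assoc] using h2
  refine ⟨{s | s ∈ Z ∧ ∀ a, ∀ᶠ x in V, s * substHom a x ∈ Z}, ?_, ?_, ?_⟩
  · rcases hZ with h | h
    · exact Or.inl fun s hs => h hs.1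
    · exact Or.inr fun s hs => h hs.1
  · have : ∀ᶠ s in w, s ∈ Z ∧ ∀ a, ∀ᶠ x in V, s * substHom a x ∈ Z := by
      refine Filter.Eventually.and hZw ?_
      rw [Filter.eventually_all]
      intro a
      have h1 : ∀ᶠ m in ↑(w * e a), m ∈ Z := by
        rw [hwb]; exact hZw
      rw [Ultrafilter.eventually_mul] at h1
      exact h1
    exact this.exists
  · intro B hB hBY
    have h1 : ∀ᶠ x in V, ∀ s ∈ B, ∀ a, (s * substHom a x ∈ Z ∧
        ∀ b, ∀ᶠ y in V, (s * substHom a x) * substHom b y ∈ Z) := by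
      rw [Filter.eventually_all_finite hB]
      intro s hs
      exact hev s (hBY hs).2
    obtain ⟨x, hx, y, rfl⟩ := (h1.and hV1).exists
    exact ⟨y, fun s hs a => hx s hs a⟩

end Ultra

theorem carlson_simpson_s7 {A : Type*} [Finite A] (X : Set (List A)) :
    ∃ (Z : ℕ → A ⊕ ℕ) (τ : ℕ → ℕ), StrictMono τ ∧ (∀ i, Z (τ i) = Sum.inr i) ∧
      (∀ t i, Z t = Sum.inr i → τ i ≤ t) ∧
      ((∀ i (f : ℕ → A), (List.range (τ i)).map (fun t => Sum.elim id f (Z t)) ∈ X) ∨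
       (∀ i (f : ℕ → A), (List.range (τ i)).map (fun t => Sum.elim id f (Z t)) ∉ X)) := by
  obtain ⟨Y, hYX, ⟨s0, hs0⟩, hstep⟩ := carlson_simpson_step (A := A) X
  let St := {y : List (A ⊕ ℕ) // ∀ f : ℕ → A, (y.map (Sum.elim id f) : List A) ∈ (Y : Set (List A))}
  have step : ∀ (y : St) (i : ℕ), ∃ z : List (A ⊕ ℕ),
      (∀ k, Sum.inr k ∈ z → k = i) ∧
      ∀ f : ℕ → A, ((y.1 ++ (Sum.inr i :: z)).map (Sum.elim id f) : List A) ∈ (Y : Set (List A)) := by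
    intro y i
    obtain ⟨x, hx⟩ := hstep (Set.range (fun f : ℕ → A => (y.1.map (Sum.elim id f) : List A)))
      (by
        refine (List.finite_length_eq A y.1.length).subset ?_
        rintro _ ⟨f, rfl⟩
        change List.length _ = _
        simp)
      (by rintro _ ⟨f, rfl⟩; exact y.2 f)
    refine ⟨(FreeMonoid.toList x).map (fun o => o.elim (Sum.inr i) Sum.inl), ?_, ?_⟩
    · intro k hk
      rw [List.mem_map] at hk
      obtain ⟨o, -, ho⟩ := hk
      cases o with
      | none => simpa using ho.symm
      | some a => simp at ho
    · intro f
      have := hx _ ⟨f, rfl⟩ (f i)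
      have heq : List.map (Sum.elim id f) (y.1 ++ (Sum.inr i ::
          (FreeMonoid.toList x).map (fun o => o.elim (Sum.inr i) Sum.inl))) =
        List.map (Sum.elim id f) y.1 ++
        List.map (fun o : Option A => o.getD (f i)) (none :: FreeMonoid.toList x) := by
        simp only [List.map_append, List.map_cons, List.map_map]
        congr 2
        apply List.map_congr_left
        intro o _
        cases o <;> rfl
      exact Eq.subst (motive := fun l : List A => l ∈ (Y : Set (List A))) heq.symm this
  choose g hg1 hg2 using step
  let st : ℕ → St := fun i => Nat.rec
    (⟨(FreeMonoid.toList s0).map Sum.inl, by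
      intro f
      have heq : List.map (Sum.elim id f) ((FreeMonoid.toList s0).map Sum.inl) =
          FreeMonoid.toList s0 := by
        rw [List.map_map]
        exact List.map_id _
      exact Eq.subst (motive := fun l : List A => l ∈ (Y : Set (List A))) heq.symm hs0⟩ : St)
    (fun i y => ⟨y.1 ++ (Sum.inr i :: g y i), hg2 y i⟩) i
  have hst : ∀ i, (st (i+1)).1 = (st i).1 ++ (Sum.inr i :: g (st i) i) := fun i => rfl
  have hmono : StrictMono (fun i => (st i).1.length) := by
    apply strictMono_nat_of_lt_succ
    intro i
    simp [hst]
  have hpre : ∀ i j, i ≤ j → (st i).1 <+: (st j).1 := by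
    intro i j hij
    induction j, hij using Nat.le_induction with
    | base => exact List.prefix_rfl
    | succ j _ ih => exact ih.trans (by rw [hst]; exact List.prefix_append _ _)
  have hlt : ∀ t, t < (st (t+1)).1.length := fun t => hmono.le_apply (x := t+1)
  have hinr : ∀ i k, Sum.inr k ∈ (st i).1 → k < i := by
    intro i
    induction i with
    | zero =>
      intro k hk
      simp [st] at hk
    | succ i ih =>
      intro k hk
      rw [hst, List.mem_append, List.mem_cons] at hk
      rcases hk with h | h | h
      · exact (ih k h).trans (Nat.lt_succ_self i)
      · have : k = i := by simpa using h
        omega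
      · have := hg1 _ _ _ h
        omega
  let Z : ℕ → A ⊕ ℕ := fun t => (st (t+1)).1[t]'(hlt t)
  have hZ : ∀ i t (h : t < (st i).1.length), (st i).1[t] = Z t := by
    intro i t h
    rcases le_total i (t+1) with h1 | h1
    · exact (hpre _ _ h1).getElem h
    · exact ((hpre _ _ h1).getElem (hlt t)).symm
  refine ⟨Z, fun i => (st i).1.length, hmono, ?_, ?_, ?_⟩
  · intro i
    have h : (st i).1.length < (st (i+1)).1.length := hmono (Nat.lt_succ_self i)
    rw [← hZ (i+1) _ h]
    simp [hst]
  · intro t i h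
    by_contra! hcon
    have h1 := hZ i t hcon
    rw [h] at h1
    have := hinr i i (h1 ▸ List.getElem_mem hcon)
    omega
  · have hfin : ∀ i (f : ℕ → A), (List.range (st i).1.length).map (fun t => Sum.elim id f (Z t)) ∈
        (Y : Set (List A)) := by
      intro i f
      convert (st i).2 f using 1
      apply List.ext_getElem
      · simp
      · intro t h1 h2
        simp only [List.length_map] at h2
        simp [hZ i t h2]
    rcases hYX with h | h
    · exact Or.inl fun i f => h (hfin i f)
    · exact Or.inr fun i f => h (hfin i f)

def IsEnum (E : Setoid ℕ) (c m : ℕ → ℕ) : Prop :=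
  StrictMono m ∧ (∀ j, c (m j) = j) ∧ (∀ x, m (c x) ≤ x) ∧ ∀ x y, E.r x y ↔ c x = c y

theorem IsEnum.minReps_eq {E : Setoid ℕ} {c m : ℕ → ℕ} (h : IsEnum E c m) :
    minReps E = Set.range m := by
  obtain ⟨h1, h2, h3, h4⟩ := h
  ext x
  constructor
  · intro hx
    exact ⟨c x, le_antisymm (h3 x) (hx _ ((h4 _ _).2 (h2 _).symm))⟩
  · rintro ⟨j, rfl⟩ y hy
    have := (h4 _ _).1 hy
    rw [h2] at this
    rw [this]
    exact h3 y

theorem IsEnum.pRep_eq {E : Setoid ℕ} {c m : ℕ → ℕ} (h : IsEnum E c m) : pRep E = m := by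
  have h0 := h.minReps_eq
  have hinf : (Set.ofPred (· ∈ minReps E)).Infinite := by
    change (minReps E).Infinite
    rw [h0]
    exact Set.infinite_range_of_injective h.1.injective
  have : StrictMono (pRep E) := Nat.nth_strictMono hinf
  refine (StrictMono.range_inj this h.1).1 ?_
  rw [← h0]
  exact Nat.range_nth_of_infinite hinf

theorem IsEnum.infinite {E : Setoid ℕ} {c m : ℕ → ℕ} (h : IsEnum E c m) :
    (classes E).Infinite := by
  refine Set.infinite_of_injective_forall_mem (f := fun j => {y | E.r (m j) y}) ?_ ?_
  · intro i j hij
    have h1 : m j ∈ {y | E.r (m i) y} := by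
      simp only at hij
      rw [hij]
      exact E.iseqv.refl _
    have := (h.2.2.2 _ _).1 h1
    rwa [h.2.1, h.2.1] at this
  · intro j
    exact ⟨m j, rfl⟩

theorem exists_minRep (E : Setoid ℕ) (x : ℕ) : ∃ y ∈ minReps E, E.r y x ∧ y ≤ x := by
  classical
  have hex : ∃ y, E.r y x := ⟨x, E.iseqv.refl x⟩
  refine ⟨Nat.find hex, ?_, Nat.find_spec hex, Nat.find_min' hex (E.iseqv.refl x)⟩
  intro z hz
  exact Nat.find_min' hex (E.iseqv.trans (E.iseqv.symm hz) (Nat.find_spec hex))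

theorem exists_isEnum {E : Setoid ℕ} (hE : (classes E).Infinite) :
    ∃ c, IsEnum E c (pRep E) := by
  have hinf : (minReps E).Infinite := by
    intro hfin
    apply hE
    refine (hfin.image (fun x => {y | E.r x y})).subset ?_
    rintro _ ⟨x, rfl⟩
    obtain ⟨y, hy, hyx, -⟩ := exists_minRep E x
    refine ⟨y, hy, ?_⟩
    ext z
    exact ⟨fun h => E.iseqv.trans (E.iseqv.symm hyx) h, fun h => E.iseqv.trans hyx h⟩
  have hinf' : (Set.ofPred (· ∈ minReps E)).Infinite := hinf
  have hm : StrictMono (pRep E) := Nat.nth_strictMono hinf'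
  have hr : Set.range (pRep E) = minReps E := Nat.range_nth_of_infinite hinf'
  have hmem : ∀ j, pRep E j ∈ minReps E := fun j => hr ▸ Set.mem_range_self j
  have hex : ∀ x, ∃ j, E.r (pRep E j) x ∧ pRep E j ≤ x := by
    intro x
    obtain ⟨y, hy, h1, h2⟩ := exists_minRep E x
    rw [← hr] at hy
    obtain ⟨j, rfl⟩ := hy
    exact ⟨j, h1, h2⟩
  have huniq : ∀ i j, E.r (pRep E i) (pRep E j) → i = j := by
    intro i j h
    exact hm.injective (le_antisymm (hmem i _ h) (hmem j _ (E.iseqv.symm h)))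
  choose c hc1 hc2 using hex
  refine ⟨c, hm, fun j => huniq _ _ (hc1 _), hc2, fun x y => ⟨fun h => ?_, fun h => ?_⟩⟩
  · exact huniq _ _ (E.iseqv.trans (hc1 x) (E.iseqv.trans h (E.iseqv.symm (hc1 y))))
  · have := hc1 x
    rw [h] at this
    exact E.iseqv.trans (E.iseqv.symm this) (hc1 y)

theorem IsEnum.mem_iff {E : Setoid ℕ} {c m : ℕ → ℕ} (h : IsEnum E c m)
    (l : ℕ) (hl : 0 < l) (P : Fin l → Set ℕ) (q : ℕ → Fin l) (hq : ∀ y i, y ∈ P i ↔ q y = i) :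
    E ∈ EPalt' l hl P ↔ (∀ k, (q (m k) : ℕ) = k % l) ∧ ∀ y, c y % l ≤ (q y : ℕ) := by
  have hp := h.pRep_eq
  have hr := h.minReps_eq
  obtain ⟨h1, h2, h3, h4⟩ := id h
  have e1 : (∀ k, (q (m k) : ℕ) = k % l) ↔ E ∈ EPalt l hl P := by
    constructor
    · intro hk
      refine ⟨h.infinite, fun k => ?_⟩
      rw [hq, hp]
      exact Fin.ext (hk k)
    · intro hE k
      have := hE.2 k
      rw [hq, hp] at this
      rw [this]
  constructor
  · rintro ⟨hE, hE'⟩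
    have hk := e1.2 hE
    refine ⟨hk, fun y => ?_⟩
    obtain ⟨j, hj, hyj⟩ := hE' (m (c y)) (hr ▸ Set.mem_range_self _) (q (m (c y))) ((hq _ _).2 rfl)
      y ((h4 _ _).2 (h2 _))
    rw [hq] at hyj
    rw [← hk, hyj]
    exact hj
  · rintro ⟨hk, hc⟩
    refine ⟨e1.1 hk, ?_⟩
    intro x hx i hxi y hxy
    rw [hr] at hx
    obtain ⟨j, rfl⟩ := hx
    refine ⟨q y, ?_, (hq _ _).2 rfl⟩
    have e := (h4 _ _).1 hxy
    rw [h2] at e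
    rw [hq] at hxi
    have := hc y
    rw [← e, ← hk, hxi] at this
    exact this

theorem le_of_range {m m' : ℕ → ℕ} (hm : StrictMono m) (hm' : StrictMono m') (n : ℕ)
    (h : ∀ k < n, m k ∈ Set.range m') : ∀ k < n, m' k ≤ m k := by
  have key : ∀ k < n, ∀ j, m' j = m k → k ≤ j := by
    intro k
    induction k with
    | zero => intros; omega
    | succ k ih =>
      intro hk j hj
      obtain ⟨i, hi⟩ := h k (by omega)
      have h1 := ih (by omega) i hi
      have h2 : m' i < m' j := by
        rw [hi, hj]
        exact hm (Nat.lt_succ_self k)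
      have := hm'.lt_iff_lt.1 h2
      omega
  intro k hk
  obtain ⟨j, hj⟩ := h k hk
  rw [← hj]
  exact hm'.monotone (key k hk j hj)

theorem IsEnum.mem_minReps_iff {E : Setoid ℕ} {c m : ℕ → ℕ} (h : IsEnum E c m) (x : ℕ) :
    x ∈ Set.range m ↔ ∀ y < x, c y ≠ c x := by
  rw [← h.minReps_eq]
  constructor
  · intro hx y hy hc
    have := hx y ((h.2.2.2 _ _).2 hc.symm)
    omega
  · intro hx y hy
    by_contra! hlt
    exact hx y hlt ((h.2.2.2 _ _).1 hy).symm

theorem approx_eq_enum {E G : Setoid ℕ} {c m c' m' : ℕ → ℕ} (hE : IsEnum E c m)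
    (hG : IsEnum G c' m') {n n' : ℕ} (h : approx n' G = approx n E) :
    n' = n ∧ (∀ k ≤ n, m' k = m k) ∧ ∀ x < m n, c' x = c x := by
  have hmem : ∀ x y, (x < m' n' ∧ y < m' n' ∧ c' x = c' y) ↔ (x < m n ∧ y < m n ∧ c x = c y) := by
    intro x y
    have := Set.ext_iff.1 h (x, y)
    simp only [approx, Set.mem_ofPred_eq, hE.pRep_eq, hG.pRep_eq] at this
    rw [← hE.2.2.2, ← hG.2.2.2]
    exact this
  have hN : m' n' = m n := by
    apply eq_of_forall_lt_iff
    intro x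
    have := hmem x x
    simpa using this
  have hcc : ∀ x < m n, ∀ y < m n, (c' x = c' y ↔ c x = c y) := by
    intro x hx y hy
    have := hmem x y
    rw [hN] at this
    simpa [hx, hy] using this
  have hr : ∀ x < m n, (x ∈ Set.range m' ↔ x ∈ Set.range m) := by
    intro x hx
    rw [hE.mem_minReps_iff, hG.mem_minReps_iff]
    refine forall₂_congr fun y hy => ?_
    exact not_congr (hcc y (hy.trans hx) x hx)
  have h1 : ∀ k < n, m' k ≤ m k := by
    refine le_of_range hE.1 hG.1 n fun k hk => ?_
    exact (hr _ (hE.1 hk)).2 ⟨k, rfl⟩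
  have h2 : ∀ k < n', m k ≤ m' k := by
    refine le_of_range hG.1 hE.1 n' fun k hk => ?_
    exact (hr _ (hN ▸ hG.1 hk)).1 ⟨k, rfl⟩
  have h3 : ∀ k, k < n ↔ k < n' := by
    intro k
    constructor
    · intro hk
      apply hG.1.lt_iff_lt.1
      rw [hN]
      exact (h1 k hk).trans_lt (hE.1 hk)
    · intro hk
      apply hE.1.lt_iff_lt.1
      rw [← hN]
      exact (h2 k hk).trans_lt (hG.1 hk)
  have hn : n' = n := (eq_of_forall_lt_iff h3).symm
  subst hn
  have h4 : ∀ k ≤ n', m' k = m k := by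
    intro k hk
    rcases hk.lt_or_eq with h | rfl
    · exact le_antisymm (h1 k h) (h2 k h)
    · exact hN
  refine ⟨rfl, h4, fun x hx => ?_⟩
  have hk : c x < n' := hE.1.lt_iff_lt.1 ((hE.2.2.1 x).trans_lt hx)
  have h5 := (hcc x hx (m (c x)) ((hE.2.2.1 x).trans_lt hx)).2 (hE.2.1 _).symm
  rw [h5, ← h4 _ hk.le, hG.2.1]

/-- **Pigeonhole (axiom A.4) for `𝓔^{P'}_∞`.** -/
theorem EPalt'Pigeonhole
    (l : ℕ) (hl : 0 < l) (P : Fin l → Set ℕ)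
    (hinf : ∀ i, (P i).Infinite)
    (hdisj : ∀ i j, i ≠ j → Disjoint (P i) (P j))
    (hcov : ⋃ i, P i = Set.univ)
    (hmin : ∀ i j : Fin l, i < j → sInf (P i) < sInf (P j))
    (E : ↥(EPalt' l hl P)) (n : ℕ)
    (O : Set (Set (ℕ × ℕ)))
    (hO : O ⊆ {b | ∃ G ∈ EPalt' l hl P, b = approx (n + 1) G}) :
    ∃ F ∈ basicSet (EPalt' l hl P) (approx n E.1) E,
      (∀ G ∈ basicSet (EPalt' l hl P) (approx n E.1) F, approx (n + 1) G.1 ∈ O) ∨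
      (∀ G ∈ basicSet (EPalt' l hl P) (approx n E.1) F, approx (n + 1) G.1 ∉ O) := by
  have hq0 : ∀ y, ∃ i, y ∈ P i := fun y => by
    have : y ∈ ⋃ i, P i := hcov ▸ Set.mem_univ y
    exact Set.mem_iUnion.1 this
  choose q hq1 using hq0
  have hq : ∀ y i, y ∈ P i ↔ q y = i := by
    intro y i
    constructor
    · intro h
      by_contra hne
      exact Set.disjoint_left.1 (hdisj _ _ hne) (hq1 y) h
    · rintro rfl
      exact hq1 y
  obtain ⟨E, hEmem⟩ := E
  obtain ⟨c, hE⟩ := exists_isEnum hEmem.1.1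
  obtain ⟨m, hmdef⟩ : ∃ m, m = pRep E := ⟨_, rfl⟩
  rw [← hmdef] at hE
  obtain ⟨hqm, hqc⟩ := (hE.mem_iff l hl P q hq).1 hEmem
  let A := {f : Fin l → Fin (n+1) // ∀ r, (f r : ℕ) % l ≤ (n + 1 + r) % l}
  let tt : ℕ → ℕ := fun k => (k - (n+1)) / l
  let rr : ℕ → Fin l := fun k => ⟨(k - (n+1)) % l, Nat.mod_lt _ hl⟩
  have htt : ∀ t (r : Fin l), tt (n+1+(t*l+r)) = t := by
    intro t r
    simp only [tt]
    rw [Nat.add_sub_cancel_left, mul_comm, Nat.mul_add_div hl, Nat.div_eq_of_lt r.2, add_zero]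
  have hrr : ∀ t (r : Fin l), rr (n+1+(t*l+r)) = r := by
    intro t r
    apply Fin.ext
    simp only [rr]
    rw [Nat.add_sub_cancel_left, mul_comm, Nat.mul_add_mod, Nat.mod_eq_of_lt r.2]
  have hdec : ∀ k, ¬ k ≤ n → ∃ t, ∃ r : Fin l, k = n+1+(t*l+r) := by
    intro k hk
    refine ⟨(k-(n+1))/l, ⟨(k - (n+1)) % l, Nat.mod_lt _ hl⟩, ?_⟩
    have := Nat.div_add_mod' (k-(n+1)) l
    simp only
    omega
  have hmod : ∀ t (r : Fin l), (n+1+(t*l+r)) % l = (n+1+r) % l := by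
    intro t r
    rw [show n+1+(t*l+r) = n+1+r+t*l by ring, Nat.add_mul_mod_self_right]
  have hnle : ∀ x, ¬ (n + 1 + x ≤ n) := by intro x; omega
  let χ : List A → ℕ → ℕ := fun w k =>
    if k ≤ n then k else ((w[tt k]?).map (fun f => (f.1 (rr k) : ℕ))).getD 0
  let D : List A → Set (ℕ × ℕ) := fun w =>
    {p | p.1 < m (n+1+w.length*l) ∧ p.2 < m (n+1+w.length*l) ∧ χ w (c p.1) = χ w (c p.2)}
  obtain ⟨Z, τ, hτ, hZτ, hτZ, hmono⟩ := carlson_simpson_s7 (A := A) {w | D w ∈ O}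
  let ψ : ℕ → ℕ := fun k => if k ≤ n then k else
    Sum.elim (fun a : A => (a.1 (rr k) : ℕ)) (fun i => n+1+(i*l+rr k)) (Z (tt k))
  let M : ℕ → ℕ := fun j => if j ≤ n then j else n+1+(τ (tt j)*l+rr j)
  have hψ1 : ∀ k ≤ n, ψ k = k := fun k hk => if_pos hk
  have hψ2 : ∀ t (r : Fin l), ψ (n+1+(t*l+r)) =
      Sum.elim (fun a : A => (a.1 r : ℕ)) (fun i => n+1+(i*l+r)) (Z t) := by
    intro t r
    simp only [ψ]
    rw [if_neg (hnle _), htt, hrr]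
  have hM1 : ∀ k ≤ n, M k = k := fun k hk => if_pos hk
  have hM2 : ∀ i (r : Fin l), M (n+1+(i*l+r)) = n+1+(τ i*l+r) := by
    intro t r
    simp only [M]
    rw [if_neg (hnle _), htt, hrr]
  have hMψ : ∀ k, M (ψ k) ≤ k := by
    intro k
    by_cases hk : k ≤ n
    · rw [hψ1 k hk, hM1 k hk]
    · obtain ⟨t, r, rfl⟩ := hdec k hk
      rw [hψ2]
      rcases hz : Z t with a | i
      · simp only [Sum.elim_inl]
        have := (a.1 r).2
        rw [hM1 _ (by omega)]
        omega
      · simp only [Sum.elim_inr]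
        rw [hM2]
        have := Nat.mul_le_mul_right l (hτZ t i hz)
        omega
  have hψM : ∀ j, ψ (M j) = j := by
    intro j
    by_cases hj : j ≤ n
    · rw [hM1 j hj, hψ1 j hj]
    · obtain ⟨i, r, rfl⟩ := hdec j hj
      rw [hM2, hψ2, hZτ]
      rfl
  have hMmono : StrictMono M := by
    intro j j' hjj
    by_cases hj' : j' ≤ n
    · rw [hM1 j' hj', hM1 j (by omega)]
      exact hjj
    · obtain ⟨i', r', rfl⟩ := hdec j' hj'
      rw [hM2]
      by_cases hj : j ≤ n
      · rw [hM1 j hj]; omega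
      · obtain ⟨i, r, rfl⟩ := hdec j hj
        rw [hM2]
        have hr := r.2
        have hr' := r'.2
        rcases lt_trichotomy i i' with h | h | h
        · have := Nat.mul_le_mul_right l (Nat.succ_le_of_lt (hτ h))
          rw [Nat.succ_mul] at this
          omega
        · subst h
          omega
        · have := Nat.mul_le_mul_right l (Nat.succ_le_of_lt h)
          rw [Nat.succ_mul] at this
          omega
  have hMmod : ∀ j, M j % l = j % l := by
    intro j
    by_cases hj : j ≤ n
    · rw [hM1 j hj]
    · obtain ⟨i, r, rfl⟩ := hdec j hj
      rw [hM2, hmod, hmod]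
  have hψmod : ∀ k, ψ k % l ≤ k % l := by
    intro k
    by_cases hk : k ≤ n
    · rw [hψ1 k hk]
    · obtain ⟨t, r, rfl⟩ := hdec k hk
      rw [hψ2]
      rcases hz : Z t with a | i
      · simp only [Sum.elim_inl]
        rw [hmod]
        exact a.2 r
      · simp only [Sum.elim_inr]
        rw [hmod, hmod]
  let F : Setoid ℕ := Setoid.ker (fun x => ψ (c x))
  have hF : IsEnum F (fun x => ψ (c x)) (fun j => m (M j)) := by
    refine ⟨hE.1.comp hMmono, fun j => ?_, fun x => ?_, fun x y => Iff.rfl⟩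
    · simp only
      rw [hE.2.1, hψM]
    · exact (hE.1.monotone (hMψ _)).trans (hE.2.2.1 x)
  have hFmem : F ∈ EPalt' l hl P := by
    rw [hF.mem_iff l hl P q hq]
    refine ⟨fun k => ?_, fun y => (hψmod _).trans (hqc y)⟩
    rw [hqm, hMmod]
  have hFE : Coarsens F E := by
    intro x y hxy
    change ψ (c x) = ψ (c y)
    rw [(hE.2.2.2 _ _).1 hxy]
  have hFa : approx n F = approx n E := by
    have hlt : ∀ x < m n, ψ (c x) = c x := by
      intro x hx
      exact hψ1 _ (hE.1.lt_iff_lt.1 ((hE.2.2.1 x).trans_lt hx)).le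
    ext ⟨x, y⟩
    simp only [approx, Set.mem_ofPred_eq, hE.pRep_eq, hF.pRep_eq, hM1 n le_rfl]
    refine and_congr_right fun hx => and_congr_right fun hy => ?_
    rw [hE.2.2.2, hF.2.2.2]
    simp only
    rw [hlt x hx, hlt y hy]
  -- the key computation
  have key : ∀ G : ↥(EPalt' l hl P), G ∈ basicSet (EPalt' l hl P) (approx n E) ⟨F, hFmem⟩ →
      ∃ i, ∃ f : ℕ → A, approx (n+1) G.1 =
        D ((List.range (τ i)).map (fun t => Sum.elim id f (Z t))) := by
    rintro ⟨G, hGmem⟩ ⟨hGF, n', hGa⟩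
    simp only at hGF hGa ⊢
    obtain ⟨c', hG⟩ := exists_isEnum hGmem.1.1
    obtain ⟨m', hm'⟩ : ∃ m', m' = pRep G := ⟨_, rfl⟩
    rw [← hm'] at hG
    obtain ⟨hqm', hqc'⟩ := (hG.mem_iff l hl P q hq).1 hGmem
    obtain ⟨rfl, hmm, hcc⟩ := approx_eq_enum hE hG hGa
    have hK : m' (n'+1) ∈ Set.range (fun j => m (M j)) := by
      rw [← hF.minReps_eq]
      have h1 : m' (n'+1) ∈ minReps G := by rw [hG.minReps_eq]; exact ⟨_, rfl⟩
      exact fun y hy => h1 y (hGF _ _ hy)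
    obtain ⟨J, hJ⟩ := hK
    simp only at hJ
    have hJn : ¬ J ≤ n' := by
      intro hle
      rw [hM1 J hle, ← hmm J hle] at hJ
      have := hG.1.injective hJ
      omega
    obtain ⟨i, r, rfl⟩ := hdec J hJn
    have hr0 : (r : ℕ) = 0 := by
      have h1 := hqm' (n'+1)
      rw [← hJ, hqm, hMmod, hmod] at h1
      have h2 : (n'+1+r) ≡ (n'+1+0) [MOD l] := h1
      have h3 := Nat.ModEq.add_left_cancel' _ h2
      have h4 : (r : ℕ) % l = 0 % l := h3
      rwa [Nat.mod_eq_of_lt r.2, Nat.zero_mod] at h4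
    have hKi : m' (n'+1) = m (n'+1+τ i*l) := by
      rw [← hJ, hM2, hr0, add_zero]
    have hθ : ∀ j, j < n'+1+(i*l+r) → c' (m (M j)) < n'+1 := by
      intro j hj
      apply hG.1.lt_iff_lt.1
      refine (hG.2.2.1 _).trans_lt ?_
      rw [← hJ]
      exact hE.1 (hMmono hj)
    have hθ1 : ∀ j ≤ n', c' (m (M j)) = j := by
      intro j hj
      rw [hM1 j hj, ← hmm j hj, hG.2.1]
    have hcθ : ∀ x, c' x = c' (m (M (ψ (c x)))) := by
      intro x
      apply (hG.2.2.2 _ _).1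
      apply hGF
      change ψ (c x) = ψ (c (m (M (ψ (c x)))))
      rw [hE.2.1, hψM]
    let f : ℕ → A := fun i' => ⟨fun s =>
      if h : n'+1+(i'*l+s) < n'+1+(i*l+r) then ⟨c' (m (M (n'+1+(i'*l+s)))), hθ _ h⟩ else 0, by
        intro s
        simp only
        split_ifs with h
        · refine (hqc' _).trans ?_
          rw [hqm, hMmod, hmod]
        · simp⟩
    refine ⟨i, f, ?_⟩
    have hχ : ∀ x < m (n'+1+τ i*l),
        c' x = χ ((List.range (τ i)).map (fun t => Sum.elim id f (Z t))) (c x) := by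
      intro x hx
      rw [hcθ]
      have hcx : c x < n'+1+τ i*l := hE.1.lt_iff_lt.1 ((hE.2.2.1 x).trans_lt hx)
      generalize c x = k at hcx
      by_cases hk : k ≤ n'
      · rw [hψ1 k hk, hθ1 k hk]
        simp only [χ]
        rw [if_pos hk]
      · obtain ⟨t, s, rfl⟩ := hdec k hk
        have ht : t < τ i := by
          by_contra! hle
          have := Nat.mul_le_mul_right l hle
          omega
        simp only [χ]
        rw [if_neg (hnle _), htt, hrr, hψ2, List.getElem?_map, List.getElem?_range ht]
        simp only [Option.map_some, Option.getD_some]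
        rcases hz : Z t with a | i'
        · simp only [Sum.elim_inl, id]
          exact hθ1 _ (Nat.lt_succ_iff.1 (a.1 s).2)
        · simp only [Sum.elim_inr]
          have hi : i' < i := hτ.lt_iff_lt.1 ((hτZ _ _ hz).trans_lt ht)
          have hlt : n'+1+(i'*l+s) < n'+1+(i*l+r) := by
            have := Nat.mul_le_mul_right l (Nat.succ_le_of_lt hi)
            rw [Nat.succ_mul] at this
            have := s.2
            omega
          simp only [f]
          rw [dif_pos hlt]
    ext ⟨x, y⟩
    simp only [approx, D, Set.mem_ofPred_eq, hG.pRep_eq, List.length_map, List.length_range, hKi]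
    refine and_congr_right fun hx => and_congr_right fun hy => ?_
    rw [hG.2.2.2, hχ x hx, hχ y hy]
  refine ⟨⟨F, hFmem⟩, ⟨hFE, n, hFa⟩, ?_⟩
  rcases hmono with h | h
  · left
    intro G hG
    obtain ⟨i, f, hif⟩ := key G hG
    rw [hif]
    exact h i f
  · right
    intro G hG
    obtain ⟨i, f, hif⟩ := key G hG
    rw [hif]
    exact h i f

end DualRamsey
end

section
/- Let l ≥ 1 and let P = {P_0,…,P_{l−1}} be a partition of ω into infinite sets with min P_i < min P_j whenever i < j. For every finite Souslin measurable colouring c of 𝓔^{P'}_∞ and every E ∈ 𝓔^{P'}_∞, there exists F ∈ 𝓔^{P'}_∞ with F ≤ E such that c is constant on 𝓔^{P'}_∞ ↾ F = {F' ∈ 𝓔^{P'}_∞ : F' ≤ F}. -/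
open Set

namespace DualRamsey

/-! ### Abstract Ellentuck theory in a monoid with a decreasing sequence of submonoids -/
section Abstract
variable {M : Type*} [Monoid M]

/-- hereditary families of conditions -/
def Hered (N : ℕ → Submonoid M) (D : ℕ → M → Prop) : Prop :=
  ∀ k A, D k A → ∀ h ∈ N k, D k (h * A)

def Dense' (N : ℕ → Submonoid M) (D : ℕ → M → Prop) : Prop :=
  ∀ k A, ∃ g ∈ N k, D k (g * A)

/-- fusion property -/
def Fusion (N : ℕ → Submonoid M) : Prop :=
  ∀ D : ℕ → M → Prop, Hered N D → Dense' N D → ∀ k A, ∃ g ∈ N k, ∀ h ∈ N k, ∀ k' ≥ k,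
    D k' (h * (g * A))

/-- pigeonhole property -/
def Pigeon (N : ℕ → Submonoid M) : Prop :=
  ∀ k (χ : M → Prop), (∀ h ∈ N k, ∀ h' ∈ N (k+1), (χ (h' * h) ↔ χ h)) →
    ∃ g ∈ N k, (∀ h ∈ N k, χ (h * g)) ∨ (∀ h ∈ N k, ¬ χ (h * g))

def Rams (N : ℕ → Submonoid M) (X : Set M) : Prop :=
  ∀ k A, ∃ g ∈ N k, (∀ h ∈ N k, h * (g * A) ∈ X) ∨ (∀ h ∈ N k, h * (g * A) ∉ X)

def RNull (N : ℕ → Submonoid M) (X : Set M) : Prop :=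
  ∀ k A, ∃ g ∈ N k, ∀ h ∈ N k, h * (g * A) ∉ X

def MOpen (N : ℕ → Submonoid M) (X : Set M) : Prop :=
  ∀ A ∈ X, ∃ n, ∀ h ∈ N n, h * A ∈ X

variable {N : ℕ → Submonoid M}

theorem rams_of_open (hN : Antitone N) (hF : Fusion N) (hP : Pigeon N) {X : Set M}
    (hX : MOpen N X) : Rams N X := by
  set acc : ℕ → M → Prop := fun k A => ∀ h ∈ N k, h * A ∈ X with hacc
  set rej : ℕ → M → Prop := fun k A => ∀ g ∈ N k, ¬ acc k (g * A) with hrej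
  have accH : Hered N acc := by
    intro k A h g hg g' hg'
    rw [← mul_assoc]; exact h _ ((N k).mul_mem hg' hg)
  have rejH : Hered N rej := by
    intro k A h g hg g' hg'
    rw [← mul_assoc]; exact h _ ((N k).mul_mem hg' hg)
  have not_both : ∀ k A, acc k A → rej k A → False := by
    intro k A h1 h2
    exact h2 1 (N k).one_mem (by rw [one_mul]; exact h1)
  have H1 : ∀ k A, ∃ g ∈ N k, ∀ h ∈ N k, ∀ k' ≥ k,
      (acc k' (h * (g * A)) ∨ rej k' (h * (g * A))) := by
    apply hF (fun k A => acc k A ∨ rej k A)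
    · intro k A h g hg
      exact h.imp (fun h => accH k A h g hg) (fun h => rejH k A h g hg)
    · intro k A
      by_cases h : rej k A
      · exact ⟨1, (N k).one_mem, Or.inr (by rwa [one_mul])⟩
      · simp only [hrej, not_forall, not_not] at h
        obtain ⟨g, hg, h⟩ := h
        exact ⟨g, hg, Or.inl h⟩
  have H2 : ∀ k A, ∃ g ∈ N k, ∀ h ∈ N k, ∀ k' ≥ k,
      (acc k' (h * (g * A)) ∨ (rej k' (h * (g * A)) ∧
        ∀ h' ∈ N k', rej (k'+1) (h' * (h * (g * A))))) := by
    apply hF (fun k A => acc k A ∨ (rej k A ∧ ∀ h' ∈ N k, rej (k+1) (h' * A)))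
    · intro k A h g hg
      refine h.imp (fun h => accH k A h g hg) (fun h => ⟨rejH k A h.1 g hg, ?_⟩)
      intro h' hh'
      rw [← mul_assoc]; exact h.2 _ ((N k).mul_mem hh' hg)
    · intro k A
      obtain ⟨g, hg, h⟩ := H1 k A
      have hk := h 1 (N k).one_mem k le_rfl
      rw [one_mul] at hk
      rcases hk with hk | hk
      · exact ⟨g, hg, Or.inl hk⟩
      obtain ⟨g', hg', h'⟩ := hP k (fun x => acc (k+1) (x * (g * A))) (by
        intro x hx y hy
        constructor
        · intro h1
          rcases h x hx (k+1) (Nat.le_succ k) with h2 | h2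
          · exact h2
          · exact (h2 y hy (by rwa [← mul_assoc])).elim
        · intro h1
          rw [mul_assoc]; exact accH _ _ h1 y hy)
      refine ⟨g' * g, (N k).mul_mem hg' hg, Or.inr ?_⟩
      have hr : rej k (g' * g * A) := by
        rw [mul_assoc]; exact rejH _ _ hk g' hg'
      refine ⟨hr, ?_⟩
      rcases h' with h' | h'
      · exfalso
        refine not_both k _ ?_ hr
        intro x hx
        have := h' x hx 1 (N _).one_mem
        rw [one_mul] at this
        rw [mul_assoc g', ← mul_assoc]; exact this
      · intro x hx
        have e : x * (g' * g * A) = x * g' * (g * A) := by simp only [mul_assoc]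
        rw [e]
        exact (h (x * g') ((N k).mul_mem hx hg') (k+1) (Nat.le_succ k)).resolve_left (h' x hx)
  intro k A
  obtain ⟨g, hg, h⟩ := H2 k A
  refine ⟨g, hg, ?_⟩
  by_cases ha : acc k (g * A)
  · exact Or.inl ha
  right
  have key : ∀ n, ∀ x ∈ N k, rej (k + n) (x * (g * A)) := by
    intro n
    induction n with
    | zero =>
      intro x hx
      have := h 1 (N k).one_mem k le_rfl
      rw [one_mul] at this
      exact rejH _ _ (this.resolve_left ha).1 x hx
    | succ n ih =>
      intro x hx
      rcases h x hx (k+n) (Nat.le_add_right _ _) with h1 | h1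
      · exact (not_both _ _ h1 (ih x hx)).elim
      · have := h1.2 1 (N _).one_mem
        rwa [one_mul] at this
  intro x hx hxX
  obtain ⟨n, hn⟩ := hX _ hxX
  exact not_both (k+n) _ (fun y hy => hn y (hN (Nat.le_add_left n k) hy)) (key n x hx)

theorem Rams.compl {X : Set M} (h : Rams N X) : Rams N Xᶜ := by
  intro k A
  obtain ⟨g, hg, h⟩ := h k A
  refine ⟨g, hg, h.symm.imp (fun h => h) (fun h x hx hx' => hx' (h x hx))⟩

theorem Rams.union {X Y : Set M} (h : Rams N X) (h' : Rams N Y) : Rams N (X ∪ Y) := by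
  intro k A
  obtain ⟨g, hg, h⟩ := h k A
  obtain ⟨g', hg', h'⟩ := h' k (g * A)
  refine ⟨g' * g, (N k).mul_mem hg' hg, ?_⟩
  rcases h with h | h
  · left
    intro x hx
    left
    have := h (x * g') ((N k).mul_mem hx hg')
    simpa only [mul_assoc] using this
  · rcases h' with h' | h'
    · left
      intro x hx
      right
      simpa only [mul_assoc] using h' x hx
    · right
      intro x hx
      have h1 := h (x * g') ((N k).mul_mem hx hg')
      have h2 := h' x hx
      simp only [mul_assoc] at h1 h2 ⊢
      rintro (h3 | h3)
      · exact h1 h3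
      · exact h2 h3

theorem Rams.inter {X Y : Set M} (h : Rams N X) (h' : Rams N Y) : Rams N (X ∩ Y) := by
  have := (h.compl.union h'.compl).compl
  rwa [← Set.compl_inter, compl_compl] at this

theorem dense_finite {D : ℕ → ℕ → M → Prop} (hH : ∀ n, Hered N (D n)) (hD : ∀ n, Dense' N (D n))
    (k : ℕ) (m : ℕ) : ∀ A, ∃ g ∈ N k, ∀ n < m, D n k (g * A) := by
  induction m with
  | zero => exact fun A => ⟨1, (N k).one_mem, by simp⟩
  | succ m ih =>
    intro A
    obtain ⟨g, hg, h⟩ := ih A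
    obtain ⟨g', hg', h'⟩ := hD m k (g * A)
    refine ⟨g' * g, (N k).mul_mem hg' hg, fun n hn => ?_⟩
    rw [mul_assoc]
    rcases Nat.lt_succ_iff_lt_or_eq.1 hn with h1 | h1
    · exact hH n _ _ (h n h1) _ hg'
    · subst h1; exact h'

theorem fusion_countable (hF : Fusion N) {D : ℕ → ℕ → M → Prop} (hH : ∀ n, Hered N (D n))
    (hD : ∀ n, Dense' N (D n)) (k : ℕ) (A : M) : ∃ g ∈ N k, ∀ h ∈ N k, ∀ n, ∃ k', D n k' (h * (g * A)) := by
  obtain ⟨g, hg, h⟩ := hF (fun k A => ∀ n < k+1, D n k A) (by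
      intro k A h g hg n hn
      exact hH n _ _ (h n hn) g hg) (fun k A => dense_finite hH hD k (k+1) A) k A
  exact ⟨g, hg, fun x hx n => ⟨max n k, h x hx _ (le_max_right _ _) n (by omega)⟩⟩

theorem RNull.iUnion (hF : Fusion N) {X : ℕ → Set M} (h : ∀ n, RNull N (X n)) :
    RNull N (⋃ n, X n) := by
  intro k A
  obtain ⟨g, hg, h⟩ := fusion_countable hF (D := fun n k A => ∀ x ∈ N k, x * A ∉ X n) (by
    intro n k A h g hg x hx
    rw [← mul_assoc]; exact h _ ((N k).mul_mem hx hg)) (fun n k A => h n k A) k A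
  refine ⟨g, hg, fun x hx hX => ?_⟩
  obtain ⟨n, hn⟩ := Set.mem_iUnion.1 hX
  obtain ⟨k', h'⟩ := h x hx n
  exact h' 1 (N _).one_mem (by rwa [one_mul])

theorem Rams.iUnion (hN : Antitone N) (hF : Fusion N) (hP : Pigeon N) {X : ℕ → Set M}
    (h : ∀ n, Rams N (X n)) : Rams N (⋃ n, X n) := by
  intro k A
  obtain ⟨g, hg, h⟩ := fusion_countable hF
    (D := fun n k A => (∀ x ∈ N k, x * A ∈ X n) ∨ (∀ x ∈ N k, x * A ∉ X n)) (by
    intro n k A h g hg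
    refine h.imp (fun h x hx => ?_) (fun h x hx => ?_) <;>
    · rw [← mul_assoc]; exact h _ ((N k).mul_mem hx hg)) (fun n k A => h n k A) k A
  have hO : MOpen N {B | ∃ k n, ∀ x ∈ N k, x * B ∈ X n} := by
    rintro B ⟨k, n, hB⟩
    refine ⟨k, fun y hy => ⟨k, n, fun x hx => ?_⟩⟩
    rw [← mul_assoc]; exact hB _ ((N k).mul_mem hx hy)
  obtain ⟨g', hg', h'⟩ := rams_of_open hN hF hP hO k (g * A)
  have e : ∀ x ∈ N k, (x * (g * A) ∈ (⋃ n, X n) ↔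
      x * (g * A) ∈ {B | ∃ k n, ∀ x ∈ N k, x * B ∈ X n}) := by
    intro x hx
    constructor
    · intro hX
      obtain ⟨n, hn⟩ := Set.mem_iUnion.1 hX
      obtain ⟨k', h1⟩ := h x hx n
      refine ⟨k', n, h1.resolve_right fun h2 => h2 1 (N _).one_mem (by rwa [one_mul])⟩
    · rintro ⟨k', n, h1⟩
      have := h1 1 (N _).one_mem
      rw [one_mul] at this
      exact Set.mem_iUnion.2 ⟨n, this⟩
  refine ⟨g' * g, (N k).mul_mem hg' hg, ?_⟩
  have e' : ∀ x, x * (g' * g * A) = x * g' * (g * A) := fun x => by simp only [mul_assoc]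
  refine h'.imp (fun h x hx => ?_) (fun h x hx => ?_)
  · rw [e', e _ ((N k).mul_mem hx hg'), mul_assoc]; exact h x hx
  · rw [e', e _ ((N k).mul_mem hx hg'), mul_assoc]; exact h x hx

theorem RNull.rams {X : Set M} (h : RNull N X) : Rams N X := fun k A => by
  obtain ⟨g, hg, h⟩ := h k A
  exact ⟨g, hg, Or.inr h⟩

/-- Ellentuck closure -/
def mcl (N : ℕ → Submonoid M) (X : Set M) : Set M := {A | ∀ n, ∃ h ∈ N n, h * A ∈ X}

theorem subset_mcl (X : Set M) : X ⊆ mcl N X := fun A hA n =>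
  ⟨1, (N n).one_mem, by rwa [one_mul]⟩

theorem rams_mcl (hN : Antitone N) (hF : Fusion N) (hP : Pigeon N) (X : Set M) :
    Rams N (mcl N X) := by
  have : MOpen N (mcl N X)ᶜ := by
    intro A hA
    simp only [mcl, Set.mem_compl_iff, Set.mem_ofPred_eq, not_forall, not_exists, not_and] at hA
    obtain ⟨n, hn⟩ := hA
    refine ⟨n, fun h hh h' => ?_⟩
    obtain ⟨x, hx, hx'⟩ := h' n
    exact hn _ ((N n).mul_mem hx hh) (by rwa [mul_assoc])
  have := (rams_of_open hN hF hP this).compl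
  rwa [compl_compl] at this

theorem rnull_of_subset {X Y : Set M} (hY : Rams N Y) (h1 : Y ⊆ mcl N X) (h2 : ∀ A ∈ Y, A ∉ X) :
    RNull N Y := by
  intro k A
  obtain ⟨g, hg, h⟩ := hY k A
  refine ⟨g, hg, h.resolve_left fun h => ?_⟩
  have h3 := h 1 (N k).one_mem
  rw [one_mul] at h3
  obtain ⟨x, hx, hx'⟩ := h1 h3 k
  exact h2 _ (h x hx) hx'

/-- Branches through a scheme extending `s`. -/
def sch (f : List ℕ → Set M) (s : List ℕ) : Set M :=
  {A | ∃ x : ℕ → ℕ, (List.range s.length).map x = s ∧ ∀ n, A ∈ f ((List.range n).map x)}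

theorem rams_souslin (hN : Antitone N) (hF : Fusion N) (hP : Pigeon N) (f : List ℕ → Set M)
    (hf : ∀ s, Rams N (f s)) : Rams N {A | ∃ x : ℕ → ℕ, ∀ n, A ∈ f ((List.range n).map x)} := by
  set Y : List ℕ → Set M := fun s => mcl N (sch f s) ∩ f s with hYdef
  have hY : ∀ s, Rams N (Y s) := fun s => (rams_mcl hN hF hP _).inter (hf s)
  have hsub : ∀ s, sch f s ⊆ Y s := by
    rintro s A hA
    refine ⟨subset_mcl _ hA, ?_⟩
    obtain ⟨x, hx, hA⟩ := hA
    have := hA s.length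
    rwa [hx] at this
  set Z : List ℕ → Set M := fun s => Y s ∩ (⋃ n, Y (s ++ [n]))ᶜ with hZ
  have hZn : ∀ s, RNull N (Z s) := by
    intro s
    apply rnull_of_subset (X := sch f s)
    · exact (hY s).inter (Rams.iUnion hN hF hP fun n => hY _).compl
    · exact fun A hA => hA.1.1
    · rintro A ⟨-, hA⟩ ⟨x, hx, hxA⟩
      apply hA
      refine Set.mem_iUnion.2 ⟨x s.length, hsub _ ⟨x, ?_, hxA⟩⟩
      simp [List.range_succ, hx]
  obtain ⟨e, he⟩ := exists_surjective_nat (List ℕ)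
  have hNull : RNull N (⋃ n, Z (e n)) := RNull.iUnion hF fun n => hZn _
  have hfin := (hY []).inter hNull.rams.compl
  set S := {A | ∃ x : ℕ → ℕ, ∀ n, A ∈ f ((List.range n).map x)} with hS
  have hSY : S ⊆ Y [] := by
    rintro A ⟨x, hx⟩
    exact hsub [] ⟨x, by simp, hx⟩
  have hYS : Y [] ∩ (⋃ n, Z (e n))ᶜ ⊆ S := by
    rintro A ⟨hA, hAZ⟩
    have hAZ' : ∀ s, A ∈ Y s → ∃ n, A ∈ Y (s ++ [n]) := by
      intro s hs
      by_contra hcon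
      apply hAZ
      obtain ⟨n, rfl⟩ := he s
      refine Set.mem_iUnion.2 ⟨n, hs, ?_⟩
      simpa using hcon
    choose! nx hnx using hAZ'
    let seq : ℕ → List ℕ := fun n => Nat.rec [] (fun _ s => s ++ [nx s]) n
    have hseq : ∀ n, A ∈ Y (seq n) := by
      intro n
      induction n with
      | zero => exact hA
      | succ n ih => exact hnx _ ih
    refine ⟨fun n => nx (seq n), fun n => ?_⟩
    have : (List.range n).map (fun n => nx (seq n)) = seq n := by
      induction n with
      | zero => rfl
      | succ n ih => rw [List.range_succ, List.map_append, ih]; rfl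
    rw [this]
    exact (hseq n).2
  have : S = Y [] ∩ (⋃ n, Z (e n))ᶜ ∪ (S ∩ (⋃ n, Z (e n))) := by
    ext A
    constructor
    · intro hA
      by_cases h : A ∈ ⋃ n, Z (e n)
      · exact Or.inr ⟨hA, h⟩
      · exact Or.inl ⟨hSY hA, h⟩
    · rintro (h | h)
      · exact hYS h
      · exact h.1
  rw [this]
  refine hfin.union (RNull.rams ?_)
  intro k A
  obtain ⟨g, hg, h⟩ := hNull k A
  exact ⟨g, hg, fun x hx hX => h x hx hX.2⟩
end Abstract
/-! ### The infinite Hales-Jewett theorem (left variable words) -/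
section HJ
open Filter

/-- concatenation semigroup -/
@[reducible] def listSemigroup (α : Type*) : Semigroup (List α) where
  mul := fun a b => a ++ b
  mul_assoc := fun a b c => List.append_assoc a b c

attribute [local instance] listSemigroup Ultrafilter.mul Ultrafilter.semigroup

theorem list_mul_def {α : Type*} (a b : List α) : a * b = a ++ b := rfl

theorem exists_min_left_ideal (S : Type*) [Semigroup S] [Nonempty S] :
    ∃ C : Set (Ultrafilter S), C.Nonempty ∧ (∀ p, ∀ q ∈ C, p * q ∈ C) ∧
      ∀ q ∈ C, ∀ r ∈ C, ∃ p, r = p * q := by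
  let 𝒮 : Set (Set (Ultrafilter S)) :=
    {C | IsClosed C ∧ C.Nonempty ∧ ∀ p, ∀ q ∈ C, p * q ∈ C}
  obtain ⟨C, hC⟩ : ∃ C, Minimal (· ∈ 𝒮) C := by
    refine zorn_superset _ fun c hcs hc => ?_
    refine ⟨⋂₀ c, ⟨isClosed_sInter fun t ht => (hcs ht).1, ?_, fun m m' hm' => ?_⟩, fun s hs =>
      Set.sInter_subset_of_mem hs⟩
    · obtain rfl | hcnemp := c.eq_empty_or_nonempty
      · rw [Set.sInter_empty]
        apply Set.univ_nonempty
      convert!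
        @IsCompact.nonempty_iInter_of_directed_nonempty_isCompact_isClosed _ _ _ hcnemp.coe_sort
          ((↑) : c → Set (Ultrafilter S)) ?_ ?_ ?_ ?_
      · exact Set.sInter_eq_iInter
      · refine DirectedOn.directed_val (IsChain.directedOn hc.symm)
      exacts [fun i => (hcs i.prop).2.1, fun i => (hcs i.prop).1.isCompact,
        fun i => (hcs i.prop).1]
    · rw [Set.mem_sInter]
      exact fun t ht => (hcs ht).2.2 m m' (Set.mem_sInter.mp hm' t ht)
  obtain ⟨hcl, hne, hmul⟩ := hC.prop
  refine ⟨C, hne, hmul, fun q hq r hr => ?_⟩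
  have : Set.image (· * q) Set.univ = C := by
    apply hC.eq_of_subset
    · refine ⟨(Ultrafilter.continuous_mul_left q).isClosedMap _ isClosed_univ,
        Set.univ_nonempty.image _, ?_⟩
      rintro p _ ⟨r, -, rfl⟩
      exact ⟨p * r, trivial, mul_assoc _ _ _⟩
    · rintro _ ⟨p, -, rfl⟩
      exact hmul _ _ hq
  rw [← this] at hr
  obtain ⟨p, -, rfl⟩ := hr
  exact ⟨p, rfl⟩

theorem umap_mul {S T : Type*} [Semigroup S] [Semigroup T] (f : S → T)
    (hf : ∀ a b, f (a * b) = f a * f b) (U V : Ultrafilter S) :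
    (U * V).map f = U.map f * V.map f := by
  apply Ultrafilter.coe_inj.mp
  refine Filter.ext' fun p => ?_
  simp only [Ultrafilter.coe_map, Filter.eventually_map, Ultrafilter.eventually_mul, hf]

/-- substitute the variable -/
def sub {Λ : Type*} (a : Λ) (w : List (Option Λ)) : List Λ := w.map (fun o => o.getD a)

theorem exists_var_ultrafilter (Λ : Type*) : ∃ V : Ultrafilter (List (Option Λ)),
    (∀ᶠ v in (V : Filter (List (Option Λ))), ∃ t, v = none :: t) ∧
    ∀ a b : Λ, V.map (sub a) * V.map (sub b) = V.map (sub a) := by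
  obtain ⟨C, ⟨U, hU⟩, hmul, hmin⟩ := exists_min_left_ideal (List Λ)
  set U' : Ultrafilter (List (Option Λ)) := U.map (List.map some) with hU'
  have hsub : ∀ a, U'.map (sub a) = U := by
    intro a
    rw [hU', Ultrafilter.map_map]
    have : sub a ∘ List.map some = id := by
      funext w
      simp [sub, Function.comp_def]
    rw [this, Ultrafilter.map_id]
  have hsm : ∀ a : Λ, ∀ p q, sub a (p * q) = sub a p * sub a q := by
    intro a p q
    simp [sub, list_mul_def]
  let Y : Set (Ultrafilter (List (Option Λ))) := {q | ∀ᶠ v in (q : Filter (List (Option Λ))), ∃ t, v = none :: t}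
  have hYcl : IsClosed Y := ultrafilter_isClosed_basic {v : List (Option Λ) | ∃ t, v = none :: t}
  obtain ⟨V, ⟨hV1, hV2⟩, hV3⟩ := exists_idempotent_in_compact_subsemigroup
    (M := Ultrafilter (List (Option Λ))) Ultrafilter.continuous_mul_left
    (Y ∩ Set.image (· * U') Set.univ) (by
      refine ⟨pure [none] * U', ?_, _, trivial, rfl⟩
      change ∀ᶠ v in ((pure [none] * U' : Ultrafilter _) : Filter (List (Option Λ))), ∃ t, v = none :: t
      rw [Ultrafilter.eventually_mul]
      simp [list_mul_def])
    ((hYcl.inter ((Ultrafilter.continuous_mul_left U').isClosedMap _ isClosed_univ)).isCompact)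
    (by
      rintro x ⟨hx1, p, -, rfl⟩ y ⟨hy1, q, -, rfl⟩
      refine ⟨?_, (p * U') * q, trivial, mul_assoc _ _ _⟩
      change ∀ᶠ v in (((p * U') * (q * U') : Ultrafilter _) : Filter (List (Option Λ))), ∃ t, v = none :: t
      rw [Ultrafilter.eventually_mul]
      filter_upwards [hx1] with v hv
      obtain ⟨t, rfl⟩ := hv
      exact Filter.Eventually.of_forall fun w => ⟨t ++ w, rfl⟩)
  have hVC : ∀ a, V.map (sub a) ∈ C := by
    intro a
    obtain ⟨p, -, rfl⟩ := hV2
    change (p * U').map (sub a) ∈ C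
    rw [umap_mul _ (hsm a), hsub]
    exact hmul _ _ hU
  refine ⟨V, hV1, fun a b => ?_⟩
  obtain ⟨p, hp⟩ := hmin _ (hVC b) _ (hVC a)
  rw [hp, mul_assoc, ← umap_mul _ (hsm b), hV3]

theorem inf_hj (Λ : Type*) [Finite Λ] [Nonempty Λ] (R : Set (List Λ)) :
    ∃ p : ℕ → List (Λ ⊕ ℕ), (∀ z ∈ p 0, ∃ a, z = Sum.inl a) ∧
      (∀ n, ∃ t, p (n+1) = p n ++ Sum.inr n :: t ∧ ∀ z ∈ t, z = Sum.inr n ∨ ∃ a, z = Sum.inl a) ∧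
      ((∀ n, ∀ a : ℕ → Λ, (p n).map (Sum.elim id a) ∈ R) ∨
       (∀ n, ∀ a : ℕ → Λ, (p n).map (Sum.elim id a) ∉ R)) := by
  obtain ⟨V, hV, hVV⟩ := exists_var_ultrafilter Λ
  have main : ∀ R : Set (List Λ), (∃ a, ∀ᶠ w in (V.map (sub a) : Filter _), w ∈ R) →
    ∃ p : ℕ → List (Λ ⊕ ℕ), (∀ z ∈ p 0, ∃ a, z = Sum.inl a) ∧
      (∀ n, ∃ t, p (n+1) = p n ++ Sum.inr n :: t ∧ ∀ z ∈ t, z = Sum.inr n ∨ ∃ a, z = Sum.inl a) ∧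
      (∀ n, ∀ a : ℕ → Λ, (p n).map (Sum.elim id a) ∈ R) := by
    rintro R ⟨a0, ha0⟩
    set Good : List Λ → Prop := fun w => w ∈ R ∧ ∀ a, ∀ᶠ v in (V : Filter _), w ++ sub a v ∈ R
      with hGood
    have step : ∀ W : Set (List Λ), W.Finite → (∀ w ∈ W, Good w) →
        ∃ t, ∀ w ∈ W, ∀ a, Good (w ++ sub a (none :: t)) := by
      intro W hW hWG
      have : ∀ᶠ v in (V : Filter _), ∀ w ∈ W, ∀ a, Good (w ++ sub a v) := by
        rw [Filter.eventually_all_finite hW]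
        intro w hw
        rw [Filter.eventually_all]
        intro a
        refine ((hWG w hw).2 a).and ?_
        rw [Filter.eventually_all]
        intro b
        have h1 : ∀ᶠ u in (V.map (sub a) : Filter _), w ++ u ∈ R := (hWG w hw).2 a
        rw [← hVV a b, Ultrafilter.eventually_mul] at h1
        simp only [Ultrafilter.coe_map, Filter.eventually_map] at h1
        filter_upwards [h1] with v hv
        filter_upwards [hv] with v' hv'
        rw [List.append_assoc]; exact hv'
      obtain ⟨v, h1, t, rfl⟩ := (this.and hV).exists
      exact ⟨t, h1⟩
    have start : ∃ w, Good w := by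
      have : ∀ᶠ w in (V.map (sub a0) : Filter _), Good w := by
        refine ha0.and ?_
        rw [Filter.eventually_all]
        intro b
        rw [← hVV a0 b, Ultrafilter.eventually_mul] at ha0
        exact ha0
      exact this.exists
    obtain ⟨w0, hw0⟩ := start
    have step2 : ∀ n : ℕ, ∀ p : List (Λ ⊕ ℕ), (∀ a, Good (p.map (Sum.elim id a))) →
        ∃ t, (∀ a, Good ((p ++ Sum.inr n :: t).map (Sum.elim id a))) ∧
          ∀ z ∈ t, z = Sum.inr n ∨ ∃ a, z = Sum.inl a := by
      intro n p hp
      obtain ⟨t, ht⟩ := step (Set.range fun a : ℕ → Λ => p.map (Sum.elim id a))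
        ((List.finite_length_eq Λ p.length).subset (by rintro _ ⟨a, rfl⟩; simp))
        (by rintro _ ⟨a, rfl⟩; exact hp a)
      refine ⟨t.map (fun o => o.elim (Sum.inr n) Sum.inl), fun a => ?_, ?_⟩
      · have := ht _ ⟨a, rfl⟩ (a n)
        convert! this using 1
        simp only [List.map_append, List.map_cons, sub, Sum.elim_inr, Option.getD_none,
          List.map_map]
        congr 2
        apply List.map_congr_left
        rintro (_ | o) - <;> rfl
      · intro z hz
        obtain ⟨o, -, rfl⟩ := List.mem_map.1 hz
        rcases o with _ | o
        · exact Or.inl rfl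
        · exact Or.inr ⟨o, rfl⟩
    choose! t ht1 ht2 using step2
    let p : ℕ → List (Λ ⊕ ℕ) := fun n => Nat.rec (w0.map Sum.inl)
      (fun n q => q ++ Sum.inr n :: t n q) n
    have hp : ∀ n, ∀ a, Good ((p n).map (Sum.elim id a)) := by
      intro n
      induction n with
      | zero => intro a; simpa [p, Function.comp_def] using hw0
      | succ n ih => exact ht1 n _ ih
    refine ⟨p, ?_, fun n => ⟨t n (p n), rfl, ht2 n _ (hp n)⟩, fun n a => (hp n a).1⟩
    intro z hz
    obtain ⟨o, -, rfl⟩ := List.mem_map.1 hz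
    exact ⟨o, rfl⟩
  have a0 : Λ := Classical.arbitrary Λ
  rcases (V.map (sub a0)).em (fun w => w ∈ R) with h | h
  · obtain ⟨p, h1, h2, h3⟩ := main R ⟨a0, h⟩
    exact ⟨p, h1, h2, Or.inl h3⟩
  · obtain ⟨p, h1, h2, h3⟩ := main Rᶜ ⟨a0, h⟩
    exact ⟨p, h1, h2, Or.inr h3⟩
end HJ
/-! ### The monoid of typed rigid surjections -/
section RigidMonoid

/-- typed rigid surjections of the natural numbers -/
@[ext] structure RS_s8 (l : ℕ) where
  f : ℕ → ℕ
  surj : ∀ j, ∃ x, f x = j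
  rig : ∀ x j, j < f x → ∃ y < x, f y = j
  typ : ∀ x, f x % l ≤ x % l
  fst : ∀ x, (∀ y < x, f y ≠ f x) → x % l = f x % l

variable {l : ℕ}

instance : Monoid (RS_s8 l) where
  one := ⟨id, fun j => ⟨j, rfl⟩, fun _ j hj => ⟨j, hj, rfl⟩, fun _ => le_rfl, fun _ _ => rfl⟩
  mul h g := ⟨h.f ∘ g.f, fun j => by
      obtain ⟨z, hz⟩ := h.surj j
      obtain ⟨x, hx⟩ := g.surj z
      exact ⟨x, by simp [hx, hz]⟩, fun x j hj => by
      obtain ⟨z, hz, hz'⟩ := h.rig (g.f x) j hj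
      obtain ⟨y, hy, hy'⟩ := g.rig x z hz
      exact ⟨y, hy, by simp [hy', hz']⟩, fun x => (h.typ _).trans (g.typ x), fun x hx => by
      rw [g.fst x, h.fst (g.f x)]
      · rfl
      · intro z hz hz'
        obtain ⟨y, hy, hy'⟩ := g.rig x z hz
        exact hx y hy (by simp [hy', hz'])
      · intro y hy h'
        exact hx y hy (by simp [h'])⟩
  mul_assoc _ _ _ := rfl
  one_mul _ := rfl
  mul_one _ := rfl

theorem RS_s8.mul_f (h g : RS_s8 l) (x : ℕ) : (h * g).f x = h.f (g.f x) := rfl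
theorem RS_s8.one_f (x : ℕ) : (1 : RS_s8 l).f x = x := rfl

theorem RS_s8.le (g : RS_s8 l) (x : ℕ) : g.f x ≤ x := by
  induction x using Nat.strong_induction_on with
  | _ x ih =>
    rcases Nat.eq_zero_or_pos (g.f x) with h | h
    · omega
    · obtain ⟨y, hy, hy'⟩ := g.rig x (g.f x - 1) (by omega)
      have := ih y hy
      omega

theorem RS_s8.lt_of_first (g : RS_s8 l) {d k : ℕ} (hd : ∀ y < d, g.f y ≠ k) : ∀ y < d, g.f y < k := by
  intro y hy
  rcases lt_trichotomy (g.f y) k with h | h | h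
  · exact h
  · exact (hd y hy h).elim
  · obtain ⟨z, hz, hz'⟩ := g.rig y k h
    exact (hd z (hz.trans hy) hz').elim

theorem RS_s8.exists_first (g : RS_s8 l) (k : ℕ) : ∃ d, g.f d = k ∧ (∀ y < d, g.f y < k) ∧
    d % l = k % l := by
  classical
  have hd := Nat.find_spec (g.surj k)
  have hd' : ∀ y < Nat.find (g.surj k), g.f y ≠ k := fun y hy => Nat.find_min (g.surj k) hy
  refine ⟨Nat.find (g.surj k), hd, g.lt_of_first hd', ?_⟩
  have := g.fst (Nat.find (g.surj k)) (by rw [hd]; exact hd')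
  rwa [hd] at this

/-- elements fixing an initial segment -/
def NN (l : ℕ) (k : ℕ) : Submonoid (RS_s8 l) where
  carrier := {g | ∀ i ≤ k, g.f i = i}
  one_mem' := fun _ _ => rfl
  mul_mem' := by
    intro a b ha hb i hi
    rw [RS_s8.mul_f, hb i hi, ha i hi]

theorem mem_NN {k : ℕ} {g : RS_s8 l} : g ∈ NN l k ↔ ∀ i ≤ k, g.f i = i := Iff.rfl

theorem NN_anti : Antitone (NN l) := fun _ _ hab _ hg i hi => hg i (hi.trans hab)

theorem NN_zero (g : RS_s8 l) : g ∈ NN l 0 := by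
  intro i hi
  have := g.le i
  omega

/-- canonical representatives of finite approximations -/
def IsT (d k : ℕ) (σ : RS_s8 l) : Prop := (∀ i < d, σ.f i < k) ∧ ∀ i, σ.f (d + i) = k + i

theorem IsT.at_d {d k : ℕ} {σ : RS_s8 l} (h : IsT d k σ) : σ.f d = k := h.2 0

theorem IsT.mod {d k : ℕ} {σ : RS_s8 l} (h : IsT d k σ) (i : ℕ) : (d + i) % l = (k + i) % l := by
  have := σ.fst d (by
    intro y hy
    rw [h.at_d]; exact (h.1 y hy).ne)
  rw [h.at_d] at this
  exact Nat.ModEq.add_right i this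

theorem factor {d k : ℕ} {h σ : RS_s8 l} (hσ : IsT d k σ) (hag : ∀ i < d, h.f i = σ.f i)
    (hd : h.f d = k) : ∃ h' ∈ NN l k, h = h' * σ := by
  have mod := hσ.mod
  obtain ⟨hσ1, hσ2⟩ := hσ
  let u : ℕ → ℕ := fun i => if i < k then i else h.f (d + (i - k))
  have u1 : ∀ i, i < k → u i = i := fun i hi => if_pos hi
  have u2 : ∀ i, u (k + i) = h.f (d + i) := fun i => by simp [u]
  refine ⟨⟨u, ?_, ?_, ?_, ?_⟩, ?_, ?_⟩
  · intro j
    obtain ⟨x, hx⟩ := h.surj j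
    rcases lt_or_ge x d with h1 | h1
    · refine ⟨j, u1 _ ?_⟩
      rw [← hx, hag x h1]; exact hσ1 x h1
    · obtain ⟨i, rfl⟩ := Nat.exists_eq_add_of_le h1
      exact ⟨k + i, by rw [u2, hx]⟩
  · intro x j hj
    rcases lt_or_ge x k with h1 | h1
    · rw [u1 x h1] at hj
      exact ⟨j, hj, u1 _ (hj.trans h1)⟩
    · obtain ⟨i, rfl⟩ := Nat.exists_eq_add_of_le h1
      rw [u2] at hj
      obtain ⟨y, hy, hy'⟩ := h.rig _ _ hj
      rcases lt_or_ge y d with h2 | h2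
      · have : j < k := by rw [← hy', hag y h2]; exact hσ1 y h2
        exact ⟨j, by omega, u1 _ this⟩
      · obtain ⟨i', rfl⟩ := Nat.exists_eq_add_of_le h2
        exact ⟨k + i', by omega, by rw [u2, hy']⟩
  · intro x
    rcases lt_or_ge x k with h1 | h1
    · rw [u1 x h1]
    · obtain ⟨i, rfl⟩ := Nat.exists_eq_add_of_le h1
      rw [u2, ← mod]; exact h.typ _
  · intro x hx
    rcases lt_or_ge x k with h1 | h1
    · rw [u1 x h1]
    · obtain ⟨i, rfl⟩ := Nat.exists_eq_add_of_le h1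
      rw [u2] at hx ⊢
      have hk : k ≤ h.f (d + i) := by
        by_contra hcon
        push Not at hcon
        exact hx _ (hcon.trans_le h1) (u1 _ hcon)
      rw [← mod]
      apply h.fst
      intro y hy
      rcases lt_or_ge y d with h2 | h2
      · have := hσ1 y h2
        rw [← hag y h2] at this
        omega
      · obtain ⟨i', rfl⟩ := Nat.exists_eq_add_of_le h2
        have := hx (k + i') (by omega)
        rwa [u2] at this
  · intro i hi
    rcases hi.lt_or_eq with h1 | rfl
    · exact u1 i h1
    · exact (u2 0).trans hd
  · ext x
    rw [RS_s8.mul_f]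
    rcases lt_or_ge x d with h1 | h1
    · rw [hag x h1]; exact (u1 _ (hσ1 x h1)).symm
    · obtain ⟨i, rfl⟩ := Nat.exists_eq_add_of_le h1
      rw [hσ2]; exact (u2 _).symm

theorem fwd {d k : ℕ} {σ g : RS_s8 l} (hσ : IsT d k σ) (hg : g ∈ NN l d) :
    ∃ g' ∈ NN l k, σ * g = g' * σ := by
  apply factor hσ
  · intro i hi
    rw [RS_s8.mul_f, hg i hi.le]
  · rw [RS_s8.mul_f, hg d le_rfl, hσ.at_d]

theorem bwd {d k : ℕ} {σ g : RS_s8 l} (hσ : IsT d k σ) (hg : g ∈ NN l k) :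
    ∃ g' ∈ NN l d, σ * g' = g * σ := by
  have mod := hσ.mod
  have hσd := hσ.at_d
  obtain ⟨hσ1, hσ2⟩ := hσ
  have : ∀ v, ∃ p, v < k → (p < d ∧ σ.f p = v ∧ p % l = v % l) := by
    intro v
    obtain ⟨p, h1, h2, h3⟩ := σ.exists_first v
    refine ⟨p, fun hv => ⟨?_, h1, h3⟩⟩
    by_contra hcon
    push Not at hcon
    rcases hcon.lt_or_eq with h4 | h4
    · have := h2 d h4
      omega
    · subst h4; omega
  choose pos hpos using this
  let u : ℕ → ℕ := fun i => if i < d then i else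
    if g.f (k + (i - d)) < k then pos (g.f (k + (i - d))) else d + (g.f (k + (i - d)) - k)
  have u1 : ∀ i, i < d → u i = i := fun i hi => if_pos hi
  have u2 : ∀ i, g.f (k + i) < k → u (d + i) = pos (g.f (k + i)) := fun i hi => by simp [u, hi]
  have u3 : ∀ i v, g.f (k + i) = k + v → u (d + i) = d + v := fun i v hi => by simp [u, hi]
  have cases3 : ∀ x, x < d ∨ (∃ i, x = d + i ∧ g.f (k + i) < k) ∨
      (∃ i v, x = d + i ∧ g.f (k + i) = k + v) := by
    intro x
    rcases lt_or_ge x d with h1 | h1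
    · exact Or.inl h1
    · obtain ⟨i, rfl⟩ := Nat.exists_eq_add_of_le h1
      rcases lt_or_ge (g.f (k + i)) k with h2 | h2
      · exact Or.inr (Or.inl ⟨i, rfl, h2⟩)
      · obtain ⟨v, hv⟩ := Nat.exists_eq_add_of_le h2
        exact Or.inr (Or.inr ⟨i, v, rfl, hv⟩)
  have gk : ∀ y v, g.f y = k + v → ∃ i, y = k + i := by
    intro y v hy
    apply Nat.exists_eq_add_of_le
    by_contra hcon
    push Not at hcon
    rw [hg y hcon.le] at hy
    omega
  refine ⟨⟨u, ?_, ?_, ?_, ?_⟩, ?_, ?_⟩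
  · intro j
    rcases lt_or_ge j d with h1 | h1
    · exact ⟨j, u1 j h1⟩
    · obtain ⟨i, rfl⟩ := Nat.exists_eq_add_of_le h1
      obtain ⟨x, hx⟩ := g.surj (k + i)
      obtain ⟨i', rfl⟩ := gk _ _ hx
      exact ⟨d + i', u3 _ _ hx⟩
  · intro x j hj
    rcases cases3 x with h1 | ⟨i, rfl, h1⟩ | ⟨i, v, rfl, h1⟩
    · rw [u1 x h1] at hj
      exact ⟨j, hj, u1 _ (hj.trans h1)⟩
    · rw [u2 _ h1] at hj
      have := (hpos _ h1).1
      exact ⟨j, by omega, u1 _ (by omega)⟩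
    · rw [u3 _ _ h1] at hj
      rcases lt_or_ge j d with h2 | h2
      · exact ⟨j, by omega, u1 _ h2⟩
      · obtain ⟨j', rfl⟩ := Nat.exists_eq_add_of_le h2
        obtain ⟨y, hy, hy'⟩ := g.rig (k + i) (k + j') (by omega)
        obtain ⟨i', rfl⟩ := gk _ _ hy'
        exact ⟨d + i', by omega, u3 _ _ hy'⟩
  · intro x
    rcases cases3 x with h1 | ⟨i, rfl, h1⟩ | ⟨i, v, rfl, h1⟩
    · rw [u1 x h1]
    · rw [u2 _ h1, (hpos _ h1).2.2, mod]; exact g.typ _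
    · rw [u3 _ _ h1, mod, mod, ← h1]; exact g.typ _
  · intro x hx
    rcases cases3 x with h1 | ⟨i, rfl, h1⟩ | ⟨i, v, rfl, h1⟩
    · rw [u1 x h1]
    · rw [u2 _ h1] at hx
      have := (hpos _ h1).1
      exact (hx _ (by omega) (u1 _ this)).elim
    · rw [u3 _ _ h1] at hx ⊢
      rw [mod, mod, ← h1]
      apply g.fst
      intro y hy hy'
      rw [h1] at hy'
      obtain ⟨i', rfl⟩ := gk _ _ hy'
      exact hx (d + i') (by omega) (u3 _ _ hy')
  · intro i hi
    rcases hi.lt_or_eq with h1 | rfl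
    · exact u1 i h1
    · exact u3 0 0 (hg k le_rfl)
  · ext x
    rw [RS_s8.mul_f, RS_s8.mul_f]
    change σ.f (u x) = _
    rcases cases3 x with h1 | ⟨i, rfl, h1⟩ | ⟨i, v, rfl, h1⟩
    · rw [u1 x h1, hg _ (hσ1 x h1).le]
    · rw [u2 _ h1, (hpos _ h1).2.1, hσ2]
    · rw [u3 _ _ h1, hσ2, hσ2, h1]

/-- every element factors through the canonical representative of an approximation -/
theorem exists_T (h : RS_s8 l) (k : ℕ) : ∃ d σ, k ≤ d ∧ IsT d k σ ∧ ∃ h' ∈ NN l k, h = h' * σ := by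
  obtain ⟨d, hd, hlt, hmod⟩ := h.exists_first k
  have mod : ∀ i, (d + i) % l = (k + i) % l := fun i => Nat.ModEq.add_right i hmod
  let u : ℕ → ℕ := fun i => if i < d then h.f i else k + (i - d)
  have u1 : ∀ i, i < d → u i = h.f i := fun i hi => if_pos hi
  have u2 : ∀ i, u (d + i) = k + i := fun i => by simp [u]
  have hkd : k ≤ d := by rw [← hd]; exact h.le d
  let σ : RS_s8 l := ⟨u, by
    intro j
    rcases lt_or_ge j k with h1 | h1
    · rw [← hd] at h1
      obtain ⟨y, hy, hy'⟩ := h.rig d j h1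
      exact ⟨y, by rw [u1 y hy, hy']⟩
    · obtain ⟨i, rfl⟩ := Nat.exists_eq_add_of_le h1
      exact ⟨d + i, u2 i⟩, by
    intro x j hj
    rcases lt_or_ge x d with h1 | h1
    · rw [u1 x h1] at hj
      obtain ⟨y, hy, hy'⟩ := h.rig x j hj
      exact ⟨y, hy, by rw [u1 y (hy.trans h1), hy']⟩
    · obtain ⟨i, rfl⟩ := Nat.exists_eq_add_of_le h1
      rw [u2] at hj
      rcases lt_or_ge j k with h1 | h1
      · rw [← hd] at h1
        obtain ⟨y, hy, hy'⟩ := h.rig d j h1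
        exact ⟨y, by omega, by rw [u1 y hy, hy']⟩
      · obtain ⟨i, rfl⟩ := Nat.exists_eq_add_of_le h1
        exact ⟨d + i, by omega, u2 i⟩, by
    intro x
    rcases lt_or_ge x d with h1 | h1
    · rw [u1 x h1]; exact h.typ x
    · obtain ⟨i, rfl⟩ := Nat.exists_eq_add_of_le h1
      rw [u2, mod], by
    intro x hx
    rcases lt_or_ge x d with h1 | h1
    · rw [u1 x h1] at hx ⊢
      apply h.fst
      intro y hy
      have := hx y hy
      rwa [u1 y (hy.trans h1)] at this
    · obtain ⟨i, rfl⟩ := Nat.exists_eq_add_of_le h1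
      rw [u2, mod]⟩
  have hT : IsT d k σ := ⟨fun i hi => by
    change u i < k
    rw [u1 i hi]; exact hlt i hi, u2⟩
  exact ⟨d, σ, hkd, hT, factor hT (fun i hi => (u1 i hi).symm) hd⟩

theorem finite_T (l d : ℕ) : {σ : RS_s8 l | ∃ k, IsT d k σ}.Finite := by
  let F : RS_s8 l → (Fin (d+1) → Fin (d+1)) := fun σ i =>
    ⟨σ.f i, by have := σ.le i; omega⟩
  apply Set.Finite.of_finite_image (f := F) (Set.toFinite _)
  rintro σ ⟨k, hσ⟩ τ ⟨k', hτ⟩ h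
  have e : ∀ i, i ≤ d → σ.f i = τ.f i := by
    intro i hi
    have := congrFun h ⟨i, by omega⟩
    simpa [F] using this
  have hk : k = k' := by rw [← hσ.at_d, ← hτ.at_d, e d le_rfl]
  ext x
  rcases lt_or_ge x d with h1 | h1
  · exact e x h1.le
  · obtain ⟨i, rfl⟩ := Nat.exists_eq_add_of_le h1
    rw [hσ.2, hτ.2, hk]

/-- infinite products -/
theorem inf_prod (k : ℕ) (g : ℕ → RS_s8 l) (hg : ∀ n, g n ∈ NN l (k + n)) :
    ∃ t : ℕ → RS_s8 l, ∀ n, t n ∈ NN l (k + n) ∧ t n = t (n+1) * g n := by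
  let pr : ℕ → ℕ → RS_s8 l := fun d n => Nat.rec 1 (fun n p => g (d + n) * p) n
  have pr0 : ∀ d, pr d 0 = 1 := fun d => rfl
  have prS : ∀ d n, pr d (n+1) = g (d + n) * pr d n := fun d n => rfl
  have prS' : ∀ n d, pr d (n+1) = pr (d+1) n * g d := by
    intro n
    induction n with
    | zero => intro d; rw [prS, pr0, pr0, one_mul, mul_one]; rfl
    | succ n ih =>
      intro d
      rw [prS, ih, prS (d+1), mul_assoc]
      congr 2
      omega
  have fixd : ∀ d n, pr d n ∈ NN l (k + d) := by
    intro d n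
    induction n with
    | zero => exact Submonoid.one_mem _
    | succ n ih => exact Submonoid.mul_mem _ (NN_anti (by omega) (hg (d+n))) ih
  have stab : ∀ d x m n, x ≤ d + m → (pr d (m + n)).f x = (pr d m).f x := by
    intro d x m n hx
    induction n with
    | zero => rfl
    | succ n ih =>
      rw [← add_assoc, prS, RS_s8.mul_f, ih]
      apply hg (d + (m + n))
      have := (pr d m).le x
      omega
  have stab' : ∀ d x m, x ≤ m → (pr d m).f x = (pr d x).f x := by
    intro d x m hm
    obtain ⟨n, rfl⟩ := Nat.exists_eq_add_of_le hm
    exact stab d x x n (by omega)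
  let t : ℕ → RS_s8 l := fun d => ⟨fun x => (pr d x).f x, by
    intro j
    obtain ⟨x, hx⟩ := (pr d j).surj j
    refine ⟨x, ?_⟩
    have hjx : j ≤ x := by rw [← hx]; exact (pr d j).le x
    have key : ∀ n, (pr d (j + n)).f x = j := by
      intro n
      induction n with
      | zero => exact hx
      | succ n ih =>
        rw [← add_assoc, prS, RS_s8.mul_f, ih]
        exact hg (d + (j + n)) j (by omega)
    have := key (x - j)
    rwa [Nat.add_sub_cancel' hjx] at this, by
    intro x j hj
    obtain ⟨y, hy, hy'⟩ := (pr d x).rig x j hj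
    exact ⟨y, hy, by rw [← stab' d y x hy.le, hy']⟩, fun x => (pr d x).typ x, by
    intro x hx
    apply (pr d x).fst
    intro y hy
    rw [stab' d y x hy.le]
    exact hx y hy⟩
  refine ⟨t, fun n => ⟨fun i hi => fixd n i i hi, ?_⟩⟩
  ext x
  change (pr n x).f x = (pr (n+1) ((g n).f x)).f ((g n).f x)
  rw [← stab' (n+1) _ x ((g n).le x), ← stab' n x (x+1) (Nat.le_succ x), prS', RS_s8.mul_f]

theorem fusion_RS : Fusion (NN l) := by
  intro D hH hD k A
  have stage : ∀ d, ∀ A : RS_s8 l, ∃ g ∈ NN l d, ∀ σ k, IsT d k σ → D k (σ * (g * A)) := by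
    intro d A
    have : ∀ F : Set (RS_s8 l), F.Finite → ∃ g ∈ NN l d, ∀ σ ∈ F, ∀ k, IsT d k σ →
        D k (σ * (g * A)) := by
      intro F hF
      induction F, hF using Set.Finite.induction_on with
      | empty => exact ⟨1, Submonoid.one_mem _, by simp⟩
      | @insert σ F _ _ ih =>
        obtain ⟨g, hg, h⟩ := ih
        by_cases hT : ∃ k, IsT d k σ
        · obtain ⟨k, hT⟩ := hT
          obtain ⟨g1, hg1, h1⟩ := hD k (σ * (g * A))
          obtain ⟨g2, hg2, e⟩ := bwd hT hg1
          refine ⟨g2 * g, Submonoid.mul_mem _ hg2 hg, ?_⟩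
          rintro τ hτ k' hT'
          rcases hτ with rfl | hτ
          · have : k' = k := by rw [← hT.at_d, ← hT'.at_d]
            subst this
            have e2 : τ * (g2 * g * A) = g1 * (τ * (g * A)) := by
              rw [← mul_assoc g1, ← e]; simp only [mul_assoc]
            rw [e2]; exact h1
          · obtain ⟨g3, hg3, e3⟩ := fwd hT' hg2
            have e2 : τ * (g2 * g * A) = g3 * (τ * (g * A)) := by
              rw [← mul_assoc g3, ← e3]; simp only [mul_assoc]
            rw [e2]; exact hH _ _ (h τ hτ k' hT') _ hg3
        · refine ⟨g, hg, ?_⟩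
          rintro τ hτ k' hT'
          rcases hτ with rfl | hτ
          · exact (hT ⟨k', hT'⟩).elim
          · exact h τ hτ k' hT'
    obtain ⟨g, hg, h⟩ := this _ (finite_T l d)
    exact ⟨g, hg, fun σ k hσ => h σ ⟨k, hσ⟩ k hσ⟩
  choose G hG1 hG2 using stage
  let B : ℕ → RS_s8 l := fun n => Nat.rec A (fun n B => G (k + n) B * B) n
  have BS : ∀ n, B (n+1) = G (k + n) (B n) * B n := fun n => rfl
  obtain ⟨t, ht⟩ := inf_prod k (fun n => G (k+n) (B n)) (fun n => hG1 _ _)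
  have htB : ∀ n, t 0 * A = t n * B n := by
    intro n
    induction n with
    | zero => rfl
    | succ n ih => rw [ih, (ht n).2, BS, mul_assoc]
  refine ⟨t 0, (ht 0).1, fun h hh k' hk' => ?_⟩
  obtain ⟨d, σ, hd, hσ, h', hh', rfl⟩ := exists_T h k'
  obtain ⟨n, rfl⟩ := Nat.exists_eq_add_of_le (hk'.trans hd : k ≤ d)
  have h1 := hG2 (k+n) (B n) σ k' hσ
  rw [← BS] at h1
  obtain ⟨g3, hg3, e3⟩ := fwd (g := t (n+1)) hσ (NN_anti (by omega) (ht (n+1)).1)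
  have e2 : h' * σ * (t 0 * A) = (h' * g3) * (σ * B (n+1)) := by
    rw [htB (n+1), mul_assoc h' g3, ← mul_assoc g3, ← e3]; simp only [mul_assoc]
  rw [e2]
  exact hH _ _ h1 _ (Submonoid.mul_mem _ hh' hg3)
end RigidMonoid
/-! ### The pigeonhole principle for typed rigid surjections -/
section PigeonRS
variable {l : ℕ}

/-- block letters -/
def Letter (l k : ℕ) : Type := {a : Fin l → Fin (k+1) // ∀ i, (a i : ℕ) % l ≤ (k + 1 + i) % l}

instance (k : ℕ) : Finite (Letter l k) := by unfold Letter; infer_instance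
instance (k : ℕ) : Nonempty (Letter l k) := ⟨⟨fun _ => 0, fun _ => by simp⟩⟩

theorem block_cases (hl : 0 < l) (k x : ℕ) : x ≤ k ∨ ∃ j, ∃ i : Fin l, x = k + 1 + (l * j + i) := by
  rcases Nat.lt_or_ge k x with h | h
  · right
    obtain ⟨y, rfl⟩ := Nat.exists_eq_add_of_le (show k + 1 ≤ x from h)
    exact ⟨y / l, ⟨y % l, Nat.mod_lt _ hl⟩, by simp [Nat.div_add_mod]⟩
  · exact Or.inl h

/-- the map associated with an infinite block word -/
theorem block_map (hl : 0 < l) (k : ℕ) (f : ℕ → Letter l k ⊕ ℕ) (h1 : ∀ v, ∃ j, f j = Sum.inr v)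
    (h2 : ∀ j v, f j = Sum.inr v → ∀ v' < v, ∃ j' < j, f j' = Sum.inr v') :
    ∃ g ∈ NN l k, (∀ j a, f j = Sum.inl a → ∀ i : Fin l, g.f (k + 1 + (l * j + i)) = a.1 i) ∧
      (∀ j v, f j = Sum.inr v → ∀ i : Fin l, g.f (k + 1 + (l * j + i)) = k + 1 + (l * v + i)) := by
  let u : ℕ → ℕ := fun x => if x ≤ k then x else
    match f ((x - (k+1)) / l) with
    | Sum.inl a => a.1 ⟨(x - (k+1)) % l, Nat.mod_lt _ hl⟩
    | Sum.inr v => k + 1 + (l * v + (x - (k+1)) % l)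
  have u0 : ∀ x ≤ k, u x = x := fun x hx => if_pos hx
  have hdiv : ∀ j, ∀ i : Fin l, (l * j + i) / l = j := fun j i => by
    rw [Nat.mul_add_div hl, Nat.div_eq_of_lt i.2, add_zero]
  have hmod : ∀ j, ∀ i : Fin l, (l * j + i) % l = i := fun j i => by
    rw [Nat.mul_add_mod, Nat.mod_eq_of_lt i.2]
  have u1 : ∀ j a, f j = Sum.inl a → ∀ i : Fin l, u (k + 1 + (l * j + i)) = a.1 i := by
    intro j a ha i
    have hn : ¬ (k + 1 + (l * j + i) ≤ k) := by omega
    simp only [u, hn, if_false, Nat.add_sub_cancel_left, hdiv, hmod, ha]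
  have u2 : ∀ j v, f j = Sum.inr v → ∀ i : Fin l,
      u (k + 1 + (l * j + i)) = k + 1 + (l * v + i) := by
    intro j a ha i
    have hn : ¬ (k + 1 + (l * j + i) ≤ k) := by omega
    simp only [u, hn, if_false, Nat.add_sub_cancel_left, hdiv, hmod, ha]
  have md : ∀ j, ∀ i : Fin l, (k + 1 + (l * j + i)) % l = (k + 1 + i) % l := by
    intro j i
    rw [show k + 1 + (l * j + i) = k + 1 + i + l * j by ring, Nat.add_mul_mod_self_left]
  refine ⟨⟨u, ?_, ?_, ?_, ?_⟩, u0, u1, u2⟩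
  · intro j
    rcases block_cases hl k j with h | ⟨v, i, rfl⟩
    · exact ⟨j, u0 j h⟩
    · obtain ⟨j, hj⟩ := h1 v
      exact ⟨_, u2 j v hj i⟩
  · intro x j hj
    rcases block_cases hl k x with h | ⟨b, i, rfl⟩
    · rw [u0 x h] at hj
      exact ⟨j, hj, u0 _ (by omega)⟩
    rcases block_cases hl k j with hjk | ⟨v', i', rfl⟩
    · exact ⟨j, by omega, u0 j hjk⟩
    rcases hf : f b with a | v
    · rw [u1 b a hf i] at hj
      have := (a.1 i).2
      omega
    · rw [u2 b v hf i] at hj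
      rcases lt_trichotomy v' v with h | h | h
      · obtain ⟨j', hj', hf'⟩ := h2 b v hf v' h
        refine ⟨_, ?_, u2 j' v' hf' i'⟩
        have := Nat.mul_le_mul_left l (show j' + 1 ≤ b from hj')
        rw [mul_add] at this
        have := i'.2
        omega
      · subst h
        exact ⟨_, by omega, u2 b v' hf i'⟩
      · have := Nat.mul_le_mul_left l (show v + 1 ≤ v' from h)
        rw [mul_add] at this
        have := i.2
        omega
  · intro x
    rcases block_cases hl k x with h | ⟨b, i, rfl⟩
    · rw [u0 x h]
    rcases hf : f b with a | v
    · rw [u1 b a hf i, md]; exact a.2 i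
    · rw [u2 b v hf i, md, md]
  · intro x hx
    rcases block_cases hl k x with h | ⟨b, i, rfl⟩
    · rw [u0 x h]
    rcases hf : f b with a | v
    · rw [u1 b a hf i] at hx
      have := (a.1 i).2
      exact (hx _ (by omega) (u0 _ (by omega))).elim
    · rw [u2 b v hf i, md, md]

theorem pigeon_RS (hl : 0 < l) : Pigeon (NN l) := by
  classical
  intro k χ hχ
  -- finite words
  have hsw : ∀ w : List (Letter l k), ∃ σ ∈ NN l k, IsT (k + 1 + l * w.length) (k+1) σ ∧
      ∀ (j : ℕ) (hj : j < w.length) (i : Fin l), σ.f (k + 1 + (l * j + i)) = w[j].1 i := by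
    intro w
    obtain ⟨σ, hσ, h1, h2⟩ := block_map hl k
      (fun j => if h : j < w.length then Sum.inl w[j] else Sum.inr (j - w.length))
      (fun v => ⟨w.length + v, by simp⟩) (by
        intro j v hj v' hv'
        by_cases h : j < w.length
        · simp [h] at hj
        · simp [h] at hj
          exact ⟨w.length + v', by omega, by simp⟩)
    refine ⟨σ, hσ, ⟨?_, ?_⟩, fun j hj i => h1 j _ (by simp [hj]) i⟩
    · intro x hx
      rcases block_cases hl k x with h | ⟨b, i, rfl⟩
      · rw [hσ x h]; omega
      · have hb : b < w.length := by
          by_contra hcon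
          have := Nat.mul_le_mul_left l (not_lt.1 hcon)
          omega
        rw [h1 b w[b] (by simp [hb]) i]
        exact (w[b].1 i).2
    · intro x
      rcases block_cases hl 0 (x + 1) with h | ⟨b, i, hx⟩
      · obtain rfl : x = 0 := by omega
        have := h2 w.length 0 (by simp) ⟨0, hl⟩
        simpa using this
      · have := h2 (w.length + b) b (by simp) i
        rw [show x = l * b + i by omega]
        rw [← this]; congr 1; ring
  choose SW hSW1 hSW2 hSW3 using hsw
  obtain ⟨p, hp0, hpS, hp⟩ := inf_hj (Letter l k) {w | χ (SW w)}
  have hlen : ∀ n, (p n).length < (p (n+1)).length := by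
    intro n
    obtain ⟨t, ht, -⟩ := hpS n
    rw [ht]; simp
  have hmono : StrictMono fun n => (p n).length := strictMono_nat_of_lt_succ hlen
  have hge : ∀ n, n ≤ (p n).length := fun n => hmono.le_apply
  have hpre : ∀ n m, n ≤ m → ∀ j (hj : j < (p n).length) (hj' : j < (p m).length),
      (p m)[j] = (p n)[j] := by
    intro n m hnm
    induction m, hnm using Nat.le_induction with
    | base => intros; rfl
    | succ m hm ih =>
      intro j hj hj'
      obtain ⟨t, ht, -⟩ := hpS m
      have hjm : j < (p m).length := hj.trans_le (hmono.monotone hm)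
      rw [← ih j hj hjm]
      simp only [ht]
      rw [List.getElem_append_left hjm]
  let f : ℕ → Letter l k ⊕ ℕ := fun j => (p (j+1))[j]'(hge (j+1))
  have hf : ∀ n j (hj : j < (p n).length), f j = (p n)[j] := by
    intro n j hj
    rcases le_total n (j+1) with h | h
    · exact hpre _ _ h _ _ _
    · exact (hpre _ _ h _ _ _).symm
  have hfL : ∀ n, f (p n).length = Sum.inr n := by
    intro n
    rw [hf (n+1) _ (hlen n)]
    obtain ⟨t, ht, -⟩ := hpS n
    simp [ht]
  have hfsmall : ∀ n, ∀ z ∈ p n, ∀ v, z = Sum.inr v → v < n := by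
    intro n
    induction n with
    | zero =>
      intro z hz v hv
      obtain ⟨a, ha⟩ := hp0 z hz
      rw [hv] at ha; cases ha
    | succ n ih =>
      intro z hz v hv
      obtain ⟨t, ht, ht2⟩ := hpS n
      rw [ht, List.mem_append, List.mem_cons] at hz
      rcases hz with hz | hz | hz
      · exact (ih z hz v hv).trans (Nat.lt_succ_self n)
      · rw [hv] at hz; cases hz; exact Nat.lt_succ_self _
      · rcases ht2 z hz with h | ⟨a, h⟩
        · rw [hv] at h; cases h; exact Nat.lt_succ_self _
        · rw [hv] at h; cases h
  have hfsm : ∀ n j, j < (p n).length → ∀ v, f j = Sum.inr v → v < n := by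
    intro n j hj v hv
    exact hfsmall n _ (List.getElem_mem hj) v (by rw [← hf n j hj, hv])
  obtain ⟨g, hg, g1, g2⟩ := block_map hl k f (fun v => ⟨_, hfL v⟩) (by
    intro j v hj v' hv'
    refine ⟨(p v').length, ?_, hfL v'⟩
    by_contra hcon
    push Not at hcon
    have : j < (p v).length := hcon.trans_lt (hmono hv')
    exact lt_irrefl _ (hfsm v j this v hj))
  have key : ∀ h ∈ NN l k, ∃ n, ∃ a : ℕ → Letter l k,
      (χ (h * g) ↔ (p n).map (Sum.elim id a) ∈ {w | χ (SW w)}) := by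
    intro h hh
    obtain ⟨d, hd, hlt, hdm⟩ := h.exists_first (k+1)
    have hkd : k + 1 ≤ d := by rw [← hd]; exact h.le d
    obtain ⟨n, rfl⟩ : ∃ n, d = k + 1 + l * n := by
      obtain ⟨n, hn⟩ := (Nat.modEq_iff_dvd' hkd).1 hdm.symm
      exact ⟨n, by omega⟩
    have bound : ∀ v, v < n → ∀ i : Fin l, k + 1 + (l * v + i) < k + 1 + l * n := by
      intro v hv i
      have := Nat.mul_le_mul_left l (show v + 1 ≤ n from hv)
      rw [mul_add] at this
      have := i.2
      omega
    have haex : ∀ v, ∃ b : Letter l k, v < n →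
        ∀ i : Fin l, ((b.1 i : Fin (k+1)) : ℕ) = h.f (k + 1 + (l * v + i)) := by
      intro v
      by_cases hv : v < n
      · refine ⟨⟨fun i => ⟨h.f (k + 1 + (l * v + i)), hlt _ (bound v hv i)⟩, fun i => ?_⟩, fun _ i => rfl⟩
        have := h.typ (k + 1 + (l * v + i))
        rwa [show k + 1 + (l * v + i) = k + 1 + i + l * v by ring, Nat.add_mul_mod_self_left,
          show k + 1 + i + l * v = k + 1 + (l * v + i) by ring] at this
      · exact ⟨Classical.arbitrary _, fun h => (hv h).elim⟩
    choose a ha using haex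
    refine ⟨n, a, ?_⟩
    set w := (p n).map (Sum.elim id a) with hw
    have hwl : w.length = (p n).length := by simp [hw]
    obtain ⟨h', hh', e⟩ := factor (h := h * g) (hSW2 w) (by
      intro x hx
      rw [RS_s8.mul_f]
      rcases block_cases hl k x with hxk | ⟨b, i, rfl⟩
      · rw [hg x hxk, hh x hxk, hSW1 w x hxk]
      · have hb : b < w.length := by
          by_contra hcon
          have := Nat.mul_le_mul_left l (not_lt.1 hcon)
          omega
        rw [hSW3 w b hb i]
        have hb' : b < (p n).length := by rwa [← hwl]
        have hwb : w[b] = Sum.elim id a (f b) := by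
          rw [hf n b hb']; simp [hw]
        rw [hwb]
        rcases hfb : f b with c | v
        · rw [g1 b c hfb i]
          exact hh _ (Nat.lt_succ_iff.1 (c.1 i).2)
        · rw [g2 b v hfb i]
          exact (ha v (hfsm n b hb' v hfb) i).symm) (by
      rw [RS_s8.mul_f, hwl]
      have := g2 _ n (hfL n) ⟨0, hl⟩
      simp only [add_zero] at this
      rw [this, hd])
    rw [e]
    exact hχ _ (hSW1 w) _ hh'
  refine ⟨g, hg, hp.imp (fun hp h hh => ?_) (fun hp h hh => ?_)⟩
  · obtain ⟨n, a, e⟩ := key h hh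
    exact e.2 (hp n a)
  · obtain ⟨n, a, e⟩ := key h hh
    exact fun hc => hp n a (e.1 hc)
end PigeonRS

/-! ### Transfer to equivalence relations -/
section Transfer

/-- maps from the natural numbers coding the elements of the space -/
structure IsU (l : ℕ) (hl : 0 < l) (P : Fin l → Set ℕ) (u : ℕ → ℕ) : Prop where
  surj : ∀ j, ∃ x, u x = j
  rig : ∀ x j, j < u x → ∃ y < x, u y = j
  fst : ∀ x, (∀ y < x, u y ≠ u x) → x ∈ P ⟨u x % l, Nat.mod_lt _ hl⟩
  typ : ∀ x (j : Fin l), x ∈ P j → u x % l ≤ j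

variable {l : ℕ} {hl : 0 < l} {P : Fin l → Set ℕ}

theorem disj_eq (hdisj : ∀ i j, i ≠ j → Disjoint (P i) (P j)) {i j : Fin l} {x : ℕ}
    (hi : x ∈ P i) (hj : x ∈ P j) : i = j := by
  by_contra h
  exact Set.disjoint_left.1 (hdisj i j h) hi hj

theorem IsU.exists_first {u : ℕ → ℕ} (hu : IsU l hl P u) :
    ∃ d : ℕ → ℕ, (∀ k, u (d k) = k) ∧ (∀ k, ∀ y < d k, u y < k) ∧ StrictMono d := by
  classical
  have h1 : ∀ k, u (Nat.find (hu.surj k)) = k := fun k => Nat.find_spec (hu.surj k)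
  have h2 : ∀ k, ∀ y < Nat.find (hu.surj k), u y < k := by
    intro k y hy
    rcases lt_trichotomy (u y) k with h | h | h
    · exact h
    · exact (Nat.find_min (hu.surj k) hy h).elim
    · obtain ⟨z, hz, hz'⟩ := hu.rig y k h
      exact (Nat.find_min (hu.surj k) (hz.trans hy) hz').elim
  refine ⟨fun k => Nat.find (hu.surj k), h1, h2, ?_⟩
  intro a b hab
  by_contra h
  simp only [not_lt] at h
  rcases h.lt_or_eq with h | h
  · have := h2 a _ h
    rw [h1] at this
    omega
  · have := h1 a
    rw [← h, h1] at this
    omega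

theorem IsU.minReps_ker {u : ℕ → ℕ} {d : ℕ → ℕ} (h1 : ∀ k, u (d k) = k)
    (h2 : ∀ k, ∀ y < d k, u y < k) (x : ℕ) : x ∈ minReps (Setoid.ker u) ↔ x = d (u x) := by
  constructor
  · intro h
    have h3 : x ≤ d (u x) := h (d (u x)) (h1 (u x)).symm
    by_contra h4
    have := h2 (u x) x (lt_of_le_of_ne h3 h4)
    omega
  · intro h m hm
    have hm : u x = u m := hm
    by_contra h4
    have := h2 (u x) m (by omega)
    omega

theorem IsU.pRep_ker {u : ℕ → ℕ} {d : ℕ → ℕ} (h1 : ∀ k, u (d k) = k)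
    (h2 : ∀ k, ∀ y < d k, u y < k) (h3 : StrictMono d) (k : ℕ) : pRep (Setoid.ker u) k = d k := by
  have h4 := IsU.minReps_ker h1 h2
  have h5 : ∀ k, d k ∈ minReps (Setoid.ker u) := fun k => by rw [h4, h1]
  have := Nat.nth_comp_of_strictMono (p := (· ∈ minReps (Setoid.ker u))) (n := k) h3 (fun x hx => ⟨u x, ((h4 x).1 hx).symm⟩)
    (fun hf => by
      exfalso
      refine Set.infinite_of_injective_forall_mem (f := d) h3.injective ?_ hf
      exact fun k => h5 k)
  simp only [h5, Nat.nth_true] at this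
  exact this.symm

theorem IsU.mem {u : ℕ → ℕ} (hu : IsU l hl P u) (hdisj : ∀ i j, i ≠ j → Disjoint (P i) (P j))
    (hcov : ⋃ i, P i = Set.univ) : Setoid.ker u ∈ EPalt' l hl P := by
  obtain ⟨d, h1, h2, h3⟩ := hu.exists_first
  have hd : ∀ k, d k ∈ P ⟨k % l, Nat.mod_lt k hl⟩ := by
    intro k
    have := hu.fst (d k) (by
      intro y hy
      rw [h1]
      exact (h2 k y hy).ne)
    simpa only [h1] using this
  refine ⟨⟨?_, ?_⟩, ?_⟩
  · refine Set.infinite_of_injective_forall_mem (f := fun k : ℕ => {y | (Setoid.ker u).r (d k) y}) ?_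
      (fun k => ⟨d k, rfl⟩)
    intro a b hab
    have : d a ∈ {y | (Setoid.ker u).r (d b) y} := by
      have hab : {y | (Setoid.ker u).r (d a) y} = {y | (Setoid.ker u).r (d b) y} := hab
      rw [← hab]
      exact (rfl : u (d a) = u (d a))
    have : u (d b) = u (d a) := this
    rw [h1, h1] at this
    exact this.symm
  · intro k
    rw [IsU.pRep_ker h1 h2 h3]
    exact hd k
  · intro x hx i hi y hy
    have hy : u x = u y := hy
    have hx := (IsU.minReps_ker h1 h2 x).1 hx
    obtain ⟨j, hj⟩ := Set.mem_iUnion.1 (hcov.symm ▸ Set.mem_univ y)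
    refine ⟨j, ?_, hj⟩
    have h5 := hd (u x)
    rw [← hx] at h5
    have h6 := disj_eq hdisj hi h5
    have h7 := hu.typ y j hj
    rw [h6, Fin.le_def]
    simpa [hy] using h7

theorem exists_IsU (hdisj : ∀ i j, i ≠ j → Disjoint (P i) (P j)) {E : Setoid ℕ}
    (hE : E ∈ EPalt' l hl P) : ∃ u, IsU l hl P u ∧ E = Setoid.ker u := by
  classical
  obtain ⟨⟨hinf, hp⟩, hE3⟩ := hE
  have hex : ∀ x, ∃ y, E.r x y := fun x => ⟨x, E.refl x⟩
  obtain ⟨μ, hμ1, hμ2⟩ : ∃ μ : ℕ → ℕ, (∀ x, E.r x (μ x)) ∧ ∀ x y, E.r x y → μ x ≤ y :=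
    ⟨fun x => Nat.find (hex x), fun x => Nat.find_spec (hex x), fun x y h => Nat.find_min' (hex x) h⟩
  have hμm : ∀ x, μ x ∈ minReps E := fun x y hy => hμ2 x y (E.trans (hμ1 x) hy)
  have hμr : ∀ x y, E.r x y ↔ μ x = μ y := by
    intro x y
    constructor
    · intro h
      apply le_antisymm
      · exact hμ2 _ _ (E.trans h (hμ1 y))
      · exact hμ2 _ _ (E.trans (E.symm h) (hμ1 x))
    · intro h
      exact E.trans (hμ1 x) (h ▸ E.symm (hμ1 y))
  have hμμ : ∀ x ∈ minReps E, μ x = x := fun x hx =>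
    le_antisymm (hμ2 x x (E.refl x)) (hx _ (hμ1 x))
  have hmi : (minReps E).Infinite := by
    intro hf
    apply hinf
    refine (hf.image (fun x => {y | E.r x y})).subset ?_
    rintro C ⟨x, rfl⟩
    refine ⟨μ x, hμm x, ?_⟩
    ext y
    exact ⟨fun h => E.trans (hμ1 x) h, fun h => E.trans (E.symm (hμ1 x)) h⟩
  have hmi' : (Set.ofPred (· ∈ minReps E)).Infinite := hmi
  set u : ℕ → ℕ := fun x => Nat.count (· ∈ minReps E) (μ x) with hu
  have pu : ∀ x, pRep E (u x) = μ x := fun x => Nat.nth_count (hμm x)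
  have pm : ∀ k, pRep E k ∈ minReps E := fun k => Nat.nth_mem_of_infinite hmi' k
  have up : ∀ k, u (pRep E k) = k := by
    intro k
    simp only [hu]
    rw [hμμ _ (pm k)]
    exact Nat.count_nth_of_infinite hmi' k
  have pmono : StrictMono (pRep E) := Nat.nth_strictMono hmi'
  have ur : ∀ x y, E.r x y ↔ u x = u y := by
    intro x y
    rw [hμr, ← pu, ← pu]
    exact pmono.injective.eq_iff
  have μle : ∀ x, μ x ≤ x := fun x => hμ2 x x (E.refl x)
  refine ⟨u, ⟨fun j => ⟨_, up j⟩, ?_, ?_, ?_⟩, ?_⟩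
  · intro x j hj
    refine ⟨pRep E j, ?_, up j⟩
    have := pmono hj
    rw [pu] at this
    exact this.trans_le (μle x)
  · intro x hx
    have h1 : x = μ x := by
      by_contra h
      exact hx (μ x) (lt_of_le_of_ne (μle x) (Ne.symm h)) ((ur _ _).1 (E.symm (hμ1 x)))
    have := hp (u x)
    rw [pu, ← h1] at this
    exact this
  · intro x j hj
    have h1 := hp (u x)
    obtain ⟨j', hj1, hj2⟩ := hE3 _ (pm (u x)) _ h1 x (by rw [pu]; exact E.symm (hμ1 x))
    rw [disj_eq hdisj hj hj2]
    exact hj1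
  · ext x y
    exact ur x y

theorem IsU.comp {u : ℕ → ℕ} (hu : IsU l hl P u) (hdisj : ∀ i j, i ≠ j → Disjoint (P i) (P j))
    (g : RS_s8 l) : IsU l hl P (g.f ∘ u) := by
  refine ⟨?_, ?_, ?_, ?_⟩
  · intro j
    obtain ⟨y, hy⟩ := g.surj j
    obtain ⟨x, hx⟩ := hu.surj y
    exact ⟨x, by simp [hx, hy]⟩
  · intro x j hj
    obtain ⟨y, hy, hy'⟩ := g.rig _ _ hj
    obtain ⟨z, hz, hz'⟩ := hu.rig _ _ hy
    exact ⟨z, hz, by simp [hz', hy']⟩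
  · intro x hx
    have h1 := hu.fst x (fun y hy h => hx y hy (by simp [h]))
    have h2 := g.fst (u x) (by
      intro z hz hz'
      obtain ⟨y, hy, hy'⟩ := hu.rig x z hz
      exact hx y hy (by simp [hy', hz']))
    simpa only [Function.comp, ← h2] using h1
  · intro x j hj
    exact (g.typ _).trans (hu.typ x j hj)

theorem IsU.exists_factor {u u' : ℕ → ℕ} (hu : IsU l hl P u) (hu' : IsU l hl P u')
    (hdisj : ∀ i j, i ≠ j → Disjoint (P i) (P j))
    (h : Coarsens (Setoid.ker u') (Setoid.ker u)) : ∃ g : RS_s8 l, u' = g.f ∘ u := by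
  obtain ⟨d, h1, h2, h3⟩ := hu.exists_first
  have hd : ∀ k, d k ∈ P ⟨k % l, Nat.mod_lt k hl⟩ := by
    intro k
    have := hu.fst (d k) (by
      intro y hy
      rw [h1]
      exact (h2 k y hy).ne)
    simpa only [h1] using this
  have key : ∀ x y, u x = u y → u' x = u' y := fun x y hxy => h x y hxy
  have key2 : ∀ x, u' (d (u x)) = u' x := fun x => key _ _ (h1 _)
  refine ⟨⟨fun j => u' (d j), ?_, ?_, ?_, ?_⟩, ?_⟩
  · intro j
    obtain ⟨x, hx⟩ := hu'.surj j
    exact ⟨u x, by rw [key2, hx]⟩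
  · intro x j hj
    obtain ⟨y, hy, hy'⟩ := hu'.rig _ _ hj
    exact ⟨u y, h2 x y hy, by rw [key2, hy']⟩
  · intro x
    exact hu'.typ _ _ (hd x)
  · intro x hx
    have := hu'.fst (d x) (by
      intro y hy h'
      exact hx (u y) (h2 x y hy) (by rw [key2, h']))
    have := disj_eq hdisj (hd x) this
    simpa using this
  · funext x
    exact (key2 x).symm

theorem coarsens_comp (u : ℕ → ℕ) (f : ℕ → ℕ) :
    Coarsens (Setoid.ker (f ∘ u)) (Setoid.ker u) := by
  intro a b h
  have h : u a = u b := h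
  show f (u a) = f (u b)
  rw [h]

theorem IsU.approx_eq {u : ℕ → ℕ} (hu : IsU l hl P u)
    (hdisj : ∀ i j, i ≠ j → Disjoint (P i) (P j)) {n : ℕ} {h : RS_s8 l} (hh : h ∈ NN l n) :
    approx n (Setoid.ker (h.f ∘ u)) = approx n (Setoid.ker u) := by
  obtain ⟨d, h1, h2, h3⟩ := hu.exists_first
  obtain ⟨d', h1', h2', h3'⟩ := (hu.comp hdisj h).exists_first
  have hd : d n = d' n := by
    rcases lt_trichotomy (d n) (d' n) with h | h | h
    · have := h2' n _ h
      simp only [Function.comp, h1] at this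
      rw [hh n le_rfl] at this
      omega
    · exact h
    · have h4 := h2 n _ h
      have := h1' n
      simp only [Function.comp] at this
      rw [hh _ h4.le] at this
      omega
  ext ⟨x, y⟩
  simp only [approx, Set.mem_ofPred_eq, IsU.pRep_ker h1 h2 h3, IsU.pRep_ker h1' h2' h3', ← hd]
  refine and_congr_right fun hx => and_congr_right fun hy => ?_
  show h.f (u x) = h.f (u y) ↔ u x = u y
  rw [hh _ (h2 _ _ hx).le, hh _ (h2 _ _ hy).le]

theorem coarsens_trans {X : Type*} {A B C : Setoid X} (h1 : Coarsens A B) (h2 : Coarsens B C) :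
    Coarsens A C := fun a b h => h1 a b (h2 a b h)

theorem mopen_preimage {φ : RS_s8 l → ↥(EPalt' l hl P)} {q : ℕ → ℕ}
    (hdisj : ∀ i j, i ≠ j → Disjoint (P i) (P j)) (hq : IsU l hl P q)
    (hφ : ∀ g, (φ g).1 = Setoid.ker (g.f ∘ q)) (U : Set ↥(EPalt' l hl P))
    (hU : (ellentuckTop (EPalt' l hl P)).IsOpen U) : MOpen (NN l) (φ ⁻¹' U) := by
  have hU : TopologicalSpace.GenerateOpen {U | ∃ a E, U = basicSet (EPalt' l hl P) a E} U := hU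
  induction hU with
  | basic s hs =>
    obtain ⟨a, E, rfl⟩ := hs
    rintro g ⟨hg1, n, hg2⟩
    refine ⟨n, fun h hh => ⟨?_, n, ?_⟩⟩
    · refine coarsens_trans ?_ hg1
      rw [hφ, hφ]
      exact coarsens_comp (g.f ∘ q) h.f
    · rw [← hg2, hφ, hφ]
      exact (hq.comp hdisj g).approx_eq hdisj hh
  | univ => exact fun g _ => ⟨0, fun _ _ => trivial⟩
  | inter s t _ _ ihs iht =>
    rintro g ⟨hs, ht⟩
    obtain ⟨n1, h1⟩ := ihs ‹_› g hs
    obtain ⟨n2, h2⟩ := iht ‹_› g ht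
    exact ⟨max n1 n2, fun h hh => ⟨h1 h (NN_anti (le_max_left _ _) hh),
      h2 h (NN_anti (le_max_right _ _) hh)⟩⟩
  | sUnion S hS ih =>
    rintro g ⟨s, hs, hg⟩
    obtain ⟨n, hn⟩ := ih s hs (hS s hs) g hg
    exact ⟨n, fun h hh => ⟨s, hs, hn h hh⟩⟩

end Transfer

/-- **Corollary 3.5:** for every finite Souslin measurable colouring of `𝓔^{P'}_∞`
and every `E` in the space, there is a coarsening `F ≤ E` in the space such that
the colouring is constant on `𝓔^{P'}_∞ ↾ F`. -/
theorem EPalt'SouslinColouring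
    (l : ℕ) (hl : 0 < l) (P : Fin l → Set ℕ)
    (hinf : ∀ i, (P i).Infinite)
    (hdisj : ∀ i j, i ≠ j → Disjoint (P i) (P j))
    (hcov : ⋃ i, P i = Set.univ)
    (hmin : ∀ i j : Fin l, i < j → sInf (P i) < sInf (P j))
    (m : ℕ) (c : ↥(EPalt' l hl P) → Fin m)
    (hc : ∀ i : Fin m, SouslinMeasurable (ellentuckTop (EPalt' l hl P)) {E | c E = i})
    (E : ↥(EPalt' l hl P)) :
    ∃ F : ↥(EPalt' l hl P), Coarsens F.1 E.1 ∧
      ∀ F₁ F₂ : ↥(EPalt' l hl P), Coarsens F₁.1 F.1 → Coarsens F₂.1 F.1 → c F₁ = c F₂ := by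
  obtain ⟨q, hq, hE⟩ := exists_IsU hdisj E.2
  let φ : RS_s8 l → ↥(EPalt' l hl P) := fun g => ⟨Setoid.ker (g.f ∘ q), (hq.comp hdisj g).mem hdisj hcov⟩
  have hφ : ∀ g, (φ g).1 = Setoid.ker (g.f ∘ q) := fun _ => rfl
  have hF : Fusion (NN l) := fusion_RS
  have hP : Pigeon (NN l) := pigeon_RS hl
  have hR : ∀ i : Fin m, Rams (NN l) (φ ⁻¹' {E | c E = i}) := by
    intro i
    refine hc i {Y | Rams (NN l) (φ ⁻¹' Y)} ?_ ?_ ?_ ?_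
    · intro U hU
      exact rams_of_open NN_anti hF hP (mopen_preimage hdisj hq hφ U hU)
    · intro A hA
      exact Rams.compl hA
    · intro A hA B hB
      exact Rams.union hA hB
    · intro f hf
      have := rams_souslin NN_anti hF hP (fun s => φ ⁻¹' (f s)) hf
      have e : φ ⁻¹' (souslinOp f) =
          {A | ∃ x : ℕ → ℕ, ∀ n, A ∈ φ ⁻¹' (f ((List.range n).map x))} := by
        ext g
        simp [souslinOp]
      show Rams (NN l) (φ ⁻¹' (souslinOp f))
      rw [e]
      exact this
  obtain ⟨g, -, hg⟩ := dense_finite (N := NN l)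
    (D := fun n k A => ∀ hn : n < m, (∀ h ∈ NN l k, c (φ (h * A)) = ⟨n, hn⟩) ∨
      (∀ h ∈ NN l k, c (φ (h * A)) ≠ ⟨n, hn⟩))
    (by
      intro n k A hA g hg hn
      refine (hA hn).imp ?_ ?_
      · intro h1 h hh
        rw [← mul_assoc]
        exact h1 _ ((NN l k).mul_mem hh hg)
      · intro h1 h hh
        rw [← mul_assoc]
        exact h1 _ ((NN l k).mul_mem hh hg))
    (by
      intro n k A
      by_cases hn : n < m
      · obtain ⟨g, hg, h⟩ := hR ⟨n, hn⟩ k A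
        exact ⟨g, hg, fun _ => h⟩
      · exact ⟨1, (NN l k).one_mem, fun h => (hn h).elim⟩) 0 m 1
  rw [mul_one] at hg
  have hsub : ∀ F₁ : ↥(EPalt' l hl P), Coarsens F₁.1 (φ g).1 → ∃ h : RS_s8 l, F₁ = φ (h * g) := by
    intro F₁ h1
    obtain ⟨u, hu, hF₁⟩ := exists_IsU hdisj F₁.2
    rw [hF₁, hφ] at h1
    obtain ⟨h, hh⟩ := (hq.comp hdisj g).exists_factor hu hdisj h1
    refine ⟨h, Subtype.ext ?_⟩
    rw [hF₁, hφ, hh]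
    rfl
  refine ⟨φ g, ?_, ?_⟩
  · rw [hE]
    exact coarsens_comp q g.f
  · intro F₁ F₂ h1 h2
    obtain ⟨g₁, rfl⟩ := hsub F₁ h1
    obtain ⟨g₂, rfl⟩ := hsub F₂ h2
    rcases hg (c (φ (g₁ * g))).1 (c (φ (g₁ * g))).2 (c (φ (g₁ * g))).2 with h | h
    · exact (h g₂ (NN_zero g₂)).symm
    · exact (h g₁ (NN_zero g₁) rfl).elim

end DualRamsey
end
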